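/- (Full Family Theorem) Let π be an admissible combinatorial datum whose Rauzy class contains a cyclic combinatorial datum, and let (f_τ)_{τ ∈ Δ^𝒜} be a full family of GIETs over π. Then for every Keane IET T with combinatorial datum π on [0,1) there exists τ ∈ Δ^𝒜 such that f_τ has the same infinite Rauzy renormalization path as T: γ(f_τ, ∞) = γ(T, ∞). -/

import Mathlib

/-!
Every finite beginning of the path is followed by an exchange by translations with integer lengths
which permutes the integers of its interval transitively: the exchange with unit lengths over a
cyclic datum is of this kind, and the property is pulled back along Rauzy moves. Some member of the
full family is conjugate to this exchange on the orbits of its critical points and values, hence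
follows the same beginning. It comes from a fixed point, by Brouwer's theorem, of the map that
subdivides an interval by the lengths `v`, chooses the parameter whose critical values are the
prescribed subdivision points, and pulls the subdivision back under the branches; transitivity keeps
the fixed point off the boundary of the simplex.

Let `τ` be a limit, along an ultrafilter, of such parameters for longer and longer beginnings. The
set of letters whose intervals shrink to points along the renormalizations can only grow. Once it
is stationary, none of its letters can win again after another letter has won; as every letter wins
infinitely often, and not all letters degenerate at the start, it is empty. Hence `τ` is in the open
simplex and all Rauzy steps pass to the limit.
-/

/-- The data of a candidate generalized interval exchange transformation (GIET):
combinatorial datum `(pit, pib)` (positions in `{1,…,d}`), top and bottom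
interval lengths `lt`, `lb`, and the map `f` itself. -/
structure GState (A : Type*) where
  pit : A → ℕ
  pib : A → ℕ
  lt : A → ℝ
  lb : A → ℝ
  f : ℝ → ℝ

namespace GState

variable {A : Type*} [Fintype A] [DecidableEq A]

/-- Critical point `u^t_a`: left endpoint of the top interval `I^t_a`. -/
noncomputable def ut (s : GState A) (a : A) : ℝ :=
  ∑ x ∈ Finset.univ.filter (fun x => s.pit x < s.pit a), s.lt x

/-- Critical value `u^b_a`: left endpoint of the bottom interval `I^b_a`. -/
noncomputable def ub (s : GState A) (a : A) : ℝ :=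
  ∑ x ∈ Finset.univ.filter (fun x => s.pib x < s.pib a), s.lb x

/-- Total length of the interval `I = [0, len)` on which `s` acts. -/
noncomputable def len (s : GState A) : ℝ := ∑ x : A, s.lt x

/-- The top (continuity) interval `I^t_a`. -/
noncomputable def Itv (s : GState A) (a : A) : Set ℝ :=
  Set.Ico (s.ut a) (s.ut a + s.lt a)

/-- The bottom (image) interval `I^b_a`. -/
noncomputable def Ibv (s : GState A) (a : A) : Set ℝ :=
  Set.Ico (s.ub a) (s.ub a + s.lb a)

/-- `s` is a genuine GIET: `pit`, `pib` are bijections onto `{1,…,d}`, all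
lengths are positive with equal total sums, and each restriction
`f : I^t_a → I^b_a` is an orientation preserving homeomorphism (a continuous
strictly increasing bijection). -/
def IsGIET (s : GState A) : Prop :=
  Set.BijOn s.pit Set.univ (Set.Ico 1 (Fintype.card A + 1)) ∧
  Set.BijOn s.pib Set.univ (Set.Ico 1 (Fintype.card A + 1)) ∧
  (∀ a, 0 < s.lt a) ∧ (∀ a, 0 < s.lb a) ∧
  (∑ a : A, s.lt a) = (∑ a : A, s.lb a) ∧
  ∀ a, Set.BijOn s.f (s.Itv a) (s.Ibv a) ∧ StrictMonoOn s.f (s.Itv a) ∧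
    ContinuousOn s.f (s.Itv a)

/-- The combinatorial datum of `s` is admissible. -/
def Admissible (s : GState A) : Prop :=
  ∀ k : ℕ, 1 ≤ k → k < Fintype.card A →
    {a : A | s.pit a ≤ k} ≠ {a : A | s.pib a ≤ k}

/-- One step of Rauzy induction from `s` to `s'`, the corresponding arrow having
winner `w` and loser `l`.  The new map is the first return map of `s.f` to the
shortened interval `[0, s'.len)`, and the combinatorial datum is modified by the
top (resp. bottom) Rauzy operation. -/
def RauzyStep (s s' : GState A) (w l : A) : Prop :=
  s'.IsGIET ∧
  (∀ x ∈ Set.Ico (0 : ℝ) s'.len,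
      s'.f x = if s'.len ≤ s.f x then s.f (s.f x) else s.f x) ∧
  ∃ at_ ab : A, s.pit at_ = Fintype.card A ∧ s.pib ab = Fintype.card A ∧
    ((s.ut at_ < s.ub ab ∧ w = at_ ∧ l = ab ∧
        s'.len = s.ub ab ∧
        s'.pit = s.pit ∧
        (∀ x, s.pib x ≤ s.pib at_ → s'.pib x = s.pib x) ∧
        s'.pib ab = s.pib at_ + 1 ∧
        (∀ x, x ≠ ab → s.pib at_ < s.pib x → s'.pib x = s.pib x + 1) ∧
        (∀ x, x ≠ at_ → s'.lt x = s.lt x) ∧ s'.lt at_ = s.lt at_ - s.lb ab) ∨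
      (s.ub ab < s.ut at_ ∧ w = ab ∧ l = at_ ∧
        s'.len = s.ut at_ ∧
        s'.pib = s.pib ∧
        (∀ x, s.pit x ≤ s.pit ab → s'.pit x = s.pit x) ∧
        s'.pit at_ = s.pit ab + 1 ∧
        (∀ x, x ≠ at_ → s.pit ab < s.pit x → s'.pit x = s.pit x + 1) ∧
        (∀ x, x ≠ ab → s'.lb x = s.lb x) ∧ s'.lb ab = s.lb ab - s.lt at_))

/-- `s` together with the sequences of winners `w` and losers `l` realizes `r`
steps of Rauzy induction. -/
def RauzyTower (s : ℕ → GState A) (w l : ℕ → A) (r : ℕ) : Prop :=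
  (s 0).IsGIET ∧ ∀ k < r, RauzyStep (s k) (s (k + 1)) (w k) (l k)

/-- Return-time vector `q^(k) = B_γ 1⃗` of the path with winners `w`, losers `l`. -/
def qvec (w l : ℕ → A) : ℕ → A → ℕ
  | 0 => fun _ => 1
  | (k + 1) => fun a =>
      if a = l k then qvec w l k a + qvec w l k (w k) else qvec w l k a

/-- The Rauzy cocycle matrix `B_γ` of the path with winners `w`, losers `l`. -/
def bmat (w l : ℕ → A) : ℕ → A → A → ℕ
  | 0 => fun a b => if a = b then 1 else 0
  | (k + 1) => fun a b =>
      if a = l k then bmat w l k a b + bmat w l k (w k) b else bmat w l k a b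

/-- The atom `I(f, r, a, i) = f^i(I^t_a(f^(r)))` of the dynamical partition of
order `r`. -/
noncomputable def atom (s : ℕ → GState A) (r : ℕ) (a : A) (i : ℕ) : Set ℝ :=
  (s 0).f^[i] '' ((s r).Itv a)

/-- Combinatorial equivalence `𝒫(f,r) ∼ 𝒫(f',r)` of dynamical partitions:
there is an increasing homeomorphism of the interval sending each labelled atom
of the first partition onto the atom of the second with the same label. -/
noncomputable def PartEquiv (s s' : ℕ → GState A) (q : A → ℕ) (r : ℕ) : Prop :=
  ∃ φ : ℝ → ℝ, StrictMonoOn φ (Set.Ico (0 : ℝ) (s 0).len) ∧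
    ContinuousOn φ (Set.Ico (0 : ℝ) (s 0).len) ∧
    Set.BijOn φ (Set.Ico (0 : ℝ) (s 0).len) (Set.Ico (0 : ℝ) (s' 0).len) ∧
    ∀ a : A, ∀ i < q a, φ '' atom s r a i = atom s' r a i

end GState

namespace GState

variable {A : Type*} [Fintype A] [DecidableEq A]

/-- Closure (in `ℝ²`) of the graph of the continuous branch of `s` over `I^t_a`. -/
noncomputable def branchGraph (s : GState A) (a : A) : Set (ℝ × ℝ) :=
  closure {p : ℝ × ℝ | p.1 ∈ s.Itv a ∧ p.2 = s.f p.1}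

/-- The distance on GIETs: sum over letters of the Hausdorff distances between
the closures of the graphs of the continuous branches. -/
noncomputable def gdist (s s' : GState A) : ℝ :=
  ∑ a : A, Metric.hausdorffDist (branchGraph s a) (branchGraph s' a)

/-- The open standard simplex `Δ^𝒜`. -/
def openSimplex (A : Type*) [Fintype A] : Set (A → ℝ) :=
  {τ | (∀ a, 0 < τ a) ∧ ∑ a : A, τ a = 1}

/-- The closed standard simplex. -/
def closedSimplex (A : Type*) [Fintype A] : Set (A → ℝ) :=
  {τ | (∀ a, 0 ≤ τ a) ∧ ∑ a : A, τ a = 1}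

/-- `D` is a degeneration of a GIET with combinatorial datum `(pit, pib)`: the
union of the (closures of the) branch graphs of a GIET whose combinatorial
datum is a reduction of `(pit, pib)` to a proper subalphabet `A'`, and of one
singular point for each letter outside `A'`, located on the boundaries of the
continuity intervals of the regular part and of its inverse. -/
noncomputable def IsDegeneration (pit pib : A → ℕ) (D : A → Set (ℝ × ℝ)) : Prop :=
  ∃ (s : GState A) (A' : Finset A), A'.Nonempty ∧ A' ≠ Finset.univ ∧
    (∀ a ∈ A', ∀ b ∈ A',
      (s.pit a < s.pit b ↔ pit a < pit b) ∧
      (s.pib a < s.pib b ↔ pib a < pib b)) ∧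
    (∀ a ∉ A', s.lt a = 0 ∧ s.lb a = 0) ∧
    (∀ a ∈ A', 0 < s.lt a ∧ 0 < s.lb a) ∧
    s.len = 1 ∧ (∑ a : A, s.lb a) = 1 ∧
    (∀ a ∈ A', Set.BijOn s.f (s.Itv a) (s.Ibv a) ∧ StrictMonoOn s.f (s.Itv a) ∧
      ContinuousOn s.f (s.Itv a)) ∧
    (∀ a ∈ A', D a = branchGraph s a) ∧
    (∀ a ∉ A', ∃ p : ℝ × ℝ, D a = {p} ∧
      (p.1 = 1 ∨ ∃ b ∈ A', p.1 = s.ut b) ∧ (p.2 = 1 ∨ ∃ b ∈ A', p.2 = s.ub b))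

/-- `F` parametrizes a full family of GIETs over the combinatorial datum
`(pit, pib)`: (1) `F` is continuous on the open simplex for the graph distance;
(2) the critical values of `F τ` are marked by `τ`; (3) `F` extends
continuously to the closed simplex, with degenerations on the boundary. -/
noncomputable def FullFamily (pit pib : A → ℕ) (F : (A → ℝ) → GState A) : Prop :=
  (∀ τ ∈ openSimplex A,
    (F τ).IsGIET ∧ (F τ).pit = pit ∧ (F τ).pib = pib ∧ (F τ).len = 1) ∧
  -- (2) marking of the critical values:
  (∀ τ ∈ openSimplex A, ∀ a : A,
    (F τ).ub a = ∑ x ∈ Finset.univ.filter (fun x => pib x < pib a), τ x) ∧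
  -- (1) continuity on the open simplex:
  (∀ τ ∈ openSimplex A, ∀ ε > (0 : ℝ), ∃ δ > (0 : ℝ), ∀ τ' ∈ openSimplex A,
    dist τ τ' < δ → gdist (F τ) (F τ') < ε) ∧
  -- (3) continuous extension to the closed simplex:
  (∃ Fh : (A → ℝ) → (A → Set (ℝ × ℝ)),
    (∀ τ ∈ openSimplex A, Fh τ = fun a => branchGraph (F τ) a) ∧
    (∀ τ ∈ closedSimplex A, ∀ ε > (0 : ℝ), ∃ δ > (0 : ℝ),
      ∀ τ' ∈ closedSimplex A, dist τ τ' < δ →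
        (∑ a : A, Metric.hausdorffDist (Fh τ a) (Fh τ' a)) < ε) ∧
    (∀ τ ∈ closedSimplex A \ openSimplex A, IsDegeneration pit pib (Fh τ)))

/-- Top Rauzy operation on combinatorial data (positions in `{1,…,d}`). -/
def CombTop (d : ℕ) (pt pb pt' pb' : A → ℕ) : Prop :=
  ∃ at_ ab : A, pt at_ = d ∧ pb ab = d ∧ pt' = pt ∧
    (∀ x, pb x ≤ pb at_ → pb' x = pb x) ∧ pb' ab = pb at_ + 1 ∧
    (∀ x, x ≠ ab → pb at_ < pb x → pb' x = pb x + 1)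

/-- Bottom Rauzy operation on combinatorial data. -/
def CombBot (d : ℕ) (pt pb pt' pb' : A → ℕ) : Prop :=
  ∃ at_ ab : A, pt at_ = d ∧ pb ab = d ∧ pb' = pb ∧
    (∀ x, pt x ≤ pt ab → pt' x = pt x) ∧ pt' at_ = pt ab + 1 ∧
    (∀ x, x ≠ at_ → pt ab < pt x → pt' x = pt x + 1)

/-- One elementary Rauzy operation on combinatorial data. -/
def CombStep (d : ℕ) (P Q : (A → ℕ) × (A → ℕ)) : Prop :=
  CombTop d P.1 P.2 Q.1 Q.2 ∨ CombBot d P.1 P.2 Q.1 Q.2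

/-- `(pt, pb)` is cyclic: `σ = pb ∘ pt⁻¹` is a cycle of maximal order `d`,
equivalently the conjugate map `g = pt⁻¹ ∘ pb : 𝒜 → 𝒜` iterates transitively. -/
def CyclicDatum (pt pb : A → ℕ) : Prop :=
  ∃ g : A → A, (∀ a, pt (g a) = pb a) ∧ ∀ a b : A, ∃ n : ℕ, g^[n] a = b

end GState

/-! ### Scarf's lemma -/

namespace Scarf

section Dominance

variable {X I α : Type*} [LinearOrder α]

/-- Scarf's dominant sets for a family of preferences `v i : X → α`: no point of `X` is, for every
`i`, strictly above the `v i`-minimum of `σ`. They are the rooms (when `σ` has as many elements as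
there are preferences) and the doors (when it has one less) of the path-following argument. -/
def IsDominant (v : I → X → α) (σ : Finset X) : Prop := ∀ x, ∃ i, ∀ y ∈ σ, v i x ≤ v i y

theorem IsDominant.mono {v : I → X → α} {σ τ : Finset X} (h : IsDominant v σ) (hτ : τ ⊆ σ) :
    IsDominant v τ := fun x =>
  (h x).imp fun _ hi y hy => hi y (hτ hy)

/-- `m i` is a `v i`-least element of `τ`, for every preference `i`. -/
def IsMinimizer (v : I → X → α) (τ : Finset X) (m : I → X) : Prop :=
  ∀ i, m i ∈ τ ∧ ∀ y ∈ τ, v i (m i) ≤ v i y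

theorem exists_isMinimizer (v : I → X → α) {τ : Finset X} (hτ : τ.Nonempty) :
    ∃ m, IsMinimizer v τ m :=
  ⟨_, fun i => (τ.exists_min_image (v i) hτ).choose_spec⟩

/-- The points that beat the minimum of `τ` in every preference but `k`; their `v k`-maximum is the
point which pivots into `τ` when preference `k` is relaxed. -/
def beating (v : I → X → α) (m : I → X) (k : I) : Set X := {x | ∀ h, h ≠ k → v h (m h) < v h x}

variable {v : I → X → α} {τ : Finset X} {m : I → X} {k : I} {x : X}

theorem IsMinimizer.eq_of_forall_le (hm : IsMinimizer v τ m) (hv : ∀ i, Function.Injective (v i))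
    {i : I} {y : X} (hy : y ∈ τ) (h : ∀ z ∈ τ, v i y ≤ v i z) : m i = y :=
  hv i (((hm i).2 y hy).antisymm (h _ (hm i).1))

theorem IsMinimizer.forall_le_of_mem_beating (hm : IsMinimizer v τ m) (hτ : IsDominant v τ)
    (hx : x ∈ beating v m k) : ∀ y ∈ τ, v k x ≤ v k y := by
  obtain ⟨h, hle⟩ := hτ x
  obtain rfl : h = k := by
    by_contra hne
    exact (hx h hne).not_ge (hle _ (hm h).1)
  exact hle

section Fintype

variable [Fintype I]

theorem IsMinimizer.exists_injOn_compl_iff (hm : IsMinimizer v τ m) (hτ : IsDominant v τ)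
    (hv : ∀ i, Function.Injective (v i)) (hcard : τ.card + 1 = Fintype.card I) :
    ∃ i j, i ≠ j ∧ ∀ k, Set.InjOn m {k}ᶜ ↔ k = i ∨ k = j := by
  classical
  obtain ⟨i, -, j, -, hij, hmij⟩ := Finset.exists_ne_map_eq_of_card_lt_of_maps_to
    (s := Finset.univ) (t := τ) (f := m) (by rw [Finset.card_univ]; omega) fun i _ => (hm i).1
  have injOn_of_repeated : ∀ {k l}, k ≠ l → m k = m l → Set.InjOn m {k}ᶜ := by
    intro k l hkl hmkl
    have hsurj : Set.SurjOn m (Finset.univ.erase k : Finset I) τ := by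
      intro y hy
      obtain ⟨h, hle⟩ := hτ y
      have hmh := hm.eq_of_forall_le hv hy hle
      rcases eq_or_ne h k with rfl | hne
      · exact ⟨l, by simp [hkl.symm], hmkl ▸ hmh⟩
      · exact ⟨h, by simp [hne], hmh⟩
    have hle : (Finset.univ.erase k : Finset I).card ≤ τ.card := by
      rw [Finset.card_erase_of_mem (Finset.mem_univ k), Finset.card_univ]; omega
    have := Finset.injOn_of_surjOn_of_card_le m (fun i _ => (hm i).1) hsurj hle
    simpa [Set.compl_eq_univ_sdiff] using this
  refine ⟨i, j, hij, fun k => ⟨fun hk => ?_, ?_⟩⟩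
  · by_contra! hne
    exact hij (hk hne.1.symm hne.2.symm hmij)
  · rintro (rfl | rfl)
    exacts [injOn_of_repeated hij hmij, injOn_of_repeated hij.symm hmij.symm]

theorem IsMinimizer.isDominant_insert (hm : IsMinimizer v τ m) (hτ : IsDominant v τ)
    (hcard : τ.card + 1 = Fintype.card I)
    (hk : Set.InjOn m {k}ᶜ) (hx : x ∈ beating v m k) (hmax : IsMaxOn (v k) (beating v m k) x)
    [DecidableEq X] : x ∉ τ ∧ IsDominant v (insert x τ) := by
  classical
  refine ⟨fun hxτ => ?_, fun z => ?_⟩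
  · have hsurj : Set.SurjOn m (Finset.univ.erase k : Finset I) τ := by
      refine Finset.surjOn_of_injOn_of_card_le m (fun i _ => (hm i).1) (hk.mono (by simp)) ?_
      rw [Finset.card_erase_of_mem (Finset.mem_univ k), Finset.card_univ]; omega
    obtain ⟨h, hh, rfl⟩ := hsurj hxτ
    exact (hx h (by simpa using hh)).false
  · by_cases hz : z ∈ beating v m k
    · exact ⟨k, Finset.forall_mem_insert _ _ _ |>.2
        ⟨hmax hz, hm.forall_le_of_mem_beating hτ hz⟩⟩
    · obtain ⟨h, hne, hle⟩ : ∃ h, h ≠ k ∧ v h z ≤ v h (m h) := by simpa [beating] using hz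
      exact ⟨h, Finset.forall_mem_insert _ _ _ |>.2
        ⟨hle.trans (hx h hne).le, fun y hy => hle.trans ((hm h).2 y hy)⟩⟩

theorem IsMinimizer.exists_of_isDominant_insert (hm : IsMinimizer v τ m)
    (hv : ∀ i, Function.Injective (v i)) (hcard : τ.card + 1 = Fintype.card I)
    [DecidableEq X] (hxτ : x ∉ τ) (hdom : IsDominant v (insert x τ)) :
    ∃ k, Set.InjOn m {k}ᶜ ∧ x ∈ beating v m k ∧ IsMaxOn (v k) (beating v m k) x := by
  classical
  obtain ⟨k, hk⟩ := hdom x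
  have exists_min_eq : ∀ y ∈ τ, ∃ g, m g = y ∧ v g y < v g x := by
    intro y hy
    obtain ⟨g, hg⟩ := hdom y
    refine ⟨g, hm.eq_of_forall_le hv hy fun z hz => hg z (Finset.mem_insert_of_mem hz), ?_⟩
    exact (hg x (Finset.mem_insert_self x τ)).lt_of_ne fun h => hxτ (hv g h ▸ hy)
  have ne_of_lt : ∀ {g y}, y ∈ τ → v g y < v g x → g ≠ k := by
    rintro g y hy hlt rfl
    exact hlt.not_ge (hk y (Finset.mem_insert_of_mem hy))
  have hinj : Set.InjOn m {k}ᶜ := by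
    have := Finset.injOn_of_surjOn_of_card_le (s := Finset.univ.erase k) (t := τ) m
      (fun i _ => (hm i).1) (fun y hy => ?_) ?_
    · simpa [Set.compl_eq_univ_sdiff] using this
    · obtain ⟨g, hg, hlt⟩ := exists_min_eq y hy
      exact ⟨g, by simpa using ne_of_lt hy hlt, hg⟩
    · rw [Finset.card_erase_of_mem (Finset.mem_univ k), Finset.card_univ]; omega
  refine ⟨k, hinj, fun h hne => ?_, fun z hz => ?_⟩
  · obtain ⟨g, hg, hlt⟩ := exists_min_eq (m h) (hm h).1
    obtain rfl : g = h := hinj (ne_of_lt (hm h).1 hlt) hne hg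
    exact hlt
  · obtain ⟨g, hg⟩ := hdom z
    obtain rfl : g = k := by
      by_contra hne
      exact (hz g hne).not_ge (hg _ (Finset.mem_insert_of_mem (hm g).1))
    exact hg x (Finset.mem_insert_self x τ)

theorem IsDominant.exists_pair_insert [Finite X] [DecidableEq X]
    (hv : ∀ i, Function.Injective (v i)) (hτ : IsDominant v τ) (hm : IsMinimizer v τ m)
    (hcard : τ.card + 1 = Fintype.card I) (hbeat : ∀ k, (beating v m k).Nonempty) :
    ∃ x y, x ≠ y ∧ ∀ z, (z ∉ τ ∧ IsDominant v (insert z τ)) ↔ z = x ∨ z = y := by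
  obtain ⟨i, j, hij, hinj⟩ := hm.exists_injOn_compl_iff hτ hv hcard
  choose p hp hmax using fun k =>
    Set.exists_max_image (beating v m k) (v k) (Set.toFinite _) (hbeat k)
  refine ⟨p i, p j, fun hpij => ?_, fun z => ⟨fun hz => ?_, ?_⟩⟩
  · obtain ⟨h, hle⟩ := hτ (p i)
    refine (hle _ (hm h).1).not_gt ?_
    rcases eq_or_ne h i with rfl | hne
    · exact hpij ▸ hp j h hij
    · exact hp i h hne
  · obtain ⟨k, hk, hzk, hzmax⟩ := hm.exists_of_isDominant_insert hv hcard hz.1 hz.2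
    have hzp : z = p k := hv k ((hmax k z hzk).antisymm (hzmax (hp k)))
    rcases (hinj k).1 hk with rfl | rfl
    exacts [Or.inl hzp, Or.inr hzp]
  · rintro (rfl | rfl)
    · exact hm.isDominant_insert hτ hcard ((hinj i).2 (Or.inl rfl)) (hp i) (hmax i)
    · exact hm.isDominant_insert hτ hcard ((hinj j).2 (Or.inr rfl)) (hp j) (hmax j)

end Fintype

end Dominance

section Colouring

variable {X I : Type*} [DecidableEq X] [DecidableEq I] {c : X → I} {σ : Finset X} {i₀ : I}

theorem exists_pair_image_erase [Fintype I] (hσ : σ.card = Fintype.card I)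
    (hc : σ.image c ≠ Finset.univ) {x : X} (hx : x ∈ σ)
    (hxc : (σ.erase x).image c = Finset.univ.erase i₀) :
    ∃ y ∈ σ, x ≠ y ∧ ∀ z ∈ σ, (σ.erase z).image c = Finset.univ.erase i₀ ↔ z = x ∨ z = y := by
  have hcx : c x ≠ i₀ := by
    rintro hcx
    apply hc
    rw [← Finset.insert_erase hx, Finset.image_insert, hxc, hcx,
      Finset.insert_erase (Finset.mem_univ i₀)]
  have himage : σ.image c = Finset.univ.erase i₀ := by
    rw [← Finset.insert_erase hx, Finset.image_insert, hxc]
    exact Finset.insert_eq_of_mem (by simpa using hcx)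
  obtain ⟨y, hy, hyx⟩ : ∃ y ∈ σ.erase x, c y = c x := by
    rw [← Finset.mem_image, hxc]
    simpa using hcx
  obtain ⟨hyne, hyσ⟩ := Finset.mem_erase.1 hy
  have hinj : Set.InjOn c (σ.erase x) := by
    apply Finset.injOn_of_card_image_eq
    rw [hxc, Finset.card_erase_of_mem hx, Finset.card_erase_of_mem (Finset.mem_univ i₀), hσ,
      Finset.card_univ]
  refine ⟨y, hyσ, hyne.symm, fun z hz => ⟨fun hzc => ?_, ?_⟩⟩
  · by_contra! hne
    obtain ⟨u, hu, huz⟩ : ∃ u ∈ σ.erase z, c u = c z := by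
      rw [← Finset.mem_image, hzc, ← himage]
      exact Finset.mem_image_of_mem c hz
    obtain ⟨huz', huσ⟩ := Finset.mem_erase.1 hu
    rcases eq_or_ne u x with rfl | hux
    · exact hne.2 (hinj (by simp [hne.1, hz]) (Finset.mem_coe.2 hy) (by rw [hyx, huz]))
    · exact huz' (hinj (by simp [hux, huσ]) (by simp [hne.1, hz]) huz)
  · rintro (rfl | rfl)
    · exact hxc
    · refine (Finset.image_subset_image (Finset.erase_subset _ _)).antisymm ?_ |>.trans himage
      intro k hk
      obtain ⟨u, hu, rfl⟩ := Finset.mem_image.1 hk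
      rcases eq_or_ne u z with rfl | hne
      · exact Finset.mem_image.2 ⟨x, by simp [hyne.symm, hx], hyx.symm⟩
      · exact Finset.mem_image_of_mem c (by simp [hne, hu])

end Colouring

section Rooms

variable {X I α : Type*} [Fintype X] [Fintype I] [LinearOrder α]

/-- The rooms: dominant sets with as many elements as there are preferences. -/
noncomputable def rooms (v : I → X → α) : Finset (Finset X) :=
  open Classical in Finset.univ.filter fun σ => IsDominant v σ ∧ σ.card = Fintype.card I

/-- The doors of type `i₀`: sets carrying every colour except `i₀`, each exactly once. -/
noncomputable def doors (c : X → I) (i₀ : I) : Finset (Finset X) :=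
  open Classical in Finset.univ.filter fun τ =>
    τ.image c = Finset.univ.erase i₀ ∧ τ.card + 1 = Fintype.card I

variable {v : I → X → α} {c : X → I} {i₀ : I} {σ τ : Finset X}

open Classical in
theorem even_card_doors_below (hσ : σ.card = Fintype.card I) (hc : σ.image c ≠ Finset.univ) :
    Even ((doors c i₀).bipartiteBelow (· ⋖ ·) σ).card := by
  rcases ((doors c i₀).bipartiteBelow (· ⋖ ·) σ).eq_empty_or_nonempty with h | ⟨τ, hτ⟩
  · simp [h]
  obtain ⟨hτ, x, hx, rfl⟩ : τ ∈ doors c i₀ ∧ ∃ x ∈ σ, σ.erase x = τ := by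
    simpa [Finset.covBy_iff_exists_erase] using hτ
  have hxc : (σ.erase x).image c = Finset.univ.erase i₀ := ((Finset.mem_filter_univ _).1 hτ).1
  obtain ⟨y, hy, hxy, hiff⟩ := exists_pair_image_erase hσ hc hx hxc
  have hpair : (doors c i₀).bipartiteBelow (· ⋖ ·) σ = {σ.erase x, σ.erase y} := by
    ext ρ
    simp only [Finset.mem_bipartiteBelow, doors, Finset.mem_filter_univ,
      Finset.covBy_iff_exists_erase, Finset.mem_insert, Finset.mem_singleton]
    constructor
    · rintro ⟨⟨hρ, -⟩, z, hz, rfl⟩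
      exact ((hiff z hz).1 hρ).imp (by rintro rfl; rfl) (by rintro rfl; rfl)
    · rintro (rfl | rfl)
      · exact ⟨⟨(hiff x hx).2 (Or.inl rfl), by rw [Finset.card_erase_add_one hx, hσ]⟩, x, hx, rfl⟩
      · exact ⟨⟨(hiff y hy).2 (Or.inr rfl), by rw [Finset.card_erase_add_one hy, hσ]⟩, y, hy, rfl⟩
  rw [hpair, Finset.card_pair fun h => hxy ((Finset.erase_inj σ hx).1 h)]
  exact even_two

theorem mem_rooms_and_covBy_iff [DecidableEq X] (hτ : τ.card + 1 = Fintype.card I) :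
    σ ∈ rooms v ∧ τ ⋖ σ ↔ ∃ z, (z ∉ τ ∧ IsDominant v (insert z τ)) ∧ insert z τ = σ := by
  simp only [rooms, Finset.mem_filter_univ, Finset.covBy_iff_exists_insert]
  constructor
  · rintro ⟨⟨hσ, -⟩, z, hz, rfl⟩
    exact ⟨z, ⟨hz, hσ⟩, rfl⟩
  · rintro ⟨z, ⟨hz, hσ⟩, rfl⟩
    exact ⟨⟨hσ, by rw [Finset.card_insert_of_notMem hz, hτ]⟩, z, hz, rfl⟩

open Classical in
theorem even_card_rooms_above {m : I → X} (hv : ∀ i, Function.Injective (v i))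
    (hcard : τ.card + 1 = Fintype.card I) (hm : IsMinimizer v τ m)
    (hbeat : ∀ k, (beating v m k).Nonempty) :
    Even ((rooms v).bipartiteAbove (· ⋖ ·) τ).card := by
  by_cases hτ : IsDominant v τ
  · obtain ⟨x, y, hxy, hiff⟩ := hτ.exists_pair_insert hv hm hcard hbeat
    have hpair : (rooms v).bipartiteAbove (· ⋖ ·) τ = {insert x τ, insert y τ} := by
      ext σ
      simp [mem_rooms_and_covBy_iff hcard, hiff, or_and_right, exists_or, eq_comm]
    rw [hpair, Finset.card_pair fun h =>
      hxy ((Finset.insert_inj ((hiff x).2 (Or.inl rfl)).1).1 h)]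
    exact even_two
  · suffices (rooms v).bipartiteAbove (· ⋖ ·) τ = ∅ by simp [this]
    refine Finset.eq_empty_of_forall_notMem fun σ hσ => hτ ?_
    simp only [Finset.mem_bipartiteAbove, rooms, Finset.mem_filter_univ] at hσ
    exact hσ.1.1.mono hσ.2.le

end Rooms

section Extension

variable {T I α : Type*} [LinearOrder α] [Fintype I]

open Classical in
/-- Preferences extended by one point at infinity `Sum.inr k` for each `k : I`, which is the worst
point for `k` and better than every point of `T` for the other preferences. With these points all
rooms have `Fintype.card I` elements. -/
noncomputable def extend (v : I → T → α) (k : I) : T ⊕ I → WithBot (Lex (α ⊕ Fin (Fintype.card I)))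
  | Sum.inl t => ↑(toLex (Sum.inl (v k t) : α ⊕ Fin (Fintype.card I)))
  | Sum.inr h =>
    if h = k then ⊥ else ↑(toLex (Sum.inr (Fintype.equivFin I h) : α ⊕ Fin (Fintype.card I)))

variable {v : I → T → α} {h k : I} {s t : T}

@[simp]
theorem extend_inl_le_inl : extend v k (Sum.inl s) ≤ extend v k (Sum.inl t) ↔ v k s ≤ v k t := by
  simp [extend]

@[simp]
theorem extend_inr_self_le (x : T ⊕ I) : extend v k (Sum.inr k) ≤ extend v k x := by
  simp [extend]

theorem extend_inl_lt_inr (hne : h ≠ k) : extend v k (Sum.inl t) < extend v k (Sum.inr h) := by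
  simp [extend, hne]

theorem extend_inr_self_lt_inl : extend v k (Sum.inr k) < extend v k (Sum.inl t) := by
  simp [extend]

theorem extend_injective (hv : ∀ i, Function.Injective (v i)) (k : I) :
    Function.Injective (extend v k) := by
  rintro (s | h) (t | h') heq
  · exact congrArg Sum.inl (hv k (by simpa [extend] using heq))
  · rcases eq_or_ne h' k with rfl | hne
    · exact absurd heq extend_inr_self_lt_inl.ne'
    · exact absurd heq (extend_inl_lt_inr hne).ne
  · rcases eq_or_ne h k with rfl | hne
    · exact absurd heq extend_inr_self_lt_inl.ne
    · exact absurd heq (extend_inl_lt_inr hne).ne'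
  · by_cases hh : h = k <;> by_cases hh' : h' = k <;> simp_all [extend]

theorem inr_mem_beating {τ : Finset (T ⊕ I)} {m : I → T ⊕ I} (hm : IsMinimizer (extend v) τ m)
    (ht : Sum.inl t ∈ τ) (k : I) : Sum.inr k ∈ beating (extend v) m k := fun h hne =>
  ((hm h).2 _ ht).trans_lt (extend_inl_lt_inr hne.symm)

/-- The door formed by all points at infinity but one leads into a single room. -/
theorem insert_image_inr_isDominant_iff [DecidableEq T] [DecidableEq I] [Finite T] [Nonempty T]
    (hv : ∀ i, Function.Injective (v i)) (i₀ : I) :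
    ∃ t, ∀ z, (z ∉ (Finset.univ.erase i₀).image Sum.inr ∧
      IsDominant (extend v) (insert z ((Finset.univ.erase i₀).image Sum.inr))) ↔ z = Sum.inl t := by
  obtain ⟨t, ht⟩ := Finite.exists_max (v i₀)
  have dominated_only_at : ∀ {s i z}, (∀ y ∈ insert z ((Finset.univ.erase i₀).image Sum.inr),
      extend v i (Sum.inl s) ≤ extend v i y) → i = i₀ := by
    intro s i z hle
    by_contra hne
    exact (hle (Sum.inr i) (by simp [hne])).not_gt extend_inr_self_lt_inl
  refine ⟨t, fun z => ⟨?_, ?_⟩⟩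
  · rintro ⟨hz, hdom⟩
    obtain ⟨i, hi⟩ := hdom (Sum.inl t)
    obtain rfl := dominated_only_at hi
    rcases z with s | h
    · have hts : v i t ≤ v i s := by simpa using hi (Sum.inl s) (by simp)
      rw [hv i (hts.antisymm (ht s))]
    · obtain rfl : h = i := by simpa using hz
      exact absurd (hi (Sum.inr h) (by simp)) extend_inr_self_lt_inl.not_ge
  · rintro rfl
    refine ⟨by simp, ?_⟩
    rintro (s | h)
    · refine ⟨i₀, Finset.forall_mem_insert _ _ _ |>.2 ⟨extend_inl_le_inl.2 (ht s), ?_⟩⟩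
      simp only [Finset.forall_mem_image, Finset.mem_erase]
      exact fun h hh => (extend_inl_lt_inr hh.1).le
    · exact ⟨h, fun y _ => extend_inr_self_le y⟩

end Extension

section Lemma

variable {T I α : Type*} [LinearOrder α] [Nonempty T] [Nonempty I] {v : I → T → α}

open Classical in
theorem exists_mem_rooms_image_eq_univ [Fintype T] [Fintype I]
    (hv : ∀ i, Function.Injective (v i)) (c : T → I) :
    ∃ σ ∈ rooms (extend v), σ.image (Sum.elim c id) = Finset.univ := by
  by_contra! hcon
  obtain ⟨i₀⟩ := ‹Nonempty I›
  set C := Sum.elim c id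
  let τ₀ : Finset (T ⊕ I) := (Finset.univ.erase i₀).image Sum.inr
  have hτ₀card : τ₀.card + 1 = Fintype.card I := by
    rw [Finset.card_image_of_injective _ Sum.inr_injective,
      Finset.card_erase_add_one (Finset.mem_univ i₀), Finset.card_univ]
  have hτ₀ : τ₀ ∈ doors C i₀ := by
    rw [doors, Finset.mem_filter_univ]
    exact ⟨by simp [τ₀, C, Finset.image_image, Function.comp_def], hτ₀card⟩
  have even_rooms : Even (∑ σ ∈ rooms (extend v), ((doors C i₀).bipartiteBelow (· ⋖ ·) σ).card) :=
    Finset.even_sum _ fun σ hσ =>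
      even_card_doors_below ((Finset.mem_filter_univ σ).1 hσ).2 (hcon σ hσ)
  have one_room : ((rooms (extend v)).bipartiteAbove (· ⋖ ·) τ₀).card = 1 := by
    obtain ⟨t, ht⟩ := insert_image_inr_isDominant_iff hv i₀
    refine Finset.card_eq_one.2 ⟨insert (Sum.inl t) τ₀, ?_⟩
    ext σ
    simp only [Finset.mem_bipartiteAbove, mem_rooms_and_covBy_iff hτ₀card, Finset.mem_singleton]
    simp only [τ₀, ht, exists_eq_left, eq_comm]
  have even_doors : Even (∑ τ ∈ (doors C i₀).erase τ₀,
      ((rooms (extend v)).bipartiteAbove (· ⋖ ·) τ).card) := by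
    refine Finset.even_sum _ fun τ hτ => ?_
    obtain ⟨hne, hτC, hcard⟩ : τ ≠ τ₀ ∧ τ.image C = Finset.univ.erase i₀ ∧
      τ.card + 1 = Fintype.card I := by simpa [doors] using hτ
    obtain ⟨t, ht⟩ : ∃ t, Sum.inl t ∈ τ := by
      by_contra! hinl
      refine hne (Finset.eq_of_subset_of_card_le (fun x hx => ?_) (by omega))
      rcases x with t | h
      · exact absurd hx (hinl t)
      · have : h ∈ τ.image C := Finset.mem_image_of_mem C hx
        simpa [τ₀, hτC] using this
    obtain ⟨m, hm⟩ := exists_isMinimizer (extend v) ⟨_, ht⟩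
    exact even_card_rooms_above (extend_injective hv) hcard hm fun k => ⟨_, inr_mem_beating hm ht k⟩
  rw [← Finset.sum_card_bipartiteAbove_eq_sum_card_bipartiteBelow, ← Finset.add_sum_erase _ _ hτ₀,
    one_room, add_comm, Nat.even_add_one] at even_rooms
  exact even_rooms even_doors

open Classical in
theorem exists_forall_exists_mem_image_le [Finite T] [Finite I]
    (hv : ∀ i, Function.Injective (v i)) (c : T → I) :
    ∃ σ : Finset T, ∀ x, ∃ i ∈ σ.image c, ∀ y ∈ σ, v i x ≤ v i y := by
  cases nonempty_fintype T
  cases nonempty_fintype I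
  obtain ⟨σ, hσ, himage⟩ := exists_mem_rooms_image_eq_univ hv c
  have hdom : IsDominant (extend v) σ := ((Finset.mem_filter_univ σ).1 hσ).1
  refine ⟨σ.toLeft, fun x => ?_⟩
  obtain ⟨i, hi⟩ := hdom (Sum.inl x)
  refine ⟨i, ?_, fun y hy => by simpa using hi _ (Finset.mem_toLeft.1 hy)⟩
  obtain ⟨y, hy, rfl⟩ := Finset.mem_image.1 (himage ▸ Finset.mem_univ i)
  rcases y with t | h
  · exact Finset.mem_image_of_mem c (Finset.mem_toLeft.2 hy)
  · exact absurd (hi _ hy) extend_inr_self_lt_inl.not_ge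

end Lemma

end Scarf

/-! ### Brouwer's theorem from Scarf's lemma -/

namespace Brouwer

open Filter Topology

variable {I : Type*} [Fintype I]

theorem forall_le_card_add_of_dominated {M : ℕ} {σ : Finset (I → ℕ)} {C : Finset I}
    (hσ : ∀ y ∈ σ, ∑ i, y i = M)
    (hdom : ∀ x : I → ℕ, ∑ i, x i = M → ∃ i ∈ C, ∀ y ∈ σ, x i ≤ y i) {y : I → ℕ} (hy : y ∈ σ) :
    (∀ k ∉ C, y k ≤ Fintype.card I) ∧ ∀ z ∈ σ, ∀ k, y k ≤ z k + Fintype.card I := by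
  classical
  choose m hmem hmin using fun k => σ.exists_min_image (fun y => y k) ⟨y, hy⟩
  have lt_sum : M < ∑ i ∈ C, (m i i + 1) := by
    by_contra! hle
    obtain ⟨i₁, -⟩ := hdom y (hσ y hy)
    obtain ⟨i, hi, h⟩ := hdom
      (fun i => (if i ∈ C then m i i + 1 else 0) +
        if i = i₁ then M - ∑ i ∈ C, (m i i + 1) else 0) (by
          simp only [Finset.sum_add_distrib, Finset.sum_ite_mem, Finset.univ_inter,
            Finset.sum_ite_eq', Finset.mem_univ, if_true]
          rw [← Finset.sum_add_distrib]
          omega)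
    have := h (m i) (hmem i)
    rw [if_pos hi] at this
    omega
  have card_le : C.card ≤ Fintype.card I := Finset.card_le_univ C
  have excess_lt : ∑ i ∈ C, (y i - m i i) + ∑ i ∈ Cᶜ, y i < C.card := by
    have split : ∑ i ∈ C, y i = ∑ i ∈ C, m i i + ∑ i ∈ C, (y i - m i i) := by
      rw [← Finset.sum_add_distrib]
      exact Finset.sum_congr rfl fun i _ => by have := hmin i y hy; omega
    have total := Finset.sum_add_sum_compl C y
    rw [hσ y hy] at total
    rw [Finset.sum_add_distrib, Finset.sum_const, smul_eq_mul, mul_one] at lt_sum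
    omega
  have compl_le : ∀ k ∉ C, y k ≤ Fintype.card I := fun k hk => by
    have := Finset.single_le_sum (f := y) (fun _ _ => Nat.zero_le _) (Finset.mem_compl.2 hk)
    omega
  refine ⟨compl_le, fun z hz k => ?_⟩
  by_cases hk : k ∈ C
  · have := Finset.single_le_sum (f := fun i => y i - m i i) (fun _ _ => Nat.zero_le _) hk
    have := hmin k z hz
    omega
  · exact (compl_le k hk).trans (Nat.le_add_left _ _)

theorem exists_le_apply {Φ : (I → ℝ) → I → ℝ} [Nonempty I]
    (hΦ : Set.MapsTo Φ (stdSimplex ℝ I) (stdSimplex ℝ I)) {x : I → ℝ} (hx : x ∈ stdSimplex ℝ I) :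
    ∃ i, x i ≤ Φ x i := by
  by_contra! h
  have := Finset.sum_lt_sum_of_nonempty Finset.univ_nonempty fun i _ => h i
  rw [hx.2, (hΦ hx).2] at this
  exact lt_irrefl _ this

variable [Nonempty I]

open Classical in
theorem exists_lattice_points_dominated (M : ℕ) (c : (I → ℕ) → I) :
    ∃ σ : Finset (I → ℕ), (∀ y ∈ σ, ∑ i, y i = M) ∧
      ∀ x : I → ℕ, ∑ i, x i = M → ∃ i ∈ σ.image c, ∀ y ∈ σ, x i ≤ y i := by
  let T := {x // x ∈ Finset.piAntidiag (Finset.univ : Finset I) M}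
  have mem_iff : ∀ x, x ∈ Finset.piAntidiag (Finset.univ : Finset I) M ↔ ∑ i, x i = M := by simp
  have : Nonempty T := by
    obtain ⟨i⟩ := ‹Nonempty I›
    exact ⟨⟨Pi.single i M, by simp⟩⟩
  -- The second component only breaks ties, to make the coordinates injective.
  let v : I → T → ℕ ×ₗ Fin (Fintype.card T) := fun i t => toLex (t.1 i, Fintype.equivFin T t)
  have hv : ∀ i, Function.Injective (v i) := fun i s t h =>
    (Fintype.equivFin T).injective (Prod.ext_iff.1 (toLex.injective h)).2
  obtain ⟨σ, hσ⟩ := Scarf.exists_forall_exists_mem_image_le hv fun t => c t.1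
  refine ⟨σ.image Subtype.val, ?_, fun x hx => ?_⟩
  · simp only [Finset.forall_mem_image]
    exact fun t _ => (mem_iff _).1 t.2
  · obtain ⟨i, hi, hle⟩ := hσ ⟨x, (mem_iff x).2 hx⟩
    refine ⟨i, by rwa [Finset.image_image], ?_⟩
    simp only [Finset.forall_mem_image]
    exact fun t ht => Prod.Lex.monotone_fst _ _ (hle t ht)

variable {Φ : (I → ℝ) → I → ℝ}

theorem exists_forall_exists_near_le_add
    (hΦ : Set.MapsTo Φ (stdSimplex ℝ I) (stdSimplex ℝ I)) {ε : ℝ} (hε : 0 < ε) :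
    ∃ x ∈ stdSimplex ℝ I, ∀ i, ∃ y ∈ stdSimplex ℝ I, dist y x ≤ ε ∧ y i ≤ Φ y i + ε := by
  classical
  obtain ⟨M, hM⟩ := exists_nat_gt (Fintype.card I / ε)
  have hM0 : (0 : ℝ) < M := lt_of_le_of_lt (by positivity) hM
  have card_le : Fintype.card I / M ≤ ε := by
    rw [div_lt_iff₀ hε] at hM
    rw [div_le_iff₀ hM0]
    linarith
  let scale : (I → ℕ) → I → ℝ := fun y i => y i / M
  have scale_mem : ∀ {y}, ∑ i, y i = M → scale y ∈ stdSimplex ℝ I := fun {y} hy => by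
    refine ⟨fun i => by positivity, ?_⟩
    rw [← Finset.sum_div, ← Nat.cast_sum, hy, div_self hM0.ne']
  choose! c hc using fun x (hx : x ∈ stdSimplex ℝ I) => exists_le_apply hΦ hx
  obtain ⟨σ, hσ, hdom⟩ := exists_lattice_points_dominated M (c ∘ scale)
  have near : ∀ y ∈ σ, ∀ z ∈ σ, dist (scale y) (scale z) ≤ ε := fun y hy z hz => by
    refine (dist_pi_le_iff hε.le).2 fun k => ?_
    have hyz : (y k : ℝ) ≤ z k + Fintype.card I := by
      exact_mod_cast (forall_le_card_add_of_dominated hσ hdom hy).2 z hz k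
    have hzy : (z k : ℝ) ≤ y k + Fintype.card I := by
      exact_mod_cast (forall_le_card_add_of_dominated hσ hdom hz).2 y hy k
    rw [Real.dist_eq, ← sub_div, abs_div, abs_of_pos hM0]
    refine le_trans ?_ card_le
    gcongr
    exact abs_le.2 ⟨by linarith, by linarith⟩
  obtain ⟨x, hx⟩ : σ.Nonempty := by
    obtain ⟨i, hi, -⟩ := hdom (Pi.single (Classical.arbitrary I) M) (by simp)
    exact Finset.image_nonempty.1 ⟨i, hi⟩
  refine ⟨scale x, scale_mem (hσ x hx), fun i => ?_⟩
  by_cases hi : i ∈ σ.image (c ∘ scale)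
  · obtain ⟨y, hy, rfl⟩ := Finset.mem_image.1 hi
    have := hc _ (scale_mem (hσ y hy))
    exact ⟨scale y, scale_mem (hσ y hy), near y hy x hx, by simpa using by linarith⟩
  · refine ⟨scale x, scale_mem (hσ x hx), by simpa using hε.le, ?_⟩
    have : (x i : ℝ) ≤ Fintype.card I := by
      exact_mod_cast (forall_le_card_add_of_dominated hσ hdom hx).1 i hi
    have : scale x i ≤ Fintype.card I / M := div_le_div_of_nonneg_right this hM0.le
    linarith [(hΦ (scale_mem (hσ x hx))).1 i]

theorem exists_fixedPoint_stdSimplex (hΦ : Set.MapsTo Φ (stdSimplex ℝ I) (stdSimplex ℝ I))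
    (hcont : ContinuousOn Φ (stdSimplex ℝ I)) : ∃ z ∈ stdSimplex ℝ I, Φ z = z := by
  choose x hx y hy hyx hle using fun n : ℕ =>
    exists_forall_exists_near_le_add hΦ (Nat.one_div_pos_of_nat (α := ℝ) (n := n))
  obtain ⟨z, hz, φ, hφ, hxz⟩ := (isCompact_stdSimplex ℝ I).tendsto_subseq hx
  refine ⟨z, hz, ?_⟩
  have small : Tendsto (fun n => 1 / ((φ n : ℝ) + 1)) atTop (𝓝 0) :=
    tendsto_one_div_add_atTop_nhds_zero_nat.comp hφ.tendsto_atTop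
  have le_apply : ∀ i, z i ≤ Φ z i := fun i => by
    have hyz : Tendsto (fun n => y (φ n) i) atTop (𝓝 z) :=
      (tendsto_iff_of_dist (squeeze_zero (fun _ => dist_nonneg) (fun n => hyx (φ n) i) small)).2 hxz
    have hΦz : Tendsto (fun n => Φ (y (φ n) i)) atTop (𝓝 (Φ z)) :=
      (hcont z hz).tendsto.comp
        (tendsto_nhdsWithin_iff.2 ⟨hyz, Eventually.of_forall fun n => hy (φ n) i⟩)
    have hlim := (tendsto_pi_nhds.1 hΦz i).add small
    rw [add_zero] at hlim
    exact le_of_tendsto_of_tendsto' (tendsto_pi_nhds.1 hyz i) hlim fun n => hle (φ n) i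
  have hsum : ∑ i, z i = ∑ i, Φ z i := by rw [hz.2, (hΦ hz).2]
  exact funext fun i =>
    ((Finset.sum_eq_sum_iff_of_le fun i _ => le_apply i).1 hsum i (Finset.mem_univ i)).symm

theorem exists_dist_apply_le_of_openSimplex
    (hΦ : Set.MapsTo Φ (GState.openSimplex I) (stdSimplex ℝ I))
    (hcont : ContinuousOn Φ (GState.openSimplex I)) {ε : ℝ} (hε : 0 < ε) (hε' : ε < 1) :
    ∃ x ∈ GState.openSimplex I, dist (Φ x) x ≤ ε := by
  have hcard : (1 : ℝ) ≤ Fintype.card I := by exact_mod_cast Fintype.card_pos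
  let q : (I → ℝ) → I → ℝ := fun x i => (1 - ε) * x i + ε / Fintype.card I
  have hq : Set.MapsTo q (stdSimplex ℝ I) (GState.openSimplex I) := fun x hx => by
    refine ⟨fun i => ?_, ?_⟩
    · have := mul_nonneg (by linarith : 0 ≤ 1 - ε) (hx.1 i)
      have : 0 < ε / Fintype.card I := by positivity
      simp only [q]
      linarith
    · simp only [q]
      rw [Finset.sum_add_distrib, ← Finset.mul_sum, hx.2, Finset.sum_const, nsmul_eq_mul,
        Finset.card_univ]
      field_simp
      ring
  obtain ⟨z, hz, hfix⟩ := exists_fixedPoint_stdSimplex (hΦ.comp hq)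
    (hcont.comp (by fun_prop : Continuous q).continuousOn hq)
  rw [Function.comp_apply] at hfix
  refine ⟨q z, hq hz, (dist_pi_le_iff hε.le).2 fun i => ?_⟩
  have hz1 : z i ≤ 1 := hz.2 ▸ Finset.single_le_sum (fun j _ => hz.1 j) (Finset.mem_univ i)
  have hcard' : 1 / (Fintype.card I : ℝ) ≤ 1 := (div_le_one (by linarith)).2 hcard
  have hcard0 : 0 < 1 / (Fintype.card I : ℝ) := by positivity
  calc dist (Φ (q z) i) (q z i) = |ε * (z i - 1 / Fintype.card I)| := by
        rw [hfix, Real.dist_eq]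
        simp only [q]
        ring_nf
    _ = ε * |z i - 1 / Fintype.card I| := by rw [abs_mul, abs_of_pos hε]
    _ ≤ ε * 1 := by
        gcongr
        exact abs_le.2 ⟨by linarith [hz.1 i], by linarith⟩
    _ = ε := mul_one ε

end Brouwer

/-! ### Numberings of the alphabet and offsets -/

namespace IntervalExchange

section RauzyMove

variable {A : Type*}

open Classical in
/-- The Rauzy operation on one numbering, where the last letter `l` is moved right after `w`. -/
noncomputable def rauzyMove (p : A → ℕ) (w l : A) (x : A) : ℕ :=
  if x = l then p w + 1 else if p w < p x then p x + 1 else p x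

variable {p : A → ℕ} {w l x y : A}

theorem rauzyMove_loser : rauzyMove p w l l = p w + 1 := if_pos rfl

theorem rauzyMove_of_lt (hx : x ≠ l) (h : p w < p x) : rauzyMove p w l x = p x + 1 := by
  rw [rauzyMove, if_neg hx, if_pos h]

theorem rauzyMove_of_le (hx : x ≠ l) (h : p x ≤ p w) : rauzyMove p w l x = p x := by
  rw [rauzyMove, if_neg hx, if_neg h.not_gt]

theorem rauzyMove_lt_iff (hx : x ≠ l) (hy : y ≠ l) :
    rauzyMove p w l x < rauzyMove p w l y ↔ p x < p y := by
  simp only [rauzyMove, if_neg hx, if_neg hy]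
  split_ifs <;> omega

theorem rauzyMove_loser_lt_iff (hy : y ≠ l) :
    rauzyMove p w l l < rauzyMove p w l y ↔ p w < p y := by
  simp only [rauzyMove, if_true, if_neg hy]
  split_ifs <;> omega

theorem rauzyMove_lt_loser_iff (hx : x ≠ l) :
    rauzyMove p w l x < rauzyMove p w l l ↔ p x ≤ p w := by
  simp only [rauzyMove, if_true, if_neg hx]
  split_ifs <;> omega

end RauzyMove

section Numbering

variable {A : Type*} [Fintype A]

/-- A numbering of the alphabet by the positions `1, …, card A`: half of a combinatorial datum. -/
structure IsNumbering (p : A → ℕ) : Prop where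
  injective : Function.Injective p
  one_le : ∀ a, 1 ≤ p a
  le_card : ∀ a, p a ≤ Fintype.card A

theorem isNumbering_iff_bijOn {p : A → ℕ} :
    IsNumbering p ↔ Set.BijOn p Set.univ (Set.Ico 1 (Fintype.card A + 1)) := by
  refine ⟨fun hp => ⟨fun a _ => ⟨hp.one_le a, Nat.lt_succ_of_le (hp.le_card a)⟩,
    hp.injective.injOn, ?_⟩, fun ⟨hmaps, hinj, _⟩ => ⟨Set.injOn_univ.1 hinj,
    fun a => (hmaps (Set.mem_univ a)).1, fun a => Nat.lt_succ_iff.1 (hmaps (Set.mem_univ a)).2⟩⟩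
  have hsurj := Finset.surjOn_of_injOn_of_card_le (s := Finset.univ)
    (t := Finset.Ico 1 (Fintype.card A + 1)) p
    (fun a _ => Finset.mem_coe.2 (Finset.mem_Ico.2 ⟨hp.one_le a, Nat.lt_succ_of_le (hp.le_card a)⟩))
    hp.injective.injOn (by simp [Finset.card_univ])
  simpa using hsurj

theorem IsNumbering.exists_eq {p : A → ℕ} (hp : IsNumbering p) {k : ℕ} (h1 : 1 ≤ k)
    (hk : k ≤ Fintype.card A) : ∃ a, p a = k := by
  obtain ⟨a, -, ha⟩ := (isNumbering_iff_bijOn.1 hp).surjOn ⟨h1, Nat.lt_succ_of_le hk⟩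
  exact ⟨a, ha⟩

theorem IsNumbering.lt_of_eq_card {p : A → ℕ} (hp : IsNumbering p) {a b : A}
    (ha : p a = Fintype.card A) (hb : b ≠ a) : p b < p a :=
  (ha ▸ hp.le_card b).lt_of_ne fun h => hb (hp.injective h)

/-- Left endpoint of the interval labelled `a`, when intervals of lengths `l` are lined up from `0`
in the order given by `p`. -/
def offset {M : Type*} [AddCommMonoid M] (p : A → ℕ) (l : A → M) (a : A) : M :=
  ∑ x with p x < p a, l x

section AddCommMonoid

variable {M : Type*} [AddCommMonoid M] {p : A → ℕ} {a b : A}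

theorem IsNumbering.offset_add (hp : IsNumbering p) (l : A → M) (a : A) :
    offset p l a + l a = ∑ x with p x ≤ p a, l x := by
  classical
  have hfilter : ({x | p x ≤ p a} : Finset A) = insert a ({x | p x < p a} : Finset A) := by
    ext x
    simp [le_iff_lt_or_eq, hp.injective.eq_iff, or_comm]
  rw [hfilter, Finset.sum_insert (by simp), add_comm, offset]

theorem IsNumbering.offset_add_of_eq_card (hp : IsNumbering p) (l : A → M)
    (ha : p a = Fintype.card A) : offset p l a + l a = ∑ x, l x := by
  rw [hp.offset_add, Finset.filter_true_of_mem fun x _ => ha ▸ hp.le_card x]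

theorem IsNumbering.offset_of_eq_one (hp : IsNumbering p) (l : A → M) (ha : p a = 1) :
    offset p l a = 0 := by
  rw [offset, Finset.filter_false_of_mem fun x _ => ha ▸ (hp.one_le x).not_gt, Finset.sum_empty]

theorem IsNumbering.offset_of_eq_add_one (hp : IsNumbering p) (l : A → M) (hab : p b = p a + 1) :
    offset p l b = offset p l a + l a := by
  rw [hp.offset_add]
  simp only [offset, hab, Nat.lt_succ_iff]

theorem IsNumbering.funext_of_offset_eq {M : Type*} [AddCommGroup M] (hp : IsNumbering p)
    {l l' : A → M} (h : ∀ a, offset p l a = offset p l' a) (hsum : ∑ a, l a = ∑ a, l' a) :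
    l = l' := by
  ext a
  apply add_left_cancel (a := offset p l a)
  rcases (hp.le_card a).eq_or_lt with ha | ha
  · rw [hp.offset_add_of_eq_card l ha, h a, hp.offset_add_of_eq_card l' ha, hsum]
  · obtain ⟨b, hb⟩ := hp.exists_eq (Nat.le_add_left 1 (p a)) ha
    rw [← hp.offset_of_eq_add_one l hb, h b, h a, hp.offset_of_eq_add_one l' hb]

theorem IsNumbering.offset_increments {M : Type*} [AddCommGroup M] (hp : IsNumbering p) (l : A → ℕ)
    {X : ℕ → M} (h0 : X 0 = 0) (a : A) :
    offset p (fun x => X (offset p l x + l x) - X (offset p l x)) a = X (offset p l a) := by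
  induction hk : p a using Nat.strong_induction_on generalizing a with
  | _ k ih =>
    subst hk
    rcases (hp.one_le a).eq_or_lt with ha | ha
    · rw [hp.offset_of_eq_one _ ha.symm, hp.offset_of_eq_one _ ha.symm, h0]
    · obtain ⟨b, hb⟩ := hp.exists_eq (k := p a - 1) (by omega) (by have := hp.le_card a; omega)
      have hab : p a = p b + 1 := by omega
      rw [hp.offset_of_eq_add_one _ hab, ih (p b) (by omega) b rfl, hp.offset_of_eq_add_one l hab]
      abel

theorem IsNumbering.sum_increments {M : Type*} [AddCommGroup M] [Nonempty A] (hp : IsNumbering p)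
    (l : A → ℕ) {X : ℕ → M} (h0 : X 0 = 0) :
    ∑ x, (X (offset p l x + l x) - X (offset p l x)) = X (∑ x, l x) := by
  obtain ⟨a, ha⟩ := hp.exists_eq Fintype.card_pos le_rfl
  rw [← hp.offset_add_of_eq_card _ ha, hp.offset_increments l h0, ← hp.offset_add_of_eq_card l ha]
  abel

end AddCommMonoid

section Order

variable {M : Type*} [AddCommMonoid M] [PartialOrder M] [IsOrderedAddMonoid M] {p : A → ℕ}
  {l : A → M} {a b : A}

theorem offset_nonneg (hl : ∀ a, 0 ≤ l a) (a : A) : 0 ≤ offset p l a :=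
  Finset.sum_nonneg fun x _ => hl x

theorem IsNumbering.offset_add_le_of_lt (hp : IsNumbering p) (hl : ∀ a, 0 ≤ l a)
    (hab : p a < p b) : offset p l a + l a ≤ offset p l b := by
  rw [hp.offset_add]
  exact Finset.sum_le_sum_of_subset_of_nonneg
    (fun x hx => by simp only [Finset.mem_filter_univ] at hx ⊢; omega) fun x _ _ => hl x

theorem IsNumbering.offset_add_le_sum (hp : IsNumbering p) (hl : ∀ a, 0 ≤ l a) (a : A) :
    offset p l a + l a ≤ ∑ x, l x := by
  rw [hp.offset_add]
  exact Finset.sum_le_sum_of_subset_of_nonneg (Finset.filter_subset _ _) fun x _ _ => hl x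

theorem IsNumbering.eq_of_mem_Ico_offset (hp : IsNumbering p) (hl : ∀ a, 0 ≤ l a) {x : M}
    (ha : x ∈ Set.Ico (offset p l a) (offset p l a + l a))
    (hb : x ∈ Set.Ico (offset p l b) (offset p l b + l b)) : a = b := by
  by_contra hab
  rcases lt_or_gt_of_ne (hp.injective.ne hab) with h | h
  · exact ((hp.offset_add_le_of_lt hl h).trans hb.1).not_gt ha.2
  · exact ((hp.offset_add_le_of_lt hl h).trans ha.1).not_gt hb.2

end Order

theorem IsNumbering.exists_mem_Ico_offset {M : Type*} [AddCommMonoid M] [LinearOrder M] {p : A → ℕ}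
    {l : A → M} {x : M} [Nonempty A] (hp : IsNumbering p) (h0 : 0 ≤ x) (hx : x < ∑ a, l a) :
    ∃ a, x ∈ Set.Ico (offset p l a) (offset p l a + l a) := by
  obtain ⟨a₁, ha₁⟩ := hp.exists_eq le_rfl Fintype.card_pos
  obtain ⟨a, ha, hmax⟩ := Finset.exists_max_image {a | offset p l a ≤ x} p
    ⟨a₁, by simp [hp.offset_of_eq_one l ha₁, h0]⟩
  simp only [Finset.mem_filter_univ] at ha hmax
  refine ⟨a, ha, ?_⟩
  by_contra! hle
  rcases (hp.le_card a).eq_or_lt with hlast | hlt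
  · exact (hp.offset_add_of_eq_card l hlast ▸ hle).not_gt hx
  · obtain ⟨b, hb⟩ := hp.exists_eq (Nat.le_add_left 1 (p a)) hlt
    have := hmax b (hp.offset_of_eq_add_one l hb ▸ hle)
    omega

theorem offset_natCast (p : A → ℕ) (l : A → ℕ) (a : A) :
    offset p (fun x => (l x : ℝ)) a = (offset p l a : ℕ) := by
  simp [offset]

section RauzyMove

variable {p : A → ℕ} {w l : A}

theorem IsNumbering.isNumbering_rauzyMove (hp : IsNumbering p) (hl : p l = Fintype.card A)
    (hwl : w ≠ l) : IsNumbering (rauzyMove p w l) := by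
  have hlt : ∀ x ≠ l, p x < Fintype.card A := fun x hx => hl ▸ hp.lt_of_eq_card hl hx
  have hne : ∀ x ≠ l, rauzyMove p w l x ≠ p w + 1 := fun x hx => by
    rw [rauzyMove, if_neg hx]
    split_ifs <;> omega
  refine ⟨fun x y hxy => ?_, fun x => ?_, fun x => ?_⟩
  · by_cases hx : x = l <;> by_cases hy : y = l
    · rw [hx, hy]
    · exact absurd (hx ▸ hxy : rauzyMove p w l l = _).symm (rauzyMove_loser ▸ hne y hy)
    · exact absurd (hy ▸ hxy : _ = rauzyMove p w l l) (rauzyMove_loser ▸ hne x hx)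
    · have h₁ := (rauzyMove_lt_iff (w := w) (p := p) hx hy).not.1 hxy.not_lt
      have h₂ := (rauzyMove_lt_iff (w := w) (p := p) hy hx).not.1 hxy.not_gt
      exact hp.injective (by omega)
  · have := hp.one_le x
    rw [rauzyMove]
    split_ifs <;> omega
  · have := hp.le_card x
    have := hlt w hwl
    rw [rauzyMove]
    split_ifs with hx
    · omega
    · exact hlt x hx
    · omega

section Lengths

variable {M : Type*} [AddCommMonoid M] {b b' : A → M}

theorem IsNumbering.offset_rauzyMove (hp : IsNumbering p) (hl : p l = Fintype.card A) (hwl : w ≠ l)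
    (hb : ∀ x, x ≠ w → x ≠ l → b' x = b x) (hw : b' w + b' l = b w) {a : A} (ha : a ≠ l) :
    offset (rauzyMove p w l) b' a = offset p b a := by
  classical
  have hlast : ¬ p l < p a := (hp.lt_of_eq_card hl ha).not_gt
  have hsplit : ∀ x ∈ Finset.univ.erase l, (if p x < p a then b x else 0) =
      (if p x < p a then b' x else 0) + if x = w then (if p w < p a then b' l else 0) else 0 := by
    intro x hx
    rcases eq_or_ne x w with rfl | hxw
    · simp only [if_true]
      split_ifs <;> simp [hw]
    · simp [hxw, hb x hxw (Finset.ne_of_mem_erase hx)]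
  have hmove : ∀ x ∈ Finset.univ.erase l,
      (if rauzyMove p w l x < rauzyMove p w l a then b' x else 0)
        = if p x < p a then b' x else 0 := fun x hx => by
    simp only [rauzyMove_lt_iff (Finset.ne_of_mem_erase hx) ha]
  have hlw : w ∈ Finset.univ.erase l := Finset.mem_erase.2 ⟨hwl, Finset.mem_univ w⟩
  rw [offset, offset, Finset.sum_filter, Finset.sum_filter,
    ← Finset.sum_erase_add _ _ (Finset.mem_univ l), ← Finset.sum_erase_add _ _ (Finset.mem_univ l),
    Finset.sum_congr rfl hmove, Finset.sum_congr rfl hsplit, Finset.sum_add_distrib,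
    Finset.sum_ite_eq' _ w, if_pos hlw, if_neg hlast, add_zero]
  simp only [rauzyMove_loser_lt_iff ha]

theorem IsNumbering.offset_rauzyMove_loser (hp : IsNumbering p) (hl : p l = Fintype.card A)
    (hwl : w ≠ l) (hb : ∀ x, x ≠ w → x ≠ l → b' x = b x) :
    offset (rauzyMove p w l) b' l = offset p b w + b' w := by
  have hfilter : ∀ x, rauzyMove p w l x < rauzyMove p w l l ↔
      p x ≤ p w := fun x => by
    rcases eq_or_ne x l with rfl | hx
    · simpa using hp.lt_of_eq_card hl hwl
    · exact rauzyMove_lt_loser_iff hx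
  have hoffset : offset p b w = offset p b' w := Finset.sum_congr rfl fun x hx => by
    rw [Finset.mem_filter_univ] at hx
    refine (hb x (fun h => hx.ne (h ▸ rfl)) fun h => ?_).symm
    exact hx.not_gt (h ▸ hp.lt_of_eq_card hl hwl)
  rw [hoffset, hp.offset_add]
  simp only [offset, hfilter]

end Lengths

end RauzyMove

end Numbering

end IntervalExchange

/-! ### Exchanges given by the graphs of their branches, and their Rauzy steps -/

namespace IntervalExchange

/-- A generalized interval exchange whose branches are given by their graphs: `graph a x y` means
that the branch labelled `a` sends `x` to `y`. Unlike in `GState`, a map and its inverse play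
symmetric roles. -/
@[ext]
structure BranchSystem (A : Type*) where
  pit : A → ℕ
  pib : A → ℕ
  lt : A → ℝ
  lb : A → ℝ
  graph : A → ℝ → ℝ → Prop

namespace BranchSystem

variable {A : Type*}

/-- The inverse exchange. -/
def inverse (s : BranchSystem A) : BranchSystem A where
  pit := s.pib
  pib := s.pit
  lt := s.lb
  lb := s.lt
  graph a x y := s.graph a y x

variable [Fintype A]

/-- Critical point of the branch `a`. -/
def ut (s : BranchSystem A) (a : A) : ℝ := offset s.pit s.lt a

/-- Critical value of the branch `a`. -/
def ub (s : BranchSystem A) (a : A) : ℝ := offset s.pib s.lb a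

/-- Domain of the branch `a`. -/
def topItv (s : BranchSystem A) (a : A) : Set ℝ := Set.Ico (s.ut a) (s.ut a + s.lt a)

/-- Image of the branch `a`. -/
def botItv (s : BranchSystem A) (a : A) : Set ℝ := Set.Ico (s.ub a) (s.ub a + s.lb a)

/-- The branches are increasing bijections between the intervals of two partitions of the same
interval. -/
structure IsExchange (s : BranchSystem A) : Prop where
  pit : IsNumbering s.pit
  pib : IsNumbering s.pib
  lt_pos : ∀ a, 0 < s.lt a
  lb_pos : ∀ a, 0 < s.lb a
  sum_eq : ∑ a, s.lt a = ∑ a, s.lb a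
  mem : ∀ {a x y}, s.graph a x y → x ∈ s.topItv a ∧ y ∈ s.botItv a
  exists_right : ∀ {a x}, x ∈ s.topItv a → ∃ y, s.graph a x y
  exists_left : ∀ {a y}, y ∈ s.botItv a → ∃ x, s.graph a x y
  lt_iff : ∀ {a x y x' y'}, s.graph a x y → s.graph a x' y' → (x < x' ↔ y < y')

/-- The top Rauzy move applies, with winner `w` and loser `l`. -/
structure TopWins (s : BranchSystem A) (w l : A) : Prop where
  pit_winner : s.pit w = Fintype.card A
  pib_loser : s.pib l = Fintype.card A
  ne : w ≠ l
  ut_lt_ub : s.ut w < s.ub l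

/-- Image, under the winning branch, of the point where the top Rauzy move cuts the interval. -/
noncomputable def cut (s : BranchSystem A) (w l : A) : ℝ :=
  Classical.epsilon fun y => s.graph w (s.ub l) y

open Classical in
/-- The top Rauzy move: first return to the interval cut at `s.ub l`. -/
noncomputable def topStep (s : BranchSystem A) (w l : A) : BranchSystem A where
  pit := s.pit
  pib := rauzyMove s.pib w l
  lt := Function.update s.lt w (s.lt w - s.lb l)
  lb := Function.update (Function.update s.lb w (s.cut w l - s.ub w)) l
    (s.ub w + s.lb w - s.cut w l)
  graph a x y :=
    if a = l then ∃ z, s.graph l x z ∧ s.graph w z y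
    else if a = w then s.graph w x y ∧ x < s.ub l else s.graph a x y

/-- One step of Rauzy induction; the Boolean tells whether the top interval wins. -/
noncomputable def step (s : BranchSystem A) : Bool → A → A → BranchSystem A
  | true, w, l => s.topStep w l
  | false, w, l => (s.inverse.topStep w l).inverse

/-- The Rauzy step of the given type, winner and loser applies. -/
def CanStep (s : BranchSystem A) : Bool → A → A → Prop
  | true, w, l => s.TopWins w l
  | false, w, l => s.inverse.TopWins w l

section TopStep

variable (s : BranchSystem A) {a w l : A} {x y : ℝ}

theorem topStep_lt_winner : (s.topStep w l).lt w = s.lt w - s.lb l := by simp [topStep]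

theorem topStep_lt_of_ne (ha : a ≠ w) : (s.topStep w l).lt a = s.lt a := by simp [topStep, ha]

theorem topStep_lb_winner (hwl : w ≠ l) : (s.topStep w l).lb w = s.cut w l - s.ub w := by
  simp [topStep, hwl]

theorem topStep_lb_loser : (s.topStep w l).lb l = s.ub w + s.lb w - s.cut w l := by simp [topStep]

theorem topStep_lb_of_ne (ha : a ≠ w) (hl : a ≠ l) : (s.topStep w l).lb a = s.lb a := by
  simp [topStep, ha, hl]

theorem topStep_graph_loser :
    (s.topStep w l).graph l x y ↔ ∃ z, s.graph l x z ∧ s.graph w z y := by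
  simp [topStep]

theorem topStep_graph_winner (hwl : w ≠ l) :
    (s.topStep w l).graph w x y ↔ s.graph w x y ∧ x < s.ub l := by
  simp [topStep, hwl]

theorem topStep_graph_of_ne (ha : a ≠ w) (hl : a ≠ l) :
    (s.topStep w l).graph a x y ↔ s.graph a x y := by
  simp [topStep, ha, hl]

end TopStep

variable {s : BranchSystem A} {a b w l : A} {x y x' y' : ℝ}

namespace IsExchange

theorem inverse (h : s.IsExchange) : s.inverse.IsExchange where
  pit := h.pib
  pib := h.pit
  lt_pos := h.lb_pos
  lb_pos := h.lt_pos
  sum_eq := h.sum_eq.symm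
  mem r := (h.mem r).symm
  exists_right := h.exists_left
  exists_left := h.exists_right
  lt_iff r r' := (h.lt_iff r r').symm

theorem le_iff (h : s.IsExchange) (r : s.graph a x y) (r' : s.graph a x' y') :
    x ≤ x' ↔ y ≤ y' := by
  rw [← not_lt, ← not_lt, h.lt_iff r' r]

theorem eq_iff (h : s.IsExchange) (r : s.graph a x y) (r' : s.graph a x' y') :
    x = x' ↔ y = y' := by
  rw [le_antisymm_iff, le_antisymm_iff, h.le_iff r r', h.le_iff r' r]

theorem eq_of_mem_topItv (h : s.IsExchange) (ha : x ∈ s.topItv a) (hb : x ∈ s.topItv b) : a = b :=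
  h.pit.eq_of_mem_Ico_offset (fun a => (h.lt_pos a).le) ha hb

theorem graph_ut_ub (h : s.IsExchange) (a : A) : s.graph a (s.ut a) (s.ub a) := by
  obtain ⟨y, hy⟩ := h.exists_right (a := a) ⟨le_rfl, lt_add_of_pos_right _ (h.lt_pos a)⟩
  obtain ⟨x, hx⟩ := h.exists_left (a := a) ⟨le_rfl, lt_add_of_pos_right _ (h.lb_pos a)⟩
  rwa [((h.le_iff hy hx).1 (h.mem hx).1.1).antisymm (h.mem hy).2.1] at hy

end IsExchange

namespace TopWins

theorem ut_add_lt (c : s.TopWins w l) (h : s.IsExchange) : s.ut w + s.lt w = ∑ a, s.lt a :=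
  h.pit.offset_add_of_eq_card _ c.pit_winner

theorem ub_add_lb (c : s.TopWins w l) (h : s.IsExchange) : s.ub l + s.lb l = ∑ a, s.lt a := by
  rw [h.sum_eq]
  exact h.pib.offset_add_of_eq_card _ c.pib_loser

theorem graph_cut (c : s.TopWins w l) (h : s.IsExchange) : s.graph w (s.ub l) (s.cut w l) :=
  Classical.epsilon_spec (h.exists_right ⟨c.ut_lt_ub.le, by
    linarith [c.ut_add_lt h, c.ub_add_lb h, h.lb_pos l]⟩)

theorem ub_lt_cut (c : s.TopWins w l) (h : s.IsExchange) : s.ub w < s.cut w l :=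
  (h.lt_iff (h.graph_ut_ub w) (c.graph_cut h)).1 c.ut_lt_ub

theorem cut_lt (c : s.TopWins w l) (h : s.IsExchange) : s.cut w l < s.ub w + s.lb w :=
  (h.mem (c.graph_cut h)).2.2

theorem topStep_ub (c : s.TopWins w l) (h : s.IsExchange) (ha : a ≠ l) :
    (s.topStep w l).ub a = s.ub a :=
  h.pib.offset_rauzyMove c.pib_loser c.ne (fun _ => s.topStep_lb_of_ne)
    (by rw [s.topStep_lb_winner c.ne, topStep_lb_loser]; ring) ha

theorem topStep_ub_loser (c : s.TopWins w l) (h : s.IsExchange) :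
    (s.topStep w l).ub l = s.cut w l := by
  refine (h.pib.offset_rauzyMove_loser c.pib_loser c.ne
    (b := s.lb) (fun _ => s.topStep_lb_of_ne)).trans ?_
  rw [s.topStep_lb_winner c.ne, ← ub]
  ring

theorem topStep_ut (c : s.TopWins w l) (h : s.IsExchange) (a : A) :
    (s.topStep w l).ut a = s.ut a :=
  Finset.sum_congr rfl fun _ hx => s.topStep_lt_of_ne fun hxw =>
    (h.pit.le_card a).not_gt (c.pit_winner ▸ hxw ▸ (Finset.mem_filter.1 hx).2)

theorem topStep_sum_lt (c : s.TopWins w l) (h : s.IsExchange) :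
    ∑ a, (s.topStep w l).lt a = s.ub l := by
  have hlast : (s.topStep w l).ut w + (s.topStep w l).lt w = ∑ a, (s.topStep w l).lt a :=
    h.pit.offset_add_of_eq_card _ c.pit_winner
  rw [← hlast, c.topStep_ut h, topStep_lt_winner]
  linarith [c.ut_add_lt h, c.ub_add_lb h]

theorem topStep_sum_lb (c : s.TopWins w l) (h : s.IsExchange) :
    ∑ a, (s.topStep w l).lb a = s.ub l := by
  classical
  have hsum : ∑ a, (s.topStep w l).lb a = ∑ a, s.lb a - s.lb l := by
    rw [← Finset.sum_erase_add _ _ (Finset.mem_univ l),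
      ← Finset.sum_erase_add _ _ (Finset.mem_univ l),
      ← Finset.sum_erase_add _ _ (Finset.mem_erase.2 ⟨c.ne, Finset.mem_univ w⟩),
      ← Finset.sum_erase_add _ s.lb (Finset.mem_erase.2 ⟨c.ne, Finset.mem_univ w⟩),
      Finset.sum_congr rfl fun x hx => s.topStep_lb_of_ne (w := w) (l := l)
        (Finset.ne_of_mem_erase hx) (Finset.ne_of_mem_erase (Finset.mem_of_mem_erase hx)),
      s.topStep_lb_winner c.ne, topStep_lb_loser]
    ring
  linarith [h.sum_eq, c.ub_add_lb h]

theorem topStep_lt_pos (c : s.TopWins w l) (h : s.IsExchange) (a : A) :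
    0 < (s.topStep w l).lt a := by
  rcases eq_or_ne a w with rfl | ha
  · rw [topStep_lt_winner]
    linarith [c.ut_add_lt h, c.ub_add_lb h, c.ut_lt_ub]
  · exact s.topStep_lt_of_ne ha ▸ h.lt_pos a

theorem topStep_lb_pos (c : s.TopWins w l) (h : s.IsExchange) (a : A) :
    0 < (s.topStep w l).lb a := by
  rcases eq_or_ne a w with rfl | ha
  · exact s.topStep_lb_winner c.ne ▸ sub_pos.2 (c.ub_lt_cut h)
  rcases eq_or_ne a l with rfl | hl
  · exact s.topStep_lb_loser ▸ sub_pos.2 (c.cut_lt h)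
  · exact s.topStep_lb_of_ne ha hl ▸ h.lb_pos a

theorem mem_of_topStep_graph (c : s.TopWins w l) (h : s.IsExchange)
    (r : (s.topStep w l).graph a x y) :
    x ∈ (s.topStep w l).topItv a ∧ y ∈ (s.topStep w l).botItv a := by
  rw [topItv, botItv, c.topStep_ut h]
  rcases eq_or_ne a l with rfl | hl
  · obtain ⟨z, hxz, hzy⟩ := s.topStep_graph_loser.1 r
    rw [c.topStep_ub_loser h, s.topStep_lt_of_ne c.ne.symm, topStep_lb_loser, add_sub_cancel]
    exact ⟨(h.mem hxz).1, (h.le_iff (c.graph_cut h) hzy).1 (h.mem hxz).2.1, (h.mem hzy).2.2⟩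
  rw [c.topStep_ub h hl]
  rcases eq_or_ne a w with rfl | ha
  · obtain ⟨hxy, hx⟩ := (s.topStep_graph_winner c.ne).1 r
    rw [topStep_lt_winner, s.topStep_lb_winner c.ne, add_sub_cancel]
    exact ⟨⟨(h.mem hxy).1.1, by linarith [c.ut_add_lt h, c.ub_add_lb h]⟩,
      (h.mem hxy).2.1, (h.lt_iff hxy (c.graph_cut h)).1 hx⟩
  · rw [s.topStep_lt_of_ne ha, s.topStep_lb_of_ne ha hl]
    exact h.mem ((s.topStep_graph_of_ne ha hl).1 r)

theorem exists_right_topStep (c : s.TopWins w l) (h : s.IsExchange)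
    (hx : x ∈ (s.topStep w l).topItv a) : ∃ y, (s.topStep w l).graph a x y := by
  rw [topItv, c.topStep_ut h] at hx
  rcases eq_or_ne a l with rfl | hl
  · rw [s.topStep_lt_of_ne c.ne.symm] at hx
    obtain ⟨z, hxz⟩ := h.exists_right hx
    obtain ⟨y, hzy⟩ := h.exists_right (a := w) (x := z) ⟨c.ut_lt_ub.le.trans (h.mem hxz).2.1, by
      linarith [(h.mem hxz).2.2, c.ut_add_lt h, c.ub_add_lb h]⟩
    exact ⟨y, s.topStep_graph_loser.2 ⟨z, hxz, hzy⟩⟩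
  rcases eq_or_ne a w with rfl | ha
  · rw [topStep_lt_winner] at hx
    obtain ⟨y, hxy⟩ := h.exists_right (a := a) (x := x) ⟨hx.1, by linarith [hx.2, h.lb_pos l]⟩
    exact ⟨y, (s.topStep_graph_winner c.ne).2
      ⟨hxy, by linarith [hx.2, c.ut_add_lt h, c.ub_add_lb h]⟩⟩
  · rw [s.topStep_lt_of_ne ha] at hx
    exact (h.exists_right hx).imp fun y => (s.topStep_graph_of_ne ha hl).2

theorem exists_left_topStep (c : s.TopWins w l) (h : s.IsExchange)
    (hy : y ∈ (s.topStep w l).botItv a) : ∃ x, (s.topStep w l).graph a x y := by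
  rw [botItv] at hy
  rcases eq_or_ne a l with rfl | hl
  · rw [c.topStep_ub_loser h, topStep_lb_loser, add_sub_cancel] at hy
    obtain ⟨z, hzy⟩ := h.exists_left (a := w) (y := y) ⟨(c.ub_lt_cut h).le.trans hy.1, hy.2⟩
    obtain ⟨x, hxz⟩ := h.exists_left (a := a) (y := z)
      ⟨(h.le_iff (c.graph_cut h) hzy).2 hy.1, by
        linarith [(h.mem hzy).1.2, c.ut_add_lt h, c.ub_add_lb h]⟩
    exact ⟨x, s.topStep_graph_loser.2 ⟨z, hxz, hzy⟩⟩
  rw [c.topStep_ub h hl] at hy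
  rcases eq_or_ne a w with rfl | ha
  · rw [s.topStep_lb_winner c.ne, add_sub_cancel] at hy
    obtain ⟨x, hxy⟩ := h.exists_left (a := a) (y := y) ⟨hy.1, hy.2.trans (c.cut_lt h)⟩
    exact ⟨x, (s.topStep_graph_winner c.ne).2 ⟨hxy, (h.lt_iff hxy (c.graph_cut h)).2 hy.2⟩⟩
  · rw [s.topStep_lb_of_ne ha hl] at hy
    exact (h.exists_left hy).imp fun x => (s.topStep_graph_of_ne ha hl).2

theorem topStep_lt_iff (c : s.TopWins w l) (h : s.IsExchange) (r : (s.topStep w l).graph a x y)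
    (r' : (s.topStep w l).graph a x' y') : x < x' ↔ y < y' := by
  rcases eq_or_ne a l with rfl | hl
  · obtain ⟨z, hxz, hzy⟩ := s.topStep_graph_loser.1 r
    obtain ⟨z', hxz', hzy'⟩ := s.topStep_graph_loser.1 r'
    rw [h.lt_iff hxz hxz', h.lt_iff hzy hzy']
  rcases eq_or_ne a w with rfl | ha
  · rw [topStep_graph_winner _ c.ne] at r r'
    exact h.lt_iff r.1 r'.1
  · rw [topStep_graph_of_ne _ ha hl] at r r'
    exact h.lt_iff r r'

theorem isExchange_topStep (c : s.TopWins w l) (h : s.IsExchange) :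
    (s.topStep w l).IsExchange where
  pit := h.pit
  pib := h.pib.isNumbering_rauzyMove c.pib_loser c.ne
  lt_pos := c.topStep_lt_pos h
  lb_pos := c.topStep_lb_pos h
  sum_eq := (c.topStep_sum_lt h).trans (c.topStep_sum_lb h).symm
  mem := c.mem_of_topStep_graph h
  exists_right := c.exists_right_topStep h
  exists_left := c.exists_left_topStep h
  lt_iff := c.topStep_lt_iff h

theorem topStep_graph_cases (c : s.TopWins w l) (h : s.IsExchange)
    (r : (s.topStep w l).graph a x y) :
    (s.graph a x y ∧ x < s.ub l ∧ y < s.ub l) ∨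
      ∃ z, s.ub l ≤ z ∧ s.graph l x z ∧ s.graph w z y := by
  rcases eq_or_ne a l with rfl | hl
  · obtain ⟨z, hxz, hzy⟩ := s.topStep_graph_loser.1 r
    exact Or.inr ⟨z, (h.mem hxz).2.1, hxz, hzy⟩
  left
  have lt_loser : ∀ {y}, y ∈ s.botItv a → y < s.ub l := fun hy => hy.2.trans_le
    (h.pib.offset_add_le_of_lt (fun a => (h.lb_pos a).le) (h.pib.lt_of_eq_card c.pib_loser hl))
  rcases eq_or_ne a w with rfl | ha
  · obtain ⟨hxy, hx⟩ := (s.topStep_graph_winner c.ne).1 r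
    exact ⟨hxy, hx, lt_loser (h.mem hxy).2⟩
  · have hxy := (s.topStep_graph_of_ne ha hl).1 r
    have : s.ut a + s.lt a ≤ s.ut w := h.pit.offset_add_le_of_lt (fun a => (h.lt_pos a).le)
      (h.pit.lt_of_eq_card c.pit_winner ha)
    exact ⟨hxy, by linarith [(h.mem hxy).1.2, c.ut_lt_ub], lt_loser (h.mem hxy).2⟩

end TopWins

theorem IsExchange.step (h : s.IsExchange) {b : Bool} (c : s.CanStep b w l) :
    (s.step b w l).IsExchange := by
  cases b
  · exact (TopWins.isExchange_topStep c h.inverse).inverse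
  · exact TopWins.isExchange_topStep c h

end BranchSystem

end IntervalExchange

/-! ### Exchanges given by maps -/

namespace IntervalExchange

namespace BranchSystem

variable {A : Type*} [Fintype A]

/-- The branch system of a `GState`. -/
def ofGState (g : GState A) : BranchSystem A where
  pit := g.pit
  pib := g.pib
  lt := g.lt
  lb := g.lb
  graph a x y := x ∈ g.Itv a ∧ y = g.f x

/-- The map whose branches are those of `s`; its values outside the domains of the branches are
arbitrary. -/
noncomputable def toGState {A : Type*} (s : BranchSystem A) : GState A where
  pit := s.pit
  pib := s.pib
  lt := s.lt
  lb := s.lb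
  f x := Classical.epsilon fun y => ∃ a, s.graph a x y

theorem isExchange_ofGState {g : GState A} (h : g.IsGIET) : (ofGState g).IsExchange := by
  obtain ⟨hpit, hpib, hlt, hlb, hsum, hbranch⟩ := h
  exact {
    pit := isNumbering_iff_bijOn.2 hpit
    pib := isNumbering_iff_bijOn.2 hpib
    lt_pos := hlt
    lb_pos := hlb
    sum_eq := hsum
    mem := by
      rintro a x y ⟨hx, rfl⟩
      exact ⟨hx, (hbranch a).1.mapsTo hx⟩
    exists_right := fun hx => ⟨_, hx, rfl⟩
    exists_left := fun hy => ((hbranch _).1.surjOn hy).imp fun _ hx => ⟨hx.1, hx.2.symm⟩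
    lt_iff := by
      rintro a x y x' y' ⟨hx, rfl⟩ ⟨hx', rfl⟩
      exact ((hbranch a).2.1.lt_iff_lt hx hx').symm }

theorem isGIET_of_isExchange {g : GState A} (h : (ofGState g).IsExchange) : g.IsGIET := by
  refine ⟨isNumbering_iff_bijOn.1 h.pit, isNumbering_iff_bijOn.1 h.pib, h.lt_pos, h.lb_pos,
    h.sum_eq, fun a => ?_⟩
  have graph_f : ∀ x ∈ g.Itv a, (ofGState g).graph a x (g.f x) := fun x hx => ⟨hx, rfl⟩
  have hmono : StrictMonoOn g.f (g.Itv a) := fun x hx x' hx' hlt =>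
    (h.lt_iff (graph_f x hx) (graph_f x' hx')).1 hlt
  have hbij : Set.BijOn g.f (g.Itv a) (g.Ibv a) :=
    ⟨fun x hx => (h.mem (graph_f x hx)).2, hmono.injOn,
      fun y hy => (h.exists_left hy).imp fun _ hx => ⟨hx.1, hx.2.symm⟩⟩
  have hdom : (g.Itv a).OrdConnected := Set.ordConnected_Ico
  have himage : (g.f '' g.Itv a).OrdConnected := by
    rw [hbij.image_eq]
    exact Set.ordConnected_Ico
  refine ⟨hbij, hmono, ?_⟩
  rw [continuousOn_iff_continuous_domRestrict]
  exact continuous_subtype_val.comp (hmono.orderIso g.f (g.Itv a)).continuous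

theorem ofGState_toGState {s : BranchSystem A} (h : s.IsExchange) :
    ofGState s.toGState = s := by
  have f_eq : ∀ {a x y}, s.graph a x y → s.toGState.f x = y := by
    intro a x y r
    obtain ⟨b, hb⟩ := Classical.epsilon_spec (p := fun y => ∃ a, s.graph a x y) ⟨y, a, r⟩
    obtain rfl := h.eq_of_mem_topItv (h.mem r).1 (h.mem hb).1
    exact (h.eq_iff hb r).1 rfl
  refine BranchSystem.ext rfl rfl rfl rfl ?_
  ext a x y
  constructor
  · rintro ⟨hx, rfl⟩
    obtain ⟨y, hy⟩ := h.exists_right hx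
    rwa [f_eq hy]
  · intro r
    exact ⟨(h.mem r).1, (f_eq r).symm⟩

namespace TopWins

variable {s : BranchSystem A} {w l x : A}

theorem pib_topStep_of_le (c : s.TopWins w l) (h : s.IsExchange) (hx : s.pib x ≤ s.pib w) :
    (s.topStep w l).pib x = s.pib x :=
  rauzyMove_of_le (by
    rintro rfl
    exact (h.pib.lt_of_eq_card c.pib_loser c.ne).not_ge hx) hx

theorem pib_topStep_of_lt (hxl : x ≠ l) (hx : s.pib w < s.pib x) :
    (s.topStep w l).pib x = s.pib x + 1 :=
  rauzyMove_of_lt hxl hx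

end TopWins

theorem firstReturn_of_step {g g' : GState A} {b : Bool} {w l : A}
    (h : (ofGState g).IsExchange) (c : (ofGState g).CanStep b w l)
    (e : ofGState g' = (ofGState g).step b w l) {x : ℝ} (hx : x ∈ Set.Ico 0 g'.len) :
    g'.f x = if g'.len ≤ g.f x then g.f (g.f x) else g.f x := by
  have : Nonempty A := ⟨w⟩
  have h' : (ofGState g').IsExchange := e ▸ h.step c
  obtain ⟨a, ha⟩ := h'.pit.exists_mem_Ico_offset hx.1 hx.2
  obtain ⟨y, hy⟩ := h'.exists_right ha
  rw [← hy.2]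
  rw [e] at hy
  have hlen : g'.len = ∑ a, (ofGState g').lt a := rfl
  cases b
  · have hcut : g'.len = (ofGState g).ut l := by
      rw [hlen, h'.sum_eq, e]
      exact TopWins.topStep_sum_lt c h.inverse
    rw [hcut]
    rcases TopWins.topStep_graph_cases c h.inverse hy with
      ⟨hxy, (hy : y < (ofGState g).ut l), -⟩ | ⟨z, (hz : (ofGState g).ut l ≤ z), hzy, hxz⟩
    · rw [← hxy.2, if_neg hy.not_ge]
    · rw [← hxz.2, ← hzy.2, if_pos hz]
  · have hcut : g'.len = (ofGState g).ub l := by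
      rw [hlen, e]
      exact TopWins.topStep_sum_lt c h
    rw [hcut]
    rcases TopWins.topStep_graph_cases c h hy with ⟨hxy, -, hy⟩ | ⟨z, hz, hxz, hzy⟩
    · rw [← hxy.2, if_neg hy.not_ge]
    · rw [← hxz.2, ← hzy.2, if_pos hz]

theorem rauzyStep_of_step {g g' : GState A} {b : Bool} {w l : A}
    (h : (ofGState g).IsExchange) (c : (ofGState g).CanStep b w l)
    (e : ofGState g' = (ofGState g).step b w l) : g.RauzyStep g' w l := by
  have h' : (ofGState g').IsExchange := e ▸ h.step c
  refine ⟨isGIET_of_isExchange h', fun x => firstReturn_of_step h c e, ?_⟩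
  have hlen : g'.len = ∑ a, (ofGState g').lt a := rfl
  cases b
  · replace c : (ofGState g).inverse.TopWins w l := c
    have hpit : g'.pit = ((ofGState g).inverse.topStep w l).pib := congrArg pit e
    have hlb : g'.lb = ((ofGState g).inverse.topStep w l).lt := congrArg lb e
    refine ⟨l, w, c.pib_loser, c.pit_winner, Or.inr ⟨c.ut_lt_ub, rfl, rfl, ?_, congrArg pib e,
      fun x hx => hpit ▸ c.pib_topStep_of_le h.inverse hx, hpit ▸ rauzyMove_loser,
      fun x hxl hx => hpit ▸ TopWins.pib_topStep_of_lt hxl hx,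
      fun x hx => hlb ▸ topStep_lt_of_ne _ hx, hlb ▸ topStep_lt_winner _⟩⟩
    rw [hlen, h'.sum_eq, e]
    exact c.topStep_sum_lt h.inverse
  · replace c : (ofGState g).TopWins w l := c
    have hpib : g'.pib = ((ofGState g).topStep w l).pib := congrArg pib e
    have hlt : g'.lt = ((ofGState g).topStep w l).lt := congrArg lt e
    refine ⟨w, l, c.pit_winner, c.pib_loser, Or.inl ⟨c.ut_lt_ub, rfl, rfl, ?_, congrArg pit e,
      fun x hx => hpib ▸ c.pib_topStep_of_le h hx, hpib ▸ rauzyMove_loser,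
      fun x hxl hx => hpib ▸ TopWins.pib_topStep_of_lt hxl hx,
      fun x hx => hlt ▸ topStep_lt_of_ne _ hx, hlt ▸ topStep_lt_winner _⟩⟩
    rw [hlen, e]
    exact c.topStep_sum_lt h

end BranchSystem

end IntervalExchange

/-! ### Conjugate exchanges follow the same Rauzy paths -/

namespace IntervalExchange

namespace BranchSystem

variable {A : Type*} [Fintype A] {s s' : BranchSystem A} {φ : ℝ → ℝ} {X : Set ℝ} {w l : A}

/-- `φ` increasingly conjugates `s` to `s'` on a set `X` that is invariant under `s` and contains
all critical points and critical values. Rauzy induction only compares and maps such points, hence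
`s'` follows every Rauzy path that `s` does. -/
structure IsConjOn (s s' : BranchSystem A) (φ : ℝ → ℝ) (X : Set ℝ) : Prop where
  pit_eq : s'.pit = s.pit
  pib_eq : s'.pib = s.pib
  ut_mem : ∀ a, s.ut a ∈ X
  ub_mem : ∀ a, s.ub a ∈ X
  map_ut : ∀ a, φ (s.ut a) = s'.ut a
  map_ub : ∀ a, φ (s.ub a) = s'.ub a
  mem_iff : ∀ {a x y}, s.graph a x y → (x ∈ X ↔ y ∈ X)
  map_graph : ∀ {a x y}, s.graph a x y → x ∈ X → s'.graph a (φ x) (φ y)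
  strictMonoOn : StrictMonoOn φ X

namespace IsConjOn

theorem inverse (h : IsConjOn s s' φ X) : IsConjOn s.inverse s'.inverse φ X where
  pit_eq := h.pib_eq
  pib_eq := h.pit_eq
  ut_mem := h.ub_mem
  ub_mem := h.ut_mem
  map_ut := h.map_ub
  map_ub := h.map_ut
  mem_iff r := (h.mem_iff r).symm
  map_graph r hx := h.map_graph r ((h.mem_iff r).2 hx)
  strictMonoOn := h.strictMonoOn

theorem topWins (h : IsConjOn s s' φ X) (c : s.TopWins w l) : s'.TopWins w l where
  pit_winner := h.pit_eq ▸ c.pit_winner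
  pib_loser := h.pib_eq ▸ c.pib_loser
  ne := c.ne
  ut_lt_ub := by
    rw [← h.map_ut, ← h.map_ub]
    exact h.strictMonoOn (h.ut_mem w) (h.ub_mem l) c.ut_lt_ub

theorem cut_mem (h : IsConjOn s s' φ X) (hs : s.IsExchange) (c : s.TopWins w l) :
    s.cut w l ∈ X :=
  (h.mem_iff (c.graph_cut hs)).1 (h.ub_mem l)

theorem map_cut (h : IsConjOn s s' φ X) (hs : s.IsExchange) (hs' : s'.IsExchange)
    (c : s.TopWins w l) : φ (s.cut w l) = s'.cut w l := by
  have hcut := h.map_graph (c.graph_cut hs) (h.ub_mem l)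
  rw [h.map_ub] at hcut
  exact (hs'.eq_iff hcut ((h.topWins c).graph_cut hs')).1 rfl

theorem mem_iff_topStep (h : IsConjOn s s' φ X) (c : s.TopWins w l) {a : A} {x y : ℝ}
    (r : (s.topStep w l).graph a x y) : x ∈ X ↔ y ∈ X := by
  rcases eq_or_ne a l with rfl | hl
  · obtain ⟨z, hxz, hzy⟩ := s.topStep_graph_loser.1 r
    rw [h.mem_iff hxz, h.mem_iff hzy]
  rcases eq_or_ne a w with rfl | ha
  · exact h.mem_iff ((s.topStep_graph_winner c.ne).1 r).1
  · exact h.mem_iff ((s.topStep_graph_of_ne ha hl).1 r)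

theorem map_topStep_graph (h : IsConjOn s s' φ X) (c : s.TopWins w l) {a : A} {x y : ℝ}
    (r : (s.topStep w l).graph a x y) (hx : x ∈ X) : (s'.topStep w l).graph a (φ x) (φ y) := by
  rcases eq_or_ne a l with rfl | hl
  · obtain ⟨z, hxz, hzy⟩ := s.topStep_graph_loser.1 r
    exact s'.topStep_graph_loser.2
      ⟨φ z, h.map_graph hxz hx, h.map_graph hzy ((h.mem_iff hxz).1 hx)⟩
  rcases eq_or_ne a w with rfl | ha
  · obtain ⟨hxy, hlt⟩ := (s.topStep_graph_winner c.ne).1 r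
    refine (s'.topStep_graph_winner c.ne).2 ⟨h.map_graph hxy hx, ?_⟩
    rw [← h.map_ub]
    exact h.strictMonoOn hx (h.ub_mem l) hlt
  · exact (s'.topStep_graph_of_ne ha hl).2 (h.map_graph ((s.topStep_graph_of_ne ha hl).1 r) hx)

theorem topStep (h : IsConjOn s s' φ X) (hs : s.IsExchange) (hs' : s'.IsExchange)
    (c : s.TopWins w l) : IsConjOn (s.topStep w l) (s'.topStep w l) φ X where
  pit_eq := h.pit_eq
  pib_eq := congrArg (rauzyMove · w l) h.pib_eq
  ut_mem a := c.topStep_ut hs a ▸ h.ut_mem a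
  ub_mem a := by
    rcases eq_or_ne a l with rfl | ha
    · exact c.topStep_ub_loser hs ▸ h.cut_mem hs c
    · exact c.topStep_ub hs ha ▸ h.ub_mem a
  map_ut a := by rw [c.topStep_ut hs, (h.topWins c).topStep_ut hs', h.map_ut]
  map_ub a := by
    rcases eq_or_ne a l with rfl | ha
    · rw [c.topStep_ub_loser hs, (h.topWins c).topStep_ub_loser hs', h.map_cut hs hs' c]
    · rw [c.topStep_ub hs ha, (h.topWins c).topStep_ub hs' ha, h.map_ub]
  mem_iff := h.mem_iff_topStep c
  map_graph := h.map_topStep_graph c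
  strictMonoOn := h.strictMonoOn

theorem canStep (h : IsConjOn s s' φ X) {b : Bool} (c : s.CanStep b w l) : s'.CanStep b w l := by
  cases b
  · exact h.inverse.topWins c
  · exact h.topWins c

theorem step (h : IsConjOn s s' φ X) (hs : s.IsExchange) (hs' : s'.IsExchange) {b : Bool}
    (c : s.CanStep b w l) : IsConjOn (s.step b w l) (s'.step b w l) φ X := by
  cases b
  · exact (h.inverse.topStep hs.inverse hs'.inverse c).inverse
  · exact h.topStep hs hs' c

end IsConjOn

section Path

variable {b : ℕ → Bool} {w l : ℕ → A}

/-- Starting at time `k` from `s`, the Rauzy path with types `b`, winners `w` and losers `l` can be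
followed for `n` steps. -/
def Follows (b : ℕ → Bool) (w l : ℕ → A) : ℕ → BranchSystem A → ℕ → Prop
  | _, _, 0 => True
  | k, s, n + 1 =>
    s.CanStep (b k) (w k) (l k) ∧ Follows b w l (k + 1) (s.step (b k) (w k) (l k)) n

/-- The successive renormalizations of `s` along the Rauzy path with types `b`, winners `w` and
losers `l`. -/
noncomputable def run (b : ℕ → Bool) (w l : ℕ → A) (s : BranchSystem A) : ℕ → BranchSystem A
  | 0 => s
  | k + 1 => (run b w l s k).step (b k) (w k) (l k)

theorem IsConjOn.follows {n : ℕ} : ∀ {k : ℕ} {s s' : BranchSystem A}, IsConjOn s s' φ X →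
    s.IsExchange → s'.IsExchange → Follows b w l k s n → Follows b w l k s' n := by
  induction n with
  | zero => intros; trivial
  | succ n ih =>
    rintro k s s' h hs hs' ⟨c, hf⟩
    exact ⟨h.canStep c, ih (h.step hs hs' c) (hs.step c) (hs'.step (h.canStep c)) hf⟩

theorem Follows.canStep_run {n : ℕ} : ∀ {k : ℕ}, Follows b w l k (run b w l s k) n →
    ∀ j, k ≤ j → j < k + n → (run b w l s j).CanStep (b j) (w j) (l j) := by
  induction n with
  | zero => intros; omega
  | succ n ih =>
    rintro k ⟨c, hf⟩ j hkj hjn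
    rcases hkj.eq_or_lt with rfl | hkj
    · exact c
    · exact ih (k := k + 1) hf j hkj (by omega)

theorem IsExchange.run (h : s.IsExchange) {k : ℕ}
    (c : ∀ j < k, (run b w l s j).CanStep (b j) (w j) (l j)) : (run b w l s k).IsExchange := by
  induction k with
  | zero => exact h
  | succ k ih => exact (ih fun j hj => c j (by omega)).step (c k (by omega))

end Path

end BranchSystem

end IntervalExchange

/-! ### Combinatorial data and interval exchanges by translations -/

namespace IntervalExchange

section Datum

variable {A : Type*}

/-- A combinatorial datum `π = (π_t, π_b)`. -/
abbrev Datum (A : Type*) := (A → ℕ) × (A → ℕ)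

variable [Fintype A]

/-- Both rows of the datum number the alphabet by `1, …, card A`. -/
structure IsDatum (P : Datum A) : Prop where
  top : IsNumbering P.1
  bot : IsNumbering P.2

/-- The arrow `P → Q` of top type, with winner `w` and loser `l`, of the Rauzy diagram. -/
structure IsTopArrow (P Q : Datum A) (w l : A) : Prop where
  ne : w ≠ l
  winner_last : P.1 w = Fintype.card A
  loser_last : P.2 l = Fintype.card A
  eq : Q = (P.1, rauzyMove P.2 w l)

/-- The arrow `P → Q` of the Rauzy diagram with winner `w` and loser `l`; the Boolean tells whether
its type is top. -/
def IsArrow : Bool → Datum A → Datum A → A → A → Prop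
  | true, P, Q, w, l => IsTopArrow P Q w l
  | false, P, Q, w, l => IsTopArrow P.swap Q.swap w l

variable {P Q : Datum A} {w l : A}

theorem IsDatum.swap (hP : IsDatum P) : IsDatum P.swap := ⟨hP.bot, hP.top⟩

theorem IsTopArrow.isDatum (h : IsTopArrow P Q w l) (hP : IsDatum P) : IsDatum Q :=
  h.eq ▸ ⟨hP.top, hP.bot.isNumbering_rauzyMove h.loser_last h.ne⟩

theorem IsArrow.isDatum {b : Bool} (h : IsArrow b P Q w l) (hP : IsDatum P) : IsDatum Q := by
  cases b
  · exact (IsTopArrow.isDatum h hP.swap).swap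
  · exact IsTopArrow.isDatum h hP

end Datum

namespace BranchSystem

variable {A : Type*} [Fintype A]

/-- Every branch is a translation. -/
def IsTranslation (s : BranchSystem A) : Prop :=
  ∃ δ : A → ℝ, ∀ {a x y}, s.graph a x y → y = x + δ a

/-- The interval exchange transformation with combinatorial datum `P` and lengths `lam`. -/
def iet (P : Datum A) (lam : A → ℝ) : BranchSystem A where
  pit := P.1
  pib := P.2
  lt := lam
  lb := lam
  graph a x y := x ∈ Set.Ico (offset P.1 lam a) (offset P.1 lam a + lam a) ∧
    y = x - offset P.1 lam a + offset P.2 lam a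

variable {s : BranchSystem A} {P Q : Datum A} {lam mu : A → ℝ} {w l : A}

theorem inverse_iet : (iet P lam).inverse = iet P.swap lam := by
  refine BranchSystem.ext rfl rfl rfl rfl ?_
  ext a y x
  simp only [inverse, iet, Prod.swap, Set.mem_Ico]
  constructor <;> rintro ⟨⟨_, _⟩, rfl⟩ <;> exact ⟨⟨by linarith, by linarith⟩, by ring⟩

theorem isExchange_iet (hP : IsDatum P) (hlam : ∀ a, 0 < lam a) : (iet P lam).IsExchange where
  pit := hP.top
  pib := hP.bot
  lt_pos := hlam
  lb_pos := hlam
  sum_eq := rfl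
  mem := by
    rintro a x y ⟨⟨hx, hx'⟩, rfl⟩
    exact ⟨⟨hx, hx'⟩, by simp only [ub, iet]; linarith, by simp only [ub, iet]; linarith⟩
  exists_right hx := ⟨_, hx, rfl⟩
  exists_left := by
    rintro a y ⟨hy, hy'⟩
    simp only [ub, iet] at hy hy'
    exact ⟨y - offset P.2 lam a + offset P.1 lam a, ⟨by linarith, by linarith⟩, by ring⟩
  lt_iff := by
    rintro a x y x' y' ⟨-, rfl⟩ ⟨-, rfl⟩
    constructor <;> intro h <;> linarith

theorem isTranslation_iet : (iet P lam).IsTranslation :=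
  ⟨fun a => offset P.2 lam a - offset P.1 lam a, fun r => by rw [r.2]; ring⟩

namespace IsTranslation

theorem inverse {A : Type*} {s : BranchSystem A} (ht : s.IsTranslation) :
    s.inverse.IsTranslation := by
  obtain ⟨δ, hδ⟩ := ht
  exact ⟨-δ, fun r => by rw [hδ r, Pi.neg_apply]; ring⟩

theorem topStep (ht : s.IsTranslation) (hwl : w ≠ l) : (s.topStep w l).IsTranslation := by
  classical
  obtain ⟨δ, hδ⟩ := ht
  refine ⟨Function.update δ l (δ l + δ w), fun {a x y} r => ?_⟩
  rcases eq_or_ne a l with rfl | hl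
  · obtain ⟨z, hxz, hzy⟩ := s.topStep_graph_loser.1 r
    rw [Function.update_self, hδ hzy, hδ hxz, add_assoc]
  rw [Function.update_of_ne hl]
  rcases eq_or_ne a w with rfl | ha
  · exact hδ ((s.topStep_graph_winner hwl).1 r).1
  · exact hδ ((s.topStep_graph_of_ne ha hl).1 r)

theorem eq_sub_add (ht : s.IsTranslation) (h : s.IsExchange) {a : A} {x y : ℝ}
    (r : s.graph a x y) : y = x - s.ut a + s.ub a := by
  obtain ⟨δ, hδ⟩ := ht
  linarith [hδ r, hδ (h.graph_ut_ub a)]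

theorem lb_le_lt (ht : s.IsTranslation) (h : s.IsExchange) (a : A) : s.lb a ≤ s.lt a := by
  by_contra! hlt
  obtain ⟨x, hx⟩ := h.exists_left (a := a) (y := s.ub a + s.lt a)
    ⟨by linarith [h.lt_pos a], by linarith⟩
  linarith [ht.eq_sub_add h hx, (h.mem hx).1.2]

theorem eq_iet (ht : s.IsTranslation) (h : s.IsExchange) : s = iet (s.pit, s.pib) s.lt := by
  have hlb : s.lb = s.lt := funext fun a =>
    (ht.lb_le_lt h a).antisymm (ht.inverse.lb_le_lt h.inverse a)
  have hub : ∀ a, s.ub a = offset s.pib s.lt a := fun a => by rw [ub, hlb]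
  refine BranchSystem.ext rfl rfl rfl hlb ?_
  ext a x y
  constructor
  · intro r
    exact ⟨(h.mem r).1, hub a ▸ ht.eq_sub_add h r⟩
  · rintro ⟨hx, rfl⟩
    obtain ⟨y, hy⟩ := h.exists_right hx
    have := ht.eq_sub_add h hy
    rw [hub] at this
    exact this ▸ hy

end IsTranslation

end BranchSystem

open BranchSystem

variable {A : Type*} [Fintype A] {P Q : Datum A} {w l : A}

section

variable [DecidableEq A] {mu : A → ℝ}

theorem IsTopArrow.topWins_iet (h : IsTopArrow P Q w l) (hP : IsDatum P) (hmu : ∀ a, 0 < mu a) :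
    (iet P (Function.update mu w (mu w + mu l))).TopWins w l where
  pit_winner := h.winner_last
  pib_loser := h.loser_last
  ne := h.ne
  ut_lt_ub := by
    have hw := hP.top.offset_add_of_eq_card (Function.update mu w (mu w + mu l)) h.winner_last
    have hl := hP.bot.offset_add_of_eq_card (Function.update mu w (mu w + mu l)) h.loser_last
    rw [Function.update_self] at hw
    rw [Function.update_of_ne h.ne.symm] at hl
    simp only [ut, ub, iet]
    linarith [hmu w]

theorem IsTopArrow.topStep_iet (h : IsTopArrow P Q w l) (hP : IsDatum P) (hmu : ∀ a, 0 < mu a) :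
    (iet P (Function.update mu w (mu w + mu l))).topStep w l = iet Q mu := by
  have hlam : ∀ a, 0 < Function.update mu w (mu w + mu l) a :=
    Function.forall_update_iff mu (p := fun _ x => 0 < x) |>.2
      ⟨add_pos (hmu w) (hmu l), fun a _ => hmu a⟩
  have c := h.topWins_iet hP hmu
  rw [(isTranslation_iet.topStep h.ne).eq_iet (c.isExchange_topStep (isExchange_iet hP hlam)), h.eq]
  congr 1
  ext a
  rcases eq_or_ne a w with rfl | ha
  · rw [topStep_lt_winner]
    simp [iet, h.ne.symm]
  · rw [topStep_lt_of_ne _ ha]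
    exact Function.update_of_ne ha _ _

theorem IsArrow.canStep_iet {b : Bool} (h : IsArrow b P Q w l) (hP : IsDatum P)
    (hmu : ∀ a, 0 < mu a) :
    (iet P (Function.update mu w (mu w + mu l))).CanStep b w l := by
  cases b
  · rw [CanStep, inverse_iet]
    exact IsTopArrow.topWins_iet h hP.swap hmu
  · exact IsTopArrow.topWins_iet h hP hmu

theorem IsArrow.step_iet {b : Bool} (h : IsArrow b P Q w l) (hP : IsDatum P)
    (hmu : ∀ a, 0 < mu a) :
    (iet P (Function.update mu w (mu w + mu l))).step b w l = iet Q mu := by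
  cases b
  · rw [step, inverse_iet, IsTopArrow.topStep_iet h hP.swap hmu, inverse_iet, Prod.swap_swap]
  · exact IsTopArrow.topStep_iet h hP hmu

end

end IntervalExchange

/-! ### Transitivity on the natural numbers -/

namespace IntervalExchange

namespace BranchSystem

variable {A : Type*}

/-- The branches and their inverses send natural numbers to natural numbers. -/
def PreservesNat (s : BranchSystem A) : Prop :=
  ∀ ⦃a x y⦄, s.graph a x y → (x ∈ Set.range ((↑) : ℕ → ℝ) ↔ y ∈ Set.range ((↑) : ℕ → ℝ))

/-- Some branch sends the natural number `m` to the natural number `n`. -/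
def NatStep (s : BranchSystem A) (m n : ℕ) : Prop := ∃ a, s.graph a m n

variable {s : BranchSystem A}

theorem PreservesNat.exists_natCast (hs : s.PreservesNat) {a : A} {m : ℕ} {y : ℝ}
    (r : s.graph a m y) : ∃ n : ℕ, s.graph a m n ∧ y = n := by
  obtain ⟨n, rfl⟩ := (hs r).1 ⟨m, rfl⟩
  exact ⟨n, r, rfl⟩

theorem PreservesNat.inverse (hs : s.PreservesNat) : s.inverse.PreservesNat :=
  fun _ _ _ r => (hs r).symm

variable [Fintype A]

/-- The exchange acts transitively on the natural numbers of the interval. -/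
def IsNatTransitive (s : BranchSystem A) : Prop :=
  ∀ m n : ℕ, (m : ℝ) < ∑ a, s.lt a → (n : ℝ) < ∑ a, s.lt a →
    Relation.ReflTransGen s.NatStep m n

theorem IsNatTransitive.inverse (h : s.IsExchange) (ht : s.IsNatTransitive) :
    s.inverse.IsNatTransitive := fun m n hm hn =>
  Relation.ReflTransGen.swap _ _ (ht n m (h.sum_eq ▸ hn) (h.sum_eq ▸ hm))

variable {w l : A}

theorem reflTransGen_natStep_of_topStep (hwl : w ≠ l) (hs : s.PreservesNat) {m n : ℕ}
    (hmn : (s.topStep w l).NatStep m n) : Relation.ReflTransGen s.NatStep m n := by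
  obtain ⟨a, r⟩ := hmn
  rcases eq_or_ne a l with rfl | hl
  · obtain ⟨z, hmz, hzn⟩ := s.topStep_graph_loser.1 r
    obtain ⟨k, hmk, rfl⟩ := hs.exists_natCast hmz
    exact (Relation.ReflTransGen.single ⟨a, hmk⟩).tail ⟨w, hzn⟩
  rcases eq_or_ne a w with rfl | ha
  · exact .single ⟨a, ((s.topStep_graph_winner hwl).1 r).1⟩
  · exact .single ⟨a, (s.topStep_graph_of_ne ha hl).1 r⟩

namespace TopWins

theorem exists_reflTransGen_lt (c : s.TopWins w l) (h : s.IsExchange) (hs : s.PreservesNat)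
    {m : ℕ} (hm : (m : ℝ) < ∑ a, s.lt a) :
    ∃ m' : ℕ, (m' : ℝ) < s.ub l ∧ Relation.ReflTransGen s.NatStep m m' := by
  rcases lt_or_ge (m : ℝ) (s.ub l) with hlt | hge
  · exact ⟨m, hlt, .refl⟩
  obtain ⟨y, r⟩ := h.exists_right (a := w) (x := m)
    ⟨c.ut_lt_ub.le.trans hge, by rwa [c.ut_add_lt h]⟩
  obtain ⟨k, hmk, rfl⟩ := hs.exists_natCast r
  refine ⟨k, (h.mem hmk).2.2.trans_le ?_, .single ⟨w, hmk⟩⟩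
  exact h.pib.offset_add_le_of_lt (fun a => (h.lb_pos a).le) (h.pib.lt_of_eq_card c.pib_loser c.ne)

theorem exists_lt_reflTransGen (c : s.TopWins w l) (h : s.IsExchange) (hs : s.PreservesNat)
    {n : ℕ} (hn : (n : ℝ) < ∑ a, s.lt a) :
    ∃ n' : ℕ, (n' : ℝ) < s.ub l ∧ Relation.ReflTransGen s.NatStep n' n := by
  rcases lt_or_ge (n : ℝ) (s.ub l) with hlt | hge
  · exact ⟨n, hlt, .refl⟩
  obtain ⟨x, r⟩ := h.exists_left (a := l) (y := n) ⟨hge, by rwa [c.ub_add_lb h]⟩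
  obtain ⟨k, rfl⟩ := (hs r).2 ⟨n, rfl⟩
  refine ⟨k, (h.mem r).1.2.trans (lt_of_le_of_lt ?_ c.ut_lt_ub), .single ⟨l, r⟩⟩
  exact h.pit.offset_add_le_of_lt (fun a => (h.lt_pos a).le)
    (h.pit.lt_of_eq_card c.pit_winner c.ne.symm)

theorem isNatTransitive_of_topStep (c : s.TopWins w l) (h : s.IsExchange) (hs : s.PreservesNat)
    (ht : (s.topStep w l).IsNatTransitive) : s.IsNatTransitive := by
  intro m n hm hn
  obtain ⟨m', hm', hmm'⟩ := c.exists_reflTransGen_lt h hs hm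
  obtain ⟨n', hn', hnn'⟩ := c.exists_lt_reflTransGen h hs hn
  have hmid := ht m' n' (by rwa [c.topStep_sum_lt h]) (by rwa [c.topStep_sum_lt h])
  exact hmm'.trans ((Relation.reflTransGen_closed
    (fun _ _ => reflTransGen_natStep_of_topStep c.ne hs) _ _ hmid).trans hnn')

end TopWins

theorem IsNatTransitive.of_step (h : s.IsExchange) (hs : s.PreservesNat) {b : Bool}
    (c : s.CanStep b w l) (ht : (s.step b w l).IsNatTransitive) : s.IsNatTransitive := by
  cases b
  · refine IsNatTransitive.inverse h.inverse
      (TopWins.isNatTransitive_of_topStep c h.inverse hs.inverse ?_)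
    exact IsNatTransitive.inverse (h.step c) ht
  · exact TopWins.isNatTransitive_of_topStep c h hs ht

theorem preservesNat_iet (P : Datum A) (lam : A → ℕ) :
    (iet P fun a => (lam a : ℝ)).PreservesNat := by
  have key (P : Datum A) (a x y) (r : (iet P fun a => (lam a : ℝ)).graph a x y)
      (hx : x ∈ Set.range ((↑) : ℕ → ℝ)) : y ∈ Set.range ((↑) : ℕ → ℝ) := by
    obtain ⟨⟨hm, -⟩, rfl⟩ := r
    obtain ⟨m, rfl⟩ := hx
    rw [offset_natCast] at hm
    exact ⟨m - offset P.1 lam a + offset P.2 lam a, by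
      rw [offset_natCast, offset_natCast, Nat.cast_add, Nat.cast_sub (Nat.cast_le.1 hm)]⟩
  refine fun a x y r => ⟨key P a x y r, key P.swap a y x ?_⟩
  rw [← inverse_iet]
  exact r

end BranchSystem

open BranchSystem

variable {A : Type*} [Fintype A] {p : A → ℕ} {P : Datum A}

theorem IsNumbering.offset_one (hp : IsNumbering p) (a : A) :
    offset p (fun _ => 1) a = p a - 1 := by
  rw [offset, ← Finset.card_eq_sum_ones, ← Nat.card_Ico]
  refine Finset.card_nbij p (fun x hx => ?_) hp.injective.injOn fun k hk => ?_
  · exact Finset.mem_Ico.2 ⟨hp.one_le x, (Finset.mem_filter.1 hx).2⟩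
  · obtain ⟨h1, hka⟩ := Finset.mem_Ico.1 hk
    obtain ⟨x, rfl⟩ := hp.exists_eq h1 (hka.le.trans (hp.le_card a))
    exact ⟨x, by simpa using hka, rfl⟩

theorem isNatTransitive_iet_of_cyclicDatum (hP : IsDatum P) (hc : GState.CyclicDatum P.1 P.2) :
    (iet P fun _ => ((1 : ℕ) : ℝ)).IsNatTransitive := by
  obtain ⟨g, hg, htrans⟩ := hc
  have edge (a : A) : (iet P fun _ => ((1 : ℕ) : ℝ)).NatStep (P.1 a - 1) (P.1 (g a) - 1) := by
    refine ⟨a, ?_⟩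
    simp only [iet, hg, ← hP.top.offset_one, ← hP.bot.offset_one, offset_natCast _ (fun _ => 1)]
    simp
  have orbit (a : A) (k : ℕ) : Relation.ReflTransGen (iet P fun _ => ((1 : ℕ) : ℝ)).NatStep
      (P.1 a - 1) (P.1 (g^[k] a) - 1) := by
    induction k with
    | zero => exact .refl
    | succ k ih => exact ih.tail (Function.iterate_succ_apply' g k a ▸ edge _)
  intro m n hm hn
  simp only [iet, Nat.cast_one, Finset.sum_const, Finset.card_univ, nsmul_eq_mul, mul_one,
    Nat.cast_lt] at hm hn
  obtain ⟨a, ha⟩ := hP.top.exists_eq (Nat.succ_pos m) hm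
  obtain ⟨b, hb⟩ := hP.top.exists_eq (Nat.succ_pos n) hn
  obtain ⟨k, rfl⟩ := htrans a b
  simpa [ha, hb] using orbit a k

end IntervalExchange

/-! ### Integral exchanges following a finite path -/

namespace IntervalExchange

open BranchSystem Relation

variable {A : Type*} {p q : A → ℕ} {w w' l l' : A}

theorem eq_rauzyMove (hle : ∀ x, p x ≤ p w → q x = p x) (hl : q l = p w + 1)
    (hlt : ∀ x, x ≠ l → p w < p x → q x = p x + 1) : q = rauzyMove p w l := by
  ext x
  rcases eq_or_ne x l with rfl | hx
  · rw [rauzyMove_loser, hl]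
  rcases le_or_gt (p x) (p w) with hxw | hxw
  · rw [rauzyMove_of_le hx hxw, hle x hxw]
  · rw [rauzyMove_of_lt hx hxw, hlt x hx hxw]

variable [Fintype A] {P Q R : Datum A} {b b' : Bool}

theorem isTopArrow_of_forall (hw : P.1 w = Fintype.card A) (hl : P.2 l = Fintype.card A)
    (htop : Q.1 = P.1) (hle : ∀ x, P.2 x ≤ P.2 w → Q.2 x = P.2 x) (hloser : Q.2 l = P.2 w + 1)
    (hlt : ∀ x, x ≠ l → P.2 w < P.2 x → Q.2 x = P.2 x + 1) : IsTopArrow P Q w l where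
  ne := by
    rintro rfl
    have := hle w le_rfl
    omega
  winner_last := hw
  loser_last := hl
  eq := Prod.ext htop (eq_rauzyMove hle hloser hlt)

/-- Some arrow of the Rauzy diagram joins `P` to `Q`. -/
def Adj (P Q : Datum A) : Prop := ∃ b w l, IsArrow b P Q w l

theorem adj_of_combStep (h : GState.CombStep (Fintype.card A) P Q) : Adj P Q := by
  rcases h with ⟨w, l, hw, hl, htop, hle, hloser, hlt⟩ | ⟨l, w, hl, hw, hbot, hle, hloser, hlt⟩
  · exact ⟨true, w, l, isTopArrow_of_forall hw hl htop hle hloser hlt⟩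
  · exact ⟨false, w, l, isTopArrow_of_forall hw hl hbot hle hloser hlt⟩

theorem exists_isArrow_of_rauzyStep {g g' : GState A} (h : g.RauzyStep g' w l) :
    ∃ b, IsArrow b (g.pit, g.pib) (g'.pit, g'.pib) w l := by
  obtain ⟨-, -, c, d, hc, hd, ⟨-, rfl, rfl, -, htop, hle, hloser, hlt, -⟩ |
    ⟨-, rfl, rfl, -, hbot, hle, hloser, hlt, -⟩⟩ := h
  · exact ⟨true, isTopArrow_of_forall hc hd htop hle hloser hlt⟩
  · exact ⟨false, isTopArrow_of_forall hd hc hbot hle hloser hlt⟩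

theorem IsTopArrow.winner_last_right (h : IsTopArrow P Q w l) : Q.1 w = Fintype.card A := by
  rw [h.eq, h.winner_last]

theorem IsArrow.loser_eq_winner (h : IsArrow b P Q w l) (h' : IsArrow b' Q R w' l')
    (hQ : IsDatum Q) (hne : w' ≠ w) : l' = w := by
  cases b <;> cases b'
  · exact absurd (hQ.bot.injective (h'.winner_last.trans h.winner_last_right.symm)) hne
  · exact hQ.bot.injective (h'.loser_last.trans h.winner_last_right.symm)
  · exact hQ.top.injective (h'.loser_last.trans h.winner_last_right.symm)
  · exact absurd (hQ.top.injective (h'.winner_last.trans h.winner_last_right.symm)) hne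

theorem reflTransGen_adj_swap (h : ReflTransGen Adj P Q) :
    ReflTransGen Adj P.swap Q.swap := by
  refine ReflTransGen.lift Prod.swap ?_ _ _ h
  rintro P Q ⟨b, w, l, h⟩
  cases b
  · exact ⟨true, w, l, h⟩
  · exact ⟨false, w, l, h⟩

theorem isDatum_of_reflTransGen_adj (h : ReflTransGen Adj P Q) (hP : IsDatum P) : IsDatum Q := by
  induction h with
  | refl => exact hP
  | tail _ hQ ih =>
    obtain ⟨b, w, l, h⟩ := hQ
    exact h.isDatum ih

theorem rauzyMove_left_injective (hp : IsNumbering p) (hl : p l = Fintype.card A)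
    (hl' : q l' = Fintype.card A) (hwl : w ≠ l) (hwl' : w ≠ l')
    (h : rauzyMove p w l = rauzyMove q w l') : p = q := by
  have hw : p w = q w := by
    rw [← rauzyMove_of_le (p := p) hwl le_rfl, h, rauzyMove_of_le hwl' le_rfl]
  obtain rfl : l = l' := (hp.isNumbering_rauzyMove hl hwl).injective (by
    rw [rauzyMove_loser, h, rauzyMove_loser, hw])
  ext x
  rcases eq_or_ne x l with rfl | hx
  · rw [hl, hl']
  have hx' := congrFun h x
  simp only [rauzyMove, if_neg hx] at hx'
  split_ifs at hx' <;> omega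

theorem reflTransGen_adj_rauzyMove (hP : IsDatum P) (hw : P.1 w = Fintype.card A)
    (hl : P.2 l = Fintype.card A) (hwl : w ≠ l) :
    ReflTransGen Adj (P.1, rauzyMove P.2 w l) P := by
  classical
  let S := {p : A → ℕ // IsNumbering p ∧ p w ≠ Fintype.card A}
  have : Finite S := by
    refine Set.Finite.subset (Set.Finite.pi' fun _ => Set.finite_Iic (Fintype.card A)) ?_
    exact fun p hp a => hp.1.le_card a
  have card_pos : 1 ≤ Fintype.card A := Fintype.card_pos_iff.2 ⟨w⟩
  choose last hlast using fun p : S => p.2.1.exists_eq card_pos le_rfl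
  have hne (p : S) : w ≠ last p := fun e => p.2.2 ((congrArg p.1 e).trans (hlast p))
  let next (p : S) : S := ⟨rauzyMove p.1 w (last p), p.2.1.isNumbering_rauzyMove (hlast p) (hne p),
    by rw [rauzyMove_of_le (hne p) le_rfl]; exact p.2.2⟩
  have next_injective : Function.Injective next := fun p q h => Subtype.ext <|
    rauzyMove_left_injective p.2.1 (hlast p) (hlast q) (hne p) (hne q)
      (congrArg Subtype.val h)
  have orbit (p : S) (n : ℕ) : ReflTransGen Adj (P.1, p.1) (P.1, (next^[n] p).1) := by
    induction n with
    | zero => exact .refl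
    | succ n ih =>
      rw [Function.iterate_succ_apply']
      exact ih.tail ⟨true, w, _, hne _, hw, hlast _, rfl⟩
  let p : S := ⟨P.2, hP.bot, fun e => hwl (hP.bot.injective (e.trans hl.symm))⟩
  obtain ⟨n, hn, hper⟩ := next_injective.mem_periodicPts p
  have hp : (next p).1 = rauzyMove P.2 w l := by
    have : last p = l := hP.bot.injective ((hlast p).trans hl.symm)
    rw [← this]
  have := orbit (next p) (n - 1)
  rw [← Function.iterate_succ_apply, Nat.succ_eq_add_one, Nat.sub_add_cancel hn, hper] at this
  exact hp ▸ this

theorem Adj.reflTransGen_symm (h : Adj P Q) (hP : IsDatum P) : ReflTransGen Adj Q P := by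
  obtain ⟨b, w, l, h⟩ := h
  cases b
  · have := reflTransGen_adj_rauzyMove hP.swap h.winner_last h.loser_last h.ne
    rw [← h.eq] at this
    exact reflTransGen_adj_swap this
  · obtain ⟨hne, hw, hl, rfl⟩ := h
    exact reflTransGen_adj_rauzyMove hP hw hl hne

theorem reflTransGen_adj_of_combStep
    (h : ReflTransGen (GState.CombStep (Fintype.card A)) P Q) : ReflTransGen Adj P Q :=
  ReflTransGen.mono (fun _ _ => adj_of_combStep) _ _ h

/-- Some interval exchange with datum `P` and positive integer lengths is transitive on the natural
numbers of its interval. -/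
def HasTransitiveLengths (P : Datum A) : Prop :=
  ∃ lam : A → ℕ, (∀ a, 0 < lam a) ∧ (iet P fun a => (lam a : ℝ)).IsNatTransitive

theorem IsArrow.exists_step_eq_iet (h : IsArrow b P Q w l) (hP : IsDatum P) {mu : A → ℕ}
    (hmu : ∀ a, 0 < mu a) (ht : (iet Q fun a => (mu a : ℝ)).IsNatTransitive) :
    ∃ lam : A → ℕ, (∀ a, 0 < lam a) ∧ (iet P fun a => (lam a : ℝ)).IsNatTransitive ∧
      (iet P fun a => (lam a : ℝ)).CanStep b w l ∧
      (iet P fun a => (lam a : ℝ)).step b w l = iet Q fun a => (mu a : ℝ) := by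
  classical
  have hmu' (a : A) : (0 : ℝ) < mu a := Nat.cast_pos.2 (hmu a)
  have hlam : ∀ a, 0 < Function.update mu w (mu w + mu l) a :=
    Function.forall_update_iff mu (p := fun _ x => 0 < x) |>.2
      ⟨Nat.add_pos_left (hmu w) _, fun a _ => hmu a⟩
  have hcast : (fun a => (Function.update mu w (mu w + mu l) a : ℝ)) =
      Function.update (fun a => (mu a : ℝ)) w (mu w + mu l) := by
    rw [← Nat.cast_add]
    exact Function.comp_update (fun n : ℕ => (n : ℝ)) mu w _
  have hcan := h.canStep_iet hP hmu'
  have hstep := h.step_iet hP hmu'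
  rw [← hcast] at hcan hstep
  refine ⟨_, hlam, ?_, hcan, hstep⟩
  exact IsNatTransitive.of_step (isExchange_iet hP fun a => Nat.cast_pos.2 (hlam a))
    (preservesNat_iet P _) hcan (hstep ▸ ht)

theorem HasTransitiveLengths.of_reflTransGen (hQ : HasTransitiveLengths Q)
    (h : ReflTransGen Adj P Q) (hP : IsDatum P) : HasTransitiveLengths P := by
  induction h with
  | refl => exact hQ
  | tail hPR hRQ ih =>
    obtain ⟨b, w, l, h⟩ := hRQ
    obtain ⟨mu, hmu, ht⟩ := hQ
    obtain ⟨lam, hlam, ht', -⟩ :=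
      h.exists_step_eq_iet (isDatum_of_reflTransGen_adj hPR hP) hmu ht
    exact ih ⟨lam, hlam, ht'⟩

theorem hasTransitiveLengths_of_cyclicDatum (hP : IsDatum P) (hc : GState.CyclicDatum P.1 P.2) :
    HasTransitiveLengths P :=
  ⟨fun _ => 1, fun _ => Nat.one_pos, isNatTransitive_iet_of_cyclicDatum hP hc⟩

section Path

variable {D : ℕ → Datum A} {b : ℕ → Bool} {w l : ℕ → A}

theorem isDatum_path (hD : IsDatum (D 0)) (hs : ∀ k, IsArrow (b k) (D k) (D (k + 1)) (w k) (l k))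
    (k : ℕ) : IsDatum (D k) := by
  induction k with
  | zero => exact hD
  | succ k ih => exact (hs k).isDatum ih

theorem hasTransitiveLengths_path (hD : IsDatum (D 0)) (ht : HasTransitiveLengths (D 0))
    (hs : ∀ k, IsArrow (b k) (D k) (D (k + 1)) (w k) (l k)) (k : ℕ) :
    HasTransitiveLengths (D k) := by
  induction k with
  | zero => exact ht
  | succ k ih =>
    refine ih.of_reflTransGen ?_ (isDatum_path hD hs (k + 1))
    exact Adj.reflTransGen_symm ⟨_, _, _, hs k⟩ (isDatum_path hD hs k)

theorem exists_iet_isNatTransitive_follows (hD : IsDatum (D 0)) (ht : HasTransitiveLengths (D 0))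
    (hs : ∀ k, IsArrow (b k) (D k) (D (k + 1)) (w k) (l k)) (n k : ℕ) :
    ∃ lam : A → ℕ, (∀ a, 0 < lam a) ∧ (iet (D k) fun a => (lam a : ℝ)).IsNatTransitive ∧
      Follows b w l k (iet (D k) fun a => (lam a : ℝ)) n := by
  induction n generalizing k with
  | zero =>
    obtain ⟨lam, hlam, h⟩ := hasTransitiveLengths_path hD ht hs k
    exact ⟨lam, hlam, h, trivial⟩
  | succ n ih =>
    obtain ⟨mu, hmu, h, hfollows⟩ := ih (k + 1)
    obtain ⟨lam, hlam, h', hcan, hstep⟩ := (hs k).exists_step_eq_iet (isDatum_path hD hs k) hmu h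
    exact ⟨lam, hlam, h', hcan, hstep ▸ hfollows⟩

end Path

end IntervalExchange

/-! ### Full families and their closed branches -/

namespace IntervalExchange

open Filter Topology

/-- `f` is an increasing homeomorphism from `[a, a')` onto `[b, b')`. -/
structure IsBranch (f : ℝ → ℝ) (a a' b b' : ℝ) : Prop where
  lt : a < a'
  bijOn : Set.BijOn f (Set.Ico a a') (Set.Ico b b')
  strictMonoOn : StrictMonoOn f (Set.Ico a a')
  continuousOn : ContinuousOn f (Set.Ico a a')

namespace IsBranch

variable {f : ℝ → ℝ} {a a' b b' : ℝ}

theorem tendsto_nhdsLT (h : IsBranch f a a' b b') : Tendsto f (𝓝[<] a') (𝓝 b') := by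
  refine tendsto_order.2 ⟨fun y hy => ?_, fun y hy => ?_⟩
  · obtain ⟨z, hz, hzb⟩ := exists_between
      (max_lt hy ((h.bijOn.mapsTo ⟨le_rfl, h.lt⟩).1.trans_lt (h.bijOn.mapsTo ⟨le_rfl, h.lt⟩).2))
    obtain ⟨x, hx, rfl⟩ := h.bijOn.surjOn ⟨((le_max_right _ _).trans_lt hz).le, hzb⟩
    filter_upwards [Ioo_mem_nhdsLT hx.2] with x' hx'
    exact (le_max_left _ _).trans_lt
      (hz.trans (h.strictMonoOn hx ⟨hx.1.trans hx'.1.le, hx'.2⟩ hx'.1))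
  · filter_upwards [Ioo_mem_nhdsLT h.lt] with x hx
    exact (h.bijOn.mapsTo ⟨hx.1.le, hx.2⟩).2.trans hy

theorem mem_closure_graph_iff (h : IsBranch f a a' b b') {p : ℝ × ℝ} :
    p ∈ closure {p : ℝ × ℝ | p.1 ∈ Set.Ico a a' ∧ p.2 = f p.1} ↔
      (p.1 ∈ Set.Ico a a' ∧ p.2 = f p.1) ∨ p = (a', b') := by
  constructor
  · intro hp
    obtain ⟨q, hq, hlim⟩ := mem_closure_iff_seq_limit.1 hp
    have hfst : Tendsto (fun n => (q n).1) atTop (𝓝 p.1) := (continuous_fst.tendsto p).comp hlim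
    have hsnd : Tendsto (fun n => f (q n).1) atTop (𝓝 p.2) :=
      ((continuous_snd.tendsto p).comp hlim).congr fun n => (hq n).2
    rcases (le_of_tendsto' hfst fun n => (hq n).1.2.le).lt_or_eq with hlt | heq
    · have hmem : p.1 ∈ Set.Ico a a' := ⟨ge_of_tendsto' hfst fun n => (hq n).1.1, hlt⟩
      exact Or.inl ⟨hmem, tendsto_nhds_unique hsnd ((h.continuousOn _ hmem).tendsto.comp
        (tendsto_nhdsWithin_iff.2 ⟨hfst, Eventually.of_forall fun n => (hq n).1⟩))⟩
    · exact Or.inr (Prod.ext heq (tendsto_nhds_unique hsnd (h.tendsto_nhdsLT.comp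
        (tendsto_nhdsWithin_iff.2 ⟨heq ▸ hfst, Eventually.of_forall fun n => (hq n).1.2⟩))))
  · rintro (hp | rfl)
    · exact subset_closure hp
    · refine mem_closure_of_tendsto (b := 𝓝[<] a') (f := fun x => (x, f x))
        ((tendsto_id.mono_left nhdsWithin_le_nhds).prodMk_nhds h.tendsto_nhdsLT) ?_
      filter_upwards [Ioo_mem_nhdsLT h.lt] with x hx
      exact ⟨⟨hx.1.le, hx.2⟩, rfl⟩

end IsBranch

/-- The properties shared by closures of branch graphs and by the singular points into which
branches may degenerate. -/
structure IsClosedBranch (K : Set (ℝ × ℝ)) : Prop where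
  nonempty : K.Nonempty
  isCompact : IsCompact K
  fst_eq_iff : ∀ p ∈ K, ∀ q ∈ K, (p.1 = q.1 ↔ p.2 = q.2)

theorem isClosedBranch_singleton (p : ℝ × ℝ) : IsClosedBranch {p} where
  nonempty := Set.singleton_nonempty p
  isCompact := isCompact_singleton
  fst_eq_iff := by
    rintro _ rfl _ rfl
    exact iff_of_true rfl rfl

theorem IsBranch.isClosedBranch {f : ℝ → ℝ} {a a' b b' : ℝ} (h : IsBranch f a a' b b') :
    IsClosedBranch (closure {p : ℝ × ℝ | p.1 ∈ Set.Ico a a' ∧ p.2 = f p.1}) where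
  nonempty := ⟨_, h.mem_closure_graph_iff.2 (Or.inr rfl)⟩
  isCompact := by
    refine (Bornology.IsBounded.subset ((Metric.isBounded_Icc a a').prod
      (Metric.isBounded_Icc b b')) ?_).isCompact_closure
    rintro p ⟨hp, hpf⟩
    exact ⟨⟨hp.1, hp.2.le⟩, hpf ▸ (h.bijOn.mapsTo hp).1, hpf ▸ (h.bijOn.mapsTo hp).2.le⟩
  fst_eq_iff p hp q hq := by
    rcases h.mem_closure_graph_iff.1 hp with ⟨hp, hpf⟩ | rfl <;>
      rcases h.mem_closure_graph_iff.1 hq with ⟨hq, hqf⟩ | rfl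
    · rw [hpf, hqf, h.bijOn.injOn.eq_iff hp hq]
    · exact hpf ▸ iff_of_false hp.2.ne (h.bijOn.mapsTo hp).2.ne
    · exact hqf ▸ iff_of_false hq.2.ne' (h.bijOn.mapsTo hq).2.ne'
    · exact iff_of_true rfl rfl

variable {A : Type*} [Fintype A] {pit pib : A → ℕ}

/-- A family `S` of exchanges of `[0, 1)` over the datum `(pit, pib)`, where `S τ` is the exchange
whose image intervals have the lengths prescribed by `τ`. The set `G τ a` is the closed graph of the
branch `a` of `S τ`; it is still defined, and closed as a function of `τ`, on the boundary of the
simplex. -/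
structure MarkedFamily (pit pib : A → ℕ) (S : (A → ℝ) → BranchSystem A)
    (G : (A → ℝ) → A → Set (ℝ × ℝ)) : Prop where
  isExchange : ∀ {τ}, τ ∈ GState.openSimplex A → (S τ).IsExchange
  pit_eq : ∀ {τ}, τ ∈ GState.openSimplex A → (S τ).pit = pit
  pib_eq : ∀ {τ}, τ ∈ GState.openSimplex A → (S τ).pib = pib
  lb_eq : ∀ {τ}, τ ∈ GState.openSimplex A → (S τ).lb = τ
  sum_lt : ∀ {τ}, τ ∈ GState.openSimplex A → ∑ a, (S τ).lt a = 1
  mem : ∀ {τ}, τ ∈ GState.openSimplex A → ∀ {a x y}, (S τ).graph a x y → (x, y) ∈ G τ a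
  end_mem : ∀ {τ}, τ ∈ GState.openSimplex A → ∀ a,
    ((S τ).ut a + (S τ).lt a, (S τ).ub a + (S τ).lb a) ∈ G τ a
  fst_eq_iff : ∀ {τ}, τ ∈ GState.closedSimplex A → ∀ {a}, ∀ p ∈ G τ a, ∀ q ∈ G τ a,
    (p.1 = q.1 ↔ p.2 = q.2)
  isClosed : ∀ a, IsClosed {q : (A → ℝ) × ℝ × ℝ | q.1 ∈ GState.closedSimplex A ∧ q.2 ∈ G q.1 a}

theorem openSimplex_subset_closedSimplex : GState.openSimplex A ⊆ GState.closedSimplex A :=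
  fun _ hτ => ⟨fun a => (hτ.1 a).le, hτ.2⟩

theorem isClosed_closedSimplex : IsClosed (GState.closedSimplex A) := isClosed_stdSimplex ℝ A

theorem isBranch_of_isGIET {s : GState A} (h : s.IsGIET) (a : A) :
    IsBranch s.f (s.ut a) (s.ut a + s.lt a) (s.ub a) (s.ub a + s.lb a) :=
  have hbranch := h.2.2.2.2.2 a
  ⟨lt_add_of_pos_right _ (h.2.2.1 a), hbranch.1, hbranch.2.1, hbranch.2.2⟩

theorem isClosedBranch_of_isDegeneration {D : A → Set (ℝ × ℝ)}
    (h : GState.IsDegeneration pit pib D) (a : A) : IsClosedBranch (D a) := by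
  obtain ⟨s, A', -, -, -, -, hpos, -, -, hbranch, hregular, hsingular⟩ := h
  by_cases ha : a ∈ A'
  · have : IsBranch s.f (s.ut a) (s.ut a + s.lt a) (s.ub a) (s.ub a + s.lb a) :=
      ⟨lt_add_of_pos_right _ (hpos a ha).1, (hbranch a ha).1, (hbranch a ha).2.1,
        (hbranch a ha).2.2⟩
    exact hregular a ha ▸ this.isClosedBranch
  · obtain ⟨p, hp, -⟩ := hsingular a ha
    exact hp ▸ isClosedBranch_singleton p

theorem isClosed_graph_of_hausdorffDist {P X : Type*} [MetricSpace P] [MetricSpace X] {C : Set P}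
    (hC : IsClosed C) {K : P → Set X} (hne : ∀ τ ∈ C, (K τ).Nonempty)
    (hK : ∀ τ ∈ C, IsCompact (K τ)) (hcont : ∀ τ ∈ C, ∀ ε > (0 : ℝ), ∃ δ > (0 : ℝ), ∀ τ' ∈ C,
      dist τ τ' < δ → Metric.hausdorffDist (K τ) (K τ') < ε) :
    IsClosed {q : P × X | q.1 ∈ C ∧ q.2 ∈ K q.1} := by
  refine isClosed_of_closure_subset fun q hq => ?_
  obtain ⟨u, hu, hlim⟩ := mem_closure_iff_seq_limit.1 hq
  have hfst : Tendsto (fun n => (u n).1) atTop (𝓝 q.1) := (continuous_fst.tendsto q).comp hlim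
  have hsnd : Tendsto (fun n => (u n).2) atTop (𝓝 q.2) := (continuous_snd.tendsto q).comp hlim
  have hq1 : q.1 ∈ C := hC.mem_of_tendsto hfst (Eventually.of_forall fun n => (hu n).1)
  refine ⟨hq1, ((hK _ hq1).isClosed.mem_iff_infDist_zero (hne _ hq1)).2 (tendsto_nhds_unique
    (((Metric.continuous_infDist_pt _).tendsto _).comp hsnd) (Metric.tendsto_nhds.2 ?_))⟩
  intro ε hε
  obtain ⟨δ, hδ, hlt⟩ := hcont q.1 hq1 ε hε
  filter_upwards [Metric.tendsto_nhds.1 hfst δ hδ] with n hn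
  have hle : Metric.infDist (u n).2 (K q.1) ≤ Metric.hausdorffDist (K (u n).1) (K q.1) :=
    Metric.infDist_le_hausdorffDist_of_mem (hu n).2
      (Metric.hausdorffEDist_ne_top_of_nonempty_of_bounded (hne _ (hu n).1) (hne _ hq1)
        (hK _ (hu n).1).isBounded (hK _ hq1).isBounded)
  rw [Function.comp_apply, Real.dist_eq, sub_zero, abs_of_nonneg Metric.infDist_nonneg]
  rw [Metric.hausdorffDist_comm] at hle
  exact hle.trans_lt (hlt _ (hu n).1 (by rwa [dist_comm]))

theorem exists_markedFamily (hpib : IsNumbering pib) {F : (A → ℝ) → GState A}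
    (h : GState.FullFamily pit pib F) :
    ∃ G, MarkedFamily pit pib (fun τ => BranchSystem.ofGState (F τ)) G := by
  obtain ⟨hF, hmark, -, G, hG, hcont, hdeg⟩ := h
  have hbranch : ∀ τ ∈ GState.closedSimplex A, ∀ a, IsClosedBranch (G τ a) := fun τ hτ a => by
    by_cases ho : τ ∈ GState.openSimplex A
    · exact hG τ ho ▸ (isBranch_of_isGIET (hF τ ho).1 a).isClosedBranch
    · exact isClosedBranch_of_isDegeneration (hdeg τ ⟨hτ, ho⟩) a
  refine ⟨G, fun hτ => BranchSystem.isExchange_ofGState (hF _ hτ).1, fun hτ => (hF _ hτ).2.1,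
    fun hτ => (hF _ hτ).2.2.1, fun {τ} hτ => ?_, fun hτ => (hF _ hτ).2.2.2, fun hτ _ _ _ r => ?_,
    fun {τ} hτ a => ?_, fun hτ a => (hbranch _ hτ a).fst_eq_iff, fun a => ?_⟩
  · refine hpib.funext_of_offset_eq (fun a => ?_) ?_
    · refine Eq.trans ?_ (hmark τ hτ a)
      rw [GState.ub, (hF τ hτ).2.2.1]
      rfl
    · exact (hF τ hτ).1.2.2.2.2.1.symm.trans ((hF τ hτ).2.2.2.trans hτ.2.symm)
  · exact hG _ hτ ▸ subset_closure r
  · exact hG τ hτ ▸ (isBranch_of_isGIET (hF τ hτ).1 a).mem_closure_graph_iff.2 (Or.inr rfl)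
  · refine isClosed_graph_of_hausdorffDist isClosed_closedSimplex
      (fun τ hτ => (hbranch τ hτ a).nonempty) (fun τ hτ => (hbranch τ hτ a).isCompact)
      fun τ hτ ε hε => ?_
    obtain ⟨δ, hδ, hlt⟩ := hcont τ hτ ε hε
    exact ⟨δ, hδ, fun τ' hτ' hd => (Finset.single_le_sum
      (f := fun a => Metric.hausdorffDist (G τ a) (G τ' a))
      (fun a _ => Metric.hausdorffDist_nonneg) (Finset.mem_univ a)).trans_lt (hlt τ' hτ' hd)⟩

end IntervalExchange

/-! ### Preimages of a grid under the closed branches -/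

namespace IntervalExchange

open Filter Topology

theorem continuousOn_of_isClosed {X Y : Type*} [TopologicalSpace X] [TopologicalSpace Y]
    {f : X → Y} {s : Set X} {K : Set Y} {C : Set (X × Y)} (hK : IsCompact K) (hC : IsClosed C)
    (hf : Set.MapsTo f s K) (hmem : ∀ x ∈ s, (x, f x) ∈ C)
    (huniq : ∀ x ∈ s, ∀ y, (x, y) ∈ C → y = f x) : ContinuousOn f s := fun x hx => by
  refine hK.tendsto_nhds_of_unique_mapClusterPt (eventually_mem_nhdsWithin.mono hf)
    fun y _ hy => huniq x hx y ?_
  obtain ⟨U, hU, hlim⟩ := mapClusterPt_iff_ultrafilter.1 hy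
  exact hC.mem_of_tendsto (Tendsto.prodMk_nhds (hU.trans nhdsWithin_le_nhds) hlim)
    ((eventually_mem_nhdsWithin.filter_mono hU).mono hmem)

namespace MarkedFamily

variable {A : Type*} [Fintype A] {pit pib : A → ℕ} {S : (A → ℝ) → BranchSystem A}
  {G : (A → ℝ) → A → Set (ℝ × ℝ)} {τ : A → ℝ} {a : A} {x y y' : ℝ}

theorem eq_of_mem (fam : MarkedFamily pit pib S G) (hτ : τ ∈ GState.closedSimplex A) {x' : ℝ}
    (h : (x, y) ∈ G τ a) (h' : (x', y) ∈ G τ a) : x = x' :=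
  (fam.fst_eq_iff hτ _ h _ h').2 rfl

theorem graph_of_mem (fam : MarkedFamily pit pib S G) (hτ : τ ∈ GState.openSimplex A)
    (h : (x, y) ∈ G τ a) (hy : y ∈ (S τ).botItv a) : (S τ).graph a x y := by
  obtain ⟨x', r⟩ := (fam.isExchange hτ).exists_left hy
  exact fam.eq_of_mem (openSimplex_subset_closedSimplex hτ) h (fam.mem hτ r) ▸ r

/-- Preimage of `y` under the closed branch `a` of the parameter `τ`. -/
noncomputable def pullback (G : (A → ℝ) → A → Set (ℝ × ℝ)) (τ : A → ℝ) (a : A) (y : ℝ) : ℝ :=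
  Classical.epsilon fun x => (x, y) ∈ G τ a

theorem pullback_eq (fam : MarkedFamily pit pib S G) (hτ : τ ∈ GState.closedSimplex A)
    (h : (x, y) ∈ G τ a) : pullback G τ a y = x :=
  fam.eq_of_mem hτ (Classical.epsilon_spec (p := fun x => (x, y) ∈ G τ a) ⟨x, h⟩) h

theorem pullback_ub (fam : MarkedFamily pit pib S G) (hτ : τ ∈ GState.openSimplex A) (a : A) :
    pullback G τ a ((S τ).ub a) = (S τ).ut a :=
  fam.pullback_eq (openSimplex_subset_closedSimplex hτ)
    (fam.mem hτ ((fam.isExchange hτ).graph_ut_ub a))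

theorem pullback_ub_add_lb (fam : MarkedFamily pit pib S G) (hτ : τ ∈ GState.openSimplex A)
    (a : A) : pullback G τ a ((S τ).ub a + (S τ).lb a) = (S τ).ut a + (S τ).lt a :=
  fam.pullback_eq (openSimplex_subset_closedSimplex hτ) (fam.end_mem hτ a)

theorem graph_pullback (fam : MarkedFamily pit pib S G) (hτ : τ ∈ GState.openSimplex A)
    (hy : y ∈ (S τ).botItv a) : (S τ).graph a (pullback G τ a y) y := by
  obtain ⟨x, r⟩ := (fam.isExchange hτ).exists_left hy
  rwa [fam.pullback_eq (openSimplex_subset_closedSimplex hτ) (fam.mem hτ r)]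

theorem pullback_mem (fam : MarkedFamily pit pib S G) (hτ : τ ∈ GState.openSimplex A)
    (hy : y ∈ Set.Icc ((S τ).ub a) ((S τ).ub a + (S τ).lb a)) :
    (pullback G τ a y, y) ∈ G τ a := by
  rcases hy.2.lt_or_eq with hlt | rfl
  · exact fam.mem hτ (fam.graph_pullback hτ ⟨hy.1, hlt⟩)
  · exact fam.pullback_ub_add_lb hτ a ▸ fam.end_mem hτ a

theorem pullback_monotoneOn (fam : MarkedFamily pit pib S G) (hτ : τ ∈ GState.openSimplex A)
    (a : A) :
    MonotoneOn (pullback G τ a) (Set.Icc ((S τ).ub a) ((S τ).ub a + (S τ).lb a)) := by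
  intro y hy y' hy' hle
  rcases hy'.2.lt_or_eq with hlt' | rfl
  · exact ((fam.isExchange hτ).le_iff (fam.graph_pullback hτ ⟨hy.1, hle.trans_lt hlt'⟩)
      (fam.graph_pullback hτ ⟨hy'.1, hlt'⟩)).2 hle
  rcases hy.2.lt_or_eq with hlt | rfl
  · rw [fam.pullback_ub_add_lb hτ]
    exact ((fam.isExchange hτ).mem (fam.graph_pullback hτ ⟨hy.1, hlt⟩)).1.2.le
  · exact le_rfl

theorem pullback_mem_Icc (fam : MarkedFamily pit pib S G) (hτ : τ ∈ GState.openSimplex A)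
    (hy : y ∈ Set.Icc ((S τ).ub a) ((S τ).ub a + (S τ).lb a)) :
    pullback G τ a y ∈ Set.Icc (0 : ℝ) 1 := by
  have h := fam.isExchange hτ
  have hne := hy.1.trans hy.2
  constructor
  · calc 0 ≤ (S τ).ut a := offset_nonneg (fun b => (h.lt_pos b).le) a
      _ = pullback G τ a ((S τ).ub a) := (fam.pullback_ub hτ a).symm
      _ ≤ pullback G τ a y := fam.pullback_monotoneOn hτ a ⟨le_rfl, hne⟩ hy hy.1
  · calc pullback G τ a y ≤ pullback G τ a ((S τ).ub a + (S τ).lb a) :=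
          fam.pullback_monotoneOn hτ a hy ⟨hne, le_rfl⟩ hy.2
      _ = (S τ).ut a + (S τ).lt a := fam.pullback_ub_add_lb hτ a
      _ ≤ ∑ b, (S τ).lt b := h.pit.offset_add_le_sum (fun b => (h.lt_pos b).le) a
      _ = 1 := fam.sum_lt hτ

theorem continuousOn_pullback (fam : MarkedFamily pit pib S G) (a : A) :
    ContinuousOn (fun q : (A → ℝ) × ℝ => pullback G q.1 a q.2) {q | q.1 ∈ GState.openSimplex A ∧
      q.2 ∈ Set.Icc ((S q.1).ub a) ((S q.1).ub a + (S q.1).lb a)} := by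
  refine continuousOn_of_isClosed isCompact_Icc
    ((fam.isClosed a).preimage
      (by fun_prop : Continuous fun q : ((A → ℝ) × ℝ) × ℝ => (q.1.1, q.2, q.1.2)))
    (fun q hq => fam.pullback_mem_Icc hq.1 hq.2)
    (fun q hq => ⟨openSimplex_subset_closedSimplex hq.1, fam.pullback_mem hq.1 hq.2⟩)
    fun _ _ _ hx => (fam.pullback_eq hx.1 hx.2).symm

end MarkedFamily

section Grid

variable {A : Type*} [Fintype A] {p lam : A → ℕ} {v : (Σ a, Fin (lam a)) → ℝ}

/-- Left endpoint of a unit interval, when intervals of integer lengths `lam` are lined up in the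
order given by `p`; the pair `⟨a, j⟩` stands for the `j`-th unit interval of the interval `a`. -/
def unitOffset (p lam : A → ℕ) (i : Σ a, Fin (lam a)) : ℕ := offset p lam i.1 + i.2

theorem IsNumbering.unitOffset_injective (hp : IsNumbering p) :
    Function.Injective (unitOffset p lam) := by
  rintro ⟨a, j⟩ ⟨b, k⟩ h
  simp only [unitOffset] at h
  obtain rfl : a = b := hp.eq_of_mem_Ico_offset (l := lam) (x := offset p lam a + j)
    (fun _ => Nat.zero_le _) ⟨by omega, by omega⟩ ⟨by omega, by omega⟩
  obtain rfl : j = k := Fin.ext (by omega)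
  rfl

theorem IsNumbering.unitOffset_lt_sum (hp : IsNumbering p) (i : Σ a, Fin (lam a)) :
    unitOffset p lam i < ∑ a, lam a := by
  have := hp.offset_add_le_sum (l := lam) (fun _ => Nat.zero_le _) i.1
  have := i.2.isLt
  simp only [unitOffset]
  omega

theorem IsNumbering.exists_unitOffset_eq [Nonempty A] (hp : IsNumbering p) {m : ℕ}
    (hm : m < ∑ a, lam a) : ∃ i, unitOffset p lam i = m := by
  obtain ⟨a, h, h'⟩ := hp.exists_mem_Ico_offset (Nat.zero_le m) hm
  exact ⟨⟨a, m - offset p lam a, by omega⟩, by simp only [unitOffset]; omega⟩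

theorem IsNumbering.unitOffset_lt_offset_iff (hp : IsNumbering p) {i : Σ a, Fin (lam a)} {a : A} :
    unitOffset p lam i < offset p lam a ↔ p i.1 < p a := by
  have := i.2.isLt
  simp only [unitOffset]
  constructor
  · intro h
    by_contra! hle
    rcases hle.eq_or_lt with heq | hlt
    · rw [hp.injective heq] at h
      omega
    · have := hp.offset_add_le_of_lt (l := lam) (fun _ => Nat.zero_le _) hlt
      omega
  · intro h
    have := hp.offset_add_le_of_lt (l := lam) (fun _ => Nat.zero_le _) h
    omega

/-- Point number `m` of the subdivision of an interval in which the pieces of lengths `v` are lined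
up in the order given by `p`. -/
def gridPoint (p lam : A → ℕ) (v : (Σ a, Fin (lam a)) → ℝ) (m : ℕ) : ℝ :=
  ∑ i with unitOffset p lam i < m, v i

theorem gridPoint_zero : gridPoint p lam v 0 = 0 := by simp [gridPoint]

theorem IsNumbering.gridPoint_sum (hp : IsNumbering p) :
    gridPoint p lam v (∑ a, lam a) = ∑ i, v i := by
  rw [gridPoint, Finset.filter_true_of_mem fun i _ => hp.unitOffset_lt_sum i]

theorem IsNumbering.gridPoint_unitOffset_add_one (hp : IsNumbering p) (i : Σ a, Fin (lam a)) :
    gridPoint p lam v (unitOffset p lam i + 1) = gridPoint p lam v (unitOffset p lam i) + v i := by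
  classical
  have hfilter : ({k | unitOffset p lam k < unitOffset p lam i + 1} : Finset _) =
      insert i ({k | unitOffset p lam k < unitOffset p lam i} : Finset _) := by
    ext k
    simp [le_iff_lt_or_eq, hp.unitOffset_injective.eq_iff, or_comm]
  rw [gridPoint, hfilter, Finset.sum_insert (by simp), add_comm, gridPoint]

theorem gridPoint_monotone (hv : ∀ i, 0 ≤ v i) : Monotone (gridPoint p lam v) := fun m n h =>
  Finset.sum_le_sum_of_subset_of_nonneg
    (fun i hi => by simp only [Finset.mem_filter_univ] at hi ⊢; omega) fun i _ _ => hv i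

theorem IsNumbering.gridPoint_lt [Nonempty A] (hp : IsNumbering p) (hv : ∀ i, 0 < v i) {m n : ℕ}
    (hmn : m < n) (hn : n ≤ ∑ a, lam a) : gridPoint p lam v m < gridPoint p lam v n := by
  obtain ⟨i, rfl⟩ := hp.exists_unitOffset_eq (hmn.trans_le hn)
  calc gridPoint p lam v (unitOffset p lam i) < gridPoint p lam v (unitOffset p lam i + 1) := by
        rw [hp.gridPoint_unitOffset_add_one]
        exact lt_add_of_pos_right _ (hv i)
    _ ≤ gridPoint p lam v n := gridPoint_monotone (fun i => (hv i).le) hmn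

theorem continuous_gridPoint (m : ℕ) :
    Continuous fun v : (Σ a, Fin (lam a)) → ℝ => gridPoint p lam v m := by
  unfold gridPoint
  fun_prop

theorem IsNumbering.gridPoint_offset (hp : IsNumbering p) (a : A) :
    gridPoint p lam v (offset p lam a) = offset p (fun b => ∑ j, v ⟨b, j⟩) a := by
  simp only [gridPoint, hp.unitOffset_lt_offset_iff]
  simp only [offset, Finset.sum_sigma']
  exact Finset.sum_congr (by ext i; simp) fun _ _ => rfl

end Grid

end IntervalExchange

/-! ### Members of a full family conjugate to integral exchanges -/

namespace IntervalExchange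

open Filter Topology BranchSystem

variable {A : Type*} [Fintype A] {pit pib lam : A → ℕ} {v : (Σ a, Fin (lam a)) → ℝ}

/-- The lengths of the image intervals for which the critical value of each letter `a` is the grid
point of number `offset pib lam a`, the grid points being those of `(pit, lam, v)`. -/
def gridLengths (pit pib lam : A → ℕ) (v : (Σ a, Fin (lam a)) → ℝ) (a : A) : ℝ :=
  gridPoint pit lam v (offset pib lam a + lam a) - gridPoint pit lam v (offset pib lam a)

theorem continuous_gridLengths : Continuous (gridLengths pit pib lam) :=
  continuous_pi fun _ => (continuous_gridPoint _).sub (continuous_gridPoint _)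

section

variable [Nonempty A]

theorem sum_gridLengths (hpit : IsNumbering pit) (hpib : IsNumbering pib) :
    ∑ a, gridLengths pit pib lam v a = ∑ i, v i :=
  (hpib.sum_increments lam gridPoint_zero).trans hpit.gridPoint_sum

theorem gridLengths_mem_closedSimplex (hpit : IsNumbering pit) (hpib : IsNumbering pib)
    (hv : v ∈ stdSimplex ℝ (Σ a, Fin (lam a))) :
    gridLengths pit pib lam v ∈ GState.closedSimplex A :=
  ⟨fun _ => sub_nonneg.2 (gridPoint_monotone hv.1 (Nat.le_add_right _ _)),
    (sum_gridLengths hpit hpib).trans hv.2⟩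

theorem gridLengths_mem_openSimplex (hpit : IsNumbering pit) (hpib : IsNumbering pib)
    (hlam : ∀ a, 0 < lam a) (hv : v ∈ GState.openSimplex (Σ a, Fin (lam a))) :
    gridLengths pit pib lam v ∈ GState.openSimplex A :=
  ⟨fun a => sub_pos.2 (hpit.gridPoint_lt hv.1 (Nat.lt_add_of_pos_right (hlam a))
    (hpib.offset_add_le_sum (fun _ => Nat.zero_le _) a)),
    (sum_gridLengths hpit hpib).trans hv.2⟩

end

namespace MarkedFamily

variable {S : (A → ℝ) → BranchSystem A} {G : (A → ℝ) → A → Set (ℝ × ℝ)} {a : A} {j : ℕ}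

theorem ub_gridLengths (fam : MarkedFamily pit pib S G) (hpib : IsNumbering pib)
    (hτ : gridLengths pit pib lam v ∈ GState.openSimplex A) (a : A) :
    (S (gridLengths pit pib lam v)).ub a = gridPoint pit lam v (offset pib lam a) := by
  rw [BranchSystem.ub, fam.pib_eq hτ, fam.lb_eq hτ]
  exact hpib.offset_increments lam gridPoint_zero a

theorem ub_add_lb_gridLengths (fam : MarkedFamily pit pib S G) (hpib : IsNumbering pib)
    (hτ : gridLengths pit pib lam v ∈ GState.openSimplex A) (a : A) :
    (S (gridLengths pit pib lam v)).ub a + (S (gridLengths pit pib lam v)).lb a =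
      gridPoint pit lam v (offset pib lam a + lam a) := by
  rw [fam.ub_gridLengths hpib hτ, fam.lb_eq hτ, gridLengths, add_sub_cancel]

theorem gridPoint_mem_Icc (fam : MarkedFamily pit pib S G) (hpib : IsNumbering pib)
    (hτ : gridLengths pit pib lam v ∈ GState.openSimplex A) (hv : ∀ i, 0 ≤ v i) (hj : j ≤ lam a) :
    gridPoint pit lam v (offset pib lam a + j) ∈
      Set.Icc ((S (gridLengths pit pib lam v)).ub a)
        ((S (gridLengths pit pib lam v)).ub a + (S (gridLengths pit pib lam v)).lb a) := by
  rw [fam.ub_add_lb_gridLengths hpib hτ, fam.ub_gridLengths hpib hτ]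
  exact ⟨gridPoint_monotone hv (Nat.le_add_right _ _), gridPoint_monotone hv (by omega)⟩

/-- Lengths of the pieces between the preimages of the grid points under the branches of the
exchange whose critical values are grid points. At a fixed point of this map, the exchange permutes
the grid points as the integral translation exchange of lengths `lam` permutes the integers. -/
noncomputable def pullbackLengths (G : (A → ℝ) → A → Set (ℝ × ℝ)) (pit pib lam : A → ℕ)
    (v : (Σ a, Fin (lam a)) → ℝ) (i : Σ a, Fin (lam a)) : ℝ :=
  pullback G (gridLengths pit pib lam v) i.1 (gridPoint pit lam v (unitOffset pib lam i + 1)) -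
    pullback G (gridLengths pit pib lam v) i.1 (gridPoint pit lam v (unitOffset pib lam i))

theorem sum_pullbackLengths_branch (fam : MarkedFamily pit pib S G) (hpib : IsNumbering pib)
    (hτ : gridLengths pit pib lam v ∈ GState.openSimplex A) (a : A) :
    ∑ k, pullbackLengths G pit pib lam v ⟨a, k⟩ = (S (gridLengths pit pib lam v)).lt a := by
  have htelescope := Finset.sum_range_sub (fun k => pullback G (gridLengths pit pib lam v) a
    (gridPoint pit lam v (offset pib lam a + k))) (lam a)
  rw [add_zero, ← fam.ub_gridLengths hpib hτ, ← fam.ub_add_lb_gridLengths hpib hτ,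
    fam.pullback_ub hτ, fam.pullback_ub_add_lb hτ, add_sub_cancel_left,
    ← Fin.sum_univ_eq_sum_range] at htelescope
  exact htelescope

theorem gridPoint_pullbackLengths (fam : MarkedFamily pit pib S G) (hpit : IsNumbering pit)
    (hpib : IsNumbering pib) (hτ : gridLengths pit pib lam v ∈ GState.openSimplex A)
    (hj : j ≤ lam a) :
    gridPoint pit lam (pullbackLengths G pit pib lam v) (offset pit lam a + j) =
      pullback G (gridLengths pit pib lam v) a
        (gridPoint pit lam v (offset pib lam a + j)) := by
  induction j with
  | zero =>
    simp only [add_zero, hpit.gridPoint_offset, fam.sum_pullbackLengths_branch hpib hτ]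
    rw [← fam.ub_gridLengths hpib hτ, fam.pullback_ub hτ, BranchSystem.ut, fam.pit_eq hτ]
  | succ j ih =>
    have hsucc := hpit.gridPoint_unitOffset_add_one (v := pullbackLengths G pit pib lam v)
      ⟨a, ⟨j, hj⟩⟩
    simp only [unitOffset, pullbackLengths] at hsucc ih
    rw [← add_assoc, hsucc, ih (Nat.le_of_succ_le hj), add_assoc, add_sub_cancel]

theorem mapsTo_pullbackLengths [Nonempty A] (fam : MarkedFamily pit pib S G)
    (hpit : IsNumbering pit) (hpib : IsNumbering pib) (hlam : ∀ a, 0 < lam a) :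
    Set.MapsTo (pullbackLengths G pit pib lam) (GState.openSimplex (Σ a, Fin (lam a)))
      (stdSimplex ℝ (Σ a, Fin (lam a))) := by
  intro v hv
  have hτ := gridLengths_mem_openSimplex hpit hpib hlam hv
  have hv0 : ∀ i, 0 ≤ v i := fun i => (hv.1 i).le
  refine ⟨fun i => ?_, ?_⟩
  · rw [pullbackLengths, unitOffset, add_assoc, sub_nonneg]
    exact fam.pullback_monotoneOn hτ i.1 (fam.gridPoint_mem_Icc hpib hτ hv0 i.2.isLt.le)
      (fam.gridPoint_mem_Icc hpib hτ hv0 i.2.isLt) (gridPoint_monotone hv0 (by omega))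
  rw [Fintype.sum_sigma]
  simp only [fam.sum_pullbackLengths_branch hpib hτ, fam.sum_lt hτ]

theorem continuousOn_pullbackLengths [Nonempty A] (fam : MarkedFamily pit pib S G)
    (hpit : IsNumbering pit) (hpib : IsNumbering pib) (hlam : ∀ a, 0 < lam a) :
    ContinuousOn (pullbackLengths G pit pib lam) (GState.openSimplex (Σ a, Fin (lam a))) := by
  have key (a : A) (j : ℕ) (hj : j ≤ lam a) : ContinuousOn (fun v =>
      pullback G (gridLengths pit pib lam v) a (gridPoint pit lam v (offset pib lam a + j)))
      (GState.openSimplex (Σ a, Fin (lam a))) :=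
    (fam.continuousOn_pullback a).comp
      (continuous_gridLengths.prodMk (continuous_gridPoint _)).continuousOn fun v hv =>
        have hτ := gridLengths_mem_openSimplex hpit hpib hlam hv
        ⟨hτ, fam.gridPoint_mem_Icc hpib hτ (fun i => (hv.1 i).le) hj⟩
  exact continuousOn_pi.2 fun i => (key i.1 _ i.2.isLt).sub (key i.1 _ i.2.isLt.le)

/-- The grid points of `v` are permuted by the closed branches of parameter `gridLengths v` as a
fixed point of `pullbackLengths` requires. On the boundary of the simplex, where `pullbackLengths`
is not continuous, this closed condition replaces the fixed point equation. -/
def IsPullbackFixed (G : (A → ℝ) → A → Set (ℝ × ℝ)) (pit pib lam : A → ℕ)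
    (v : (Σ a, Fin (lam a)) → ℝ) : Prop :=
  ∀ a, ∀ j ≤ lam a, (gridPoint pit lam v (offset pit lam a + j),
    gridPoint pit lam v (offset pib lam a + j)) ∈ G (gridLengths pit pib lam v) a

theorem IsPullbackFixed.ut_gridLengths (fam : MarkedFamily pit pib S G)
    (hpib : IsNumbering pib) (hτ : gridLengths pit pib lam v ∈ GState.openSimplex A)
    (hfix : IsPullbackFixed G pit pib lam v) (a : A) :
    (S (gridLengths pit pib lam v)).ut a = gridPoint pit lam v (offset pit lam a) := by
  have hcrit := fam.mem hτ ((fam.isExchange hτ).graph_ut_ub a)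
  rw [fam.ub_gridLengths hpib hτ] at hcrit
  exact fam.eq_of_mem (openSimplex_subset_closedSimplex hτ) hcrit (hfix a 0 (Nat.zero_le _))

theorem exists_isPullbackFixed [Nonempty A] (fam : MarkedFamily pit pib S G)
    (hpit : IsNumbering pit) (hpib : IsNumbering pib) (hlam : ∀ a, 0 < lam a) :
    ∃ v ∈ stdSimplex ℝ (Σ a, Fin (lam a)), IsPullbackFixed G pit pib lam v := by
  have : Nonempty (Σ a, Fin (lam a)) := ⟨⟨Classical.arbitrary A, ⟨0, hlam _⟩⟩⟩
  choose u hu hdist using fun n : ℕ => Brouwer.exists_dist_apply_le_of_openSimplex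
    (fam.mapsTo_pullbackLengths hpit hpib hlam) (fam.continuousOn_pullbackLengths hpit hpib hlam)
    (ε := 1 / ((n : ℝ) + 2)) (by positivity)
    ((div_lt_one (by positivity)).2 (by linarith [Nat.cast_nonneg (α := ℝ) n]))
  obtain ⟨v, hv, φ, hφ, hlim⟩ := (isCompact_stdSimplex ℝ (Σ a, Fin (lam a))).tendsto_subseq
    fun n => openSimplex_subset_closedSimplex (hu n)
  have small : Tendsto (fun n : ℕ => 1 / ((φ n : ℝ) + 2)) atTop (𝓝 0) :=
    tendsto_const_nhds.div_atTop (tendsto_atTop_add_const_right _ _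
      (tendsto_natCast_atTop_atTop.comp hφ.tendsto_atTop))
  have hlim' : Tendsto (fun n => pullbackLengths G pit pib lam (u (φ n))) atTop (𝓝 v) :=
    (tendsto_iff_of_dist (squeeze_zero (fun _ => dist_nonneg) (fun n => hdist (φ n)) small)).2 hlim
  refine ⟨v, hv, fun a j hj => ((fam.isClosed a).mem_of_tendsto
    (((continuous_gridLengths.tendsto v).comp hlim).prodMk_nhds
      ((((continuous_gridPoint _).tendsto v).comp hlim').prodMk_nhds
        (((continuous_gridPoint _).tendsto v).comp hlim)))
    (Eventually.of_forall fun n => ?_)).2⟩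
  have hτ := gridLengths_mem_openSimplex hpit hpib hlam (hu (φ n))
  refine ⟨openSimplex_subset_closedSimplex hτ, ?_⟩
  simp only [Function.comp_apply, fam.gridPoint_pullbackLengths hpit hpib hτ hj]
  exact fam.pullback_mem hτ (fam.gridPoint_mem_Icc hpib hτ (fun i => ((hu (φ n)).1 i).le) hj)

end MarkedFamily

theorem graph_iet_natCast {a : A} {m n : ℕ}
    (r : (iet (pit, pib) fun a => (lam a : ℝ)).graph a m n) :
    ∃ j < lam a, m = offset pit lam a + j ∧ n = offset pib lam a + j := by
  obtain ⟨⟨hm, hm'⟩, hn⟩ := r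
  simp only [offset_natCast] at hm hm' hn
  have hle : offset pit lam a ≤ m := by exact_mod_cast hm
  have hlt : m < offset pit lam a + lam a := by exact_mod_cast hm'
  have heq : n + offset pit lam a = m + offset pib lam a := by
    exact_mod_cast (by linarith : (n : ℝ) + offset pit lam a = m + offset pib lam a)
  exact ⟨m - offset pit lam a, by omega, by omega, by omega⟩

namespace MarkedFamily

variable {S : (A → ℝ) → BranchSystem A} {G : (A → ℝ) → A → Set (ℝ × ℝ)} [Nonempty A]

theorem IsPullbackFixed.mem_openSimplex (fam : MarkedFamily pit pib S G)
    (hpit : IsNumbering pit) (hpib : IsNumbering pib)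
    (ht : (iet (pit, pib) fun a => (lam a : ℝ)).IsNatTransitive)
    (hv : v ∈ stdSimplex ℝ (Σ a, Fin (lam a))) (hfix : IsPullbackFixed G pit pib lam v) :
    v ∈ GState.openSimplex (Σ a, Fin (lam a)) := by
  set X := gridPoint pit lam v
  have step {m n : ℕ} (h : (iet (pit, pib) fun a => (lam a : ℝ)).NatStep m n)
      (hm : X m = X (m + 1)) : X n = X (n + 1) := by
    obtain ⟨a, r⟩ := h
    obtain ⟨j, hj, rfl, rfl⟩ := graph_iet_natCast r
    exact (fam.fst_eq_iff (gridLengths_mem_closedSimplex hpit hpib hv) _ (hfix a j hj.le) _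
      (hfix a (j + 1) hj)).1 hm
  refine ⟨fun i => (hv.1 i).lt_of_ne' fun hi => ?_, hv.2⟩
  have hlt {m : ℕ} (hm : m < ∑ a, lam a) :
      (m : ℝ) < ∑ a, (iet (pit, pib) fun a => (lam a : ℝ)).lt a := by
    simp only [iet]
    exact_mod_cast hm
  have path {m n : ℕ} (h : Relation.ReflTransGen
      (iet (pit, pib) fun a => (lam a : ℝ)).NatStep m n) (hm : X m = X (m + 1)) :
      X n = X (n + 1) := by
    induction h with
    | refl => exact hm
    | tail _ h ih => exact step h ih
  have collapse : ∀ n < ∑ a, lam a, X n = X (n + 1) := fun n hn =>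
    path (ht (unitOffset pit lam i) n (hlt (hpit.unitOffset_lt_sum i)) (hlt hn))
      (by simp only [X, hpit.gridPoint_unitOffset_add_one, hi, add_zero])
  have hconst : ∀ n ≤ ∑ a, lam a, X n = 0 := fun n hn => by
    induction n with
    | zero => exact gridPoint_zero
    | succ n ih => exact (collapse n hn).symm.trans (ih (Nat.le_of_succ_le hn))
  exact zero_ne_one ((hconst _ le_rfl).symm.trans (hpit.gridPoint_sum.trans hv.2))

theorem IsPullbackFixed.graph_gridPoint (fam : MarkedFamily pit pib S G)
    (hpit : IsNumbering pit) (hpib : IsNumbering pib)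
    (hv : v ∈ GState.openSimplex (Σ a, Fin (lam a)))
    (hτ : gridLengths pit pib lam v ∈ GState.openSimplex A)
    (hfix : IsPullbackFixed G pit pib lam v) {a : A} {j : ℕ} (hj : j < lam a) :
    (S (gridLengths pit pib lam v)).graph a (gridPoint pit lam v (offset pit lam a + j))
      (gridPoint pit lam v (offset pib lam a + j)) := by
  have hsum := hpib.offset_add_le_sum (l := lam) (fun _ => Nat.zero_le _) a
  refine fam.graph_of_mem hτ (hfix a j hj.le) ⟨?_, ?_⟩
  · rw [fam.ub_gridLengths hpib hτ]
    exact gridPoint_monotone (fun i => (hv.1 i).le) (Nat.le_add_right _ _)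
  · rw [fam.ub_add_lb_gridLengths hpib hτ]
    exact hpit.gridPoint_lt hv.1 (by omega) hsum

theorem IsPullbackFixed.isConjOn_iet (fam : MarkedFamily pit pib S G)
    (hpit : IsNumbering pit) (hpib : IsNumbering pib)
    (hv : v ∈ GState.openSimplex (Σ a, Fin (lam a)))
    (hτ : gridLengths pit pib lam v ∈ GState.openSimplex A)
    (hfix : IsPullbackFixed G pit pib lam v) :
    IsConjOn (iet (pit, pib) fun a => (lam a : ℝ)) (S (gridLengths pit pib lam v))
      (fun x => gridPoint pit lam v ⌊x⌋₊) ((↑) '' Set.Iic (∑ a, lam a)) := by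
  have offset_le {p : A → ℕ} (hp : IsNumbering p) {a : A} {j : ℕ} (hj : j ≤ lam a) :
      offset p lam a + j ≤ ∑ a, lam a :=
    (Nat.add_le_add_left hj _).trans (hp.offset_add_le_sum (fun _ => Nat.zero_le _) a)
  have hut (a : A) : (iet (pit, pib) fun a => (lam a : ℝ)).ut a = offset pit lam a :=
    offset_natCast pit lam a
  have hub (a : A) : (iet (pit, pib) fun a => (lam a : ℝ)).ub a = offset pib lam a :=
    offset_natCast pib lam a
  refine ⟨fam.pit_eq hτ, fam.pib_eq hτ, fun a => hut a ▸ ⟨_, offset_le hpit (Nat.zero_le _), rfl⟩,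
    fun a => hub a ▸ ⟨_, offset_le hpib (Nat.zero_le _), rfl⟩, fun a => ?_, fun a => ?_,
    fun {a x y} r => ⟨?_, ?_⟩, fun {a x y} r => ?_, ?_⟩
  · rw [hut, Nat.floor_natCast, hfix.ut_gridLengths fam hpib hτ]
  · rw [hub, Nat.floor_natCast, fam.ub_gridLengths hpib hτ]
  · rintro ⟨m, -, rfl⟩
    obtain ⟨n, hn, rfl⟩ := (preservesNat_iet _ lam).exists_natCast r
    obtain ⟨j, hj, -, rfl⟩ := graph_iet_natCast hn
    exact ⟨_, offset_le hpib hj.le, rfl⟩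
  · rintro ⟨n, -, rfl⟩
    obtain ⟨m, rfl⟩ := (preservesNat_iet _ lam r).2 ⟨n, rfl⟩
    obtain ⟨j, hj, rfl, -⟩ := graph_iet_natCast r
    exact ⟨_, offset_le hpit hj.le, rfl⟩
  · rintro ⟨m, -, rfl⟩
    obtain ⟨n, hn, rfl⟩ := (preservesNat_iet _ lam).exists_natCast r
    obtain ⟨j, hj, rfl, rfl⟩ := graph_iet_natCast hn
    simp only [Nat.floor_natCast]
    exact hfix.graph_gridPoint fam hpit hpib hv hτ hj
  · rintro _ ⟨m, -, rfl⟩ _ ⟨n, hn, rfl⟩ hlt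
    simp only [Nat.floor_natCast]
    exact hpit.gridPoint_lt hv.1 (Nat.cast_lt.1 hlt) hn

theorem exists_isConjOn_iet (fam : MarkedFamily pit pib S G) (hpit : IsNumbering pit)
    (hpib : IsNumbering pib) (hlam : ∀ a, 0 < lam a)
    (ht : (iet (pit, pib) fun a => (lam a : ℝ)).IsNatTransitive) :
    ∃ τ ∈ GState.openSimplex A, ∃ φ X,
      IsConjOn (iet (pit, pib) fun a => (lam a : ℝ)) (S τ) φ X := by
  obtain ⟨v, hv, hfix⟩ := fam.exists_isPullbackFixed hpit hpib hlam
  have hv' := hfix.mem_openSimplex fam hpit hpib ht hv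
  have hτ := gridLengths_mem_openSimplex hpit hpib hlam hv'
  exact ⟨_, hτ, _, _, hfix.isConjOn_iet fam hpit hpib hv' hτ⟩

end MarkedFamily

end IntervalExchange

/-! ### Rauzy steps along a filter -/

namespace IntervalExchange

open Filter Topology

namespace BranchSystem

variable {ι A : Type*} [Fintype A] {U : Filter ι} {s : ι → BranchSystem A} {t : BranchSystem A}
  {a w l : A}

/-- The branches of the exchanges `s r` and their inverses are equicontinuous along the filter `U`.
This is expressed by means of families of points, and such families can be followed through the
Rauzy moves. -/
structure IsUniform (U : Filter ι) (s : ι → BranchSystem A) : Prop where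
  isExchange : ∀ᶠ r in U, (s r).IsExchange
  tendsto_iff : ∀ {a : A} {x y x' y' : ι → ℝ}, (∀ᶠ r in U, (s r).graph a (x r) (y r)) →
    (∀ᶠ r in U, (s r).graph a (x' r) (y' r)) →
    (Tendsto (fun r => x' r - x r) U (𝓝 0) ↔ Tendsto (fun r => y' r - y r) U (𝓝 0))

/-- The interval of the letter `a` shrinks to a point along `U`. -/
def Degenerates (U : Filter ι) (s : ι → BranchSystem A) (a : A) : Prop :=
  Tendsto (fun r => (s r).lt a) U (𝓝 0)

theorem exists_graph_of_topStep_loser {x y : ι → ℝ}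
    (h : ∀ᶠ r in U, ((s r).topStep w l).graph l (x r) (y r)) :
    ∃ z : ι → ℝ, (∀ᶠ r in U, (s r).graph l (x r) (z r)) ∧
      ∀ᶠ r in U, (s r).graph w (z r) (y r) := by
  obtain ⟨z, hz⟩ := skolem.1 (h.mono fun r => (s r).topStep_graph_loser.1)
  exact ⟨z, hz.mono fun _ h => h.1, hz.mono fun _ h => h.2⟩

theorem graph_of_topStep_of_ne (hwl : w ≠ l) (hl : a ≠ l) {x y : ℝ}
    (r : (t.topStep w l).graph a x y) : t.graph a x y := by
  rcases eq_or_ne a w with rfl | ha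
  · exact ((t.topStep_graph_winner hwl).1 r).1
  · exact (t.topStep_graph_of_ne ha hl).1 r

namespace IsUniform

theorem inverse (h : IsUniform U s) : IsUniform U fun r => (s r).inverse where
  isExchange := h.isExchange.mono fun _ h => h.inverse
  tendsto_iff hxy hxy' := (h.tendsto_iff hxy hxy').symm

theorem degenerates_inverse (h : IsUniform U s) (hz : Degenerates U s a) :
    Degenerates U (fun r => (s r).inverse) a := by
  have hmid : ∀ᶠ r in U, ∃ x, (s r).graph a x ((s r).ub a + (s r).lb a / 2) :=
    h.isExchange.mono fun r hs => hs.exists_left ⟨by linarith [hs.lb_pos a], by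
      linarith [hs.lb_pos a]⟩
  obtain ⟨x, hx⟩ := skolem.1 hmid
  have hx' : Tendsto (fun r => x r - (s r).ut a) U (𝓝 0) := by
    refine tendsto_of_tendsto_of_tendsto_of_le_of_le' tendsto_const_nhds hz ?_ ?_
    · filter_upwards [h.isExchange, hx] with r hs hr
      exact sub_nonneg.2 (hs.mem hr).1.1
    · filter_upwards [h.isExchange, hx] with r hs hr
      exact sub_le_iff_le_add'.2 (hs.mem hr).1.2.le
  have hhalf := ((h.tendsto_iff (h.isExchange.mono fun r hs => hs.graph_ut_ub a) hx).1
    hx').const_mul 2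
  rw [mul_zero] at hhalf
  refine hhalf.congr fun r => ?_
  exact (by ring : 2 * ((s r).ub a + (s r).lb a / 2 - (s r).ub a) = (s r).lb a)

theorem degenerates_inverse_iff (h : IsUniform U s) :
    Degenerates U (fun r => (s r).inverse) a ↔ Degenerates U s a :=
  ⟨h.inverse.degenerates_inverse, h.degenerates_inverse⟩

variable [U.NeBot]

theorem topStep (h : IsUniform U s) (c : ∀ᶠ r in U, (s r).TopWins w l) :
    IsUniform U fun r => (s r).topStep w l where
  isExchange := by
    filter_upwards [h.isExchange, c] with r hs c using c.isExchange_topStep hs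
  tendsto_iff {a x y x' y'} hxy hxy' := by
    obtain ⟨_, c₀⟩ := c.exists
    rcases eq_or_ne a l with rfl | hl
    · obtain ⟨z, hxz, hzy⟩ := exists_graph_of_topStep_loser hxy
      obtain ⟨z', hxz', hzy'⟩ := exists_graph_of_topStep_loser hxy'
      exact (h.tendsto_iff hxz hxz').trans (h.tendsto_iff hzy hzy')
    · exact h.tendsto_iff (hxy.mono fun r => graph_of_topStep_of_ne c₀.ne hl)
        (hxy'.mono fun r => graph_of_topStep_of_ne c₀.ne hl)

theorem step (h : IsUniform U s) {b : Bool} (c : ∀ᶠ r in U, (s r).CanStep b w l) :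
    IsUniform U fun r => (s r).step b w l := by
  cases b
  · exact (h.inverse.topStep c).inverse
  · exact h.topStep c

end IsUniform

end BranchSystem

/-- How the set `Z` of degenerating letters may change to `Z'` in a Rauzy step with winner `w` and
loser `l`. -/
structure IsDegenerationStep {A : Type*} (w l : A) (Z Z' : Set A) : Prop where
  ne : w ≠ l
  subset : Z ⊆ Z'
  mem_of_ne : ∀ {a}, a ≠ w → a ∈ Z' → a ∈ Z
  winner_mem : w ∈ Z' → l ∈ Z → w ∈ Z
  loser_mem : w ∈ Z → l ∈ Z

namespace BranchSystem.IsUniform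

variable {ι A : Type*} [Fintype A] {U : Filter ι} [U.NeBot] {s : ι → BranchSystem A} {w l : A}

theorem isDegenerationStep_topStep (h : IsUniform U s) (c : ∀ᶠ r in U, (s r).TopWins w l) :
    IsDegenerationStep w l {a | Degenerates U s a}
      {a | Degenerates U (fun r => (s r).topStep w l) a} := by
  obtain ⟨_, c₀⟩ := c.exists
  have off_winner {a : A} (ha : a ≠ w) :
      Degenerates U (fun r => (s r).topStep w l) a ↔ Degenerates U s a := by
    simp only [Degenerates, topStep_lt_of_ne _ ha]
  have loser_of_winner (hw : Degenerates U s w) : Degenerates U s l := by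
    rw [← h.degenerates_inverse_iff]
    refine tendsto_of_tendsto_of_tendsto_of_le_of_le' tendsto_const_nhds hw ?_ ?_
    · filter_upwards [h.isExchange] with r hs using (hs.lb_pos l).le
    · filter_upwards [h.isExchange, c] with r hs c
      rw [BranchSystem.inverse]
      linarith [c.ub_add_lb hs, c.ut_add_lt hs, c.ut_lt_ub]
  have tendsto_lb (hl : Degenerates U s l) : Tendsto (fun r => (s r).lb l) U (𝓝 0) :=
    h.degenerates_inverse_iff.2 hl
  refine ⟨c₀.ne, fun a ha => ?_, fun ha => (off_winner ha).1, fun hw hl => ?_, loser_of_winner⟩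
  · rcases eq_or_ne a w with rfl | haw
    · simpa only [Set.mem_ofPred_eq, Degenerates, topStep_lt_winner, sub_zero] using
        Tendsto.sub ha (tendsto_lb (loser_of_winner ha))
    · exact (off_winner haw).2 ha
  · simpa only [Set.mem_ofPred_eq, Degenerates, topStep_lt_winner, sub_add_cancel, add_zero] using
      Tendsto.add hw (tendsto_lb hl)

theorem isDegenerationStep_step (h : IsUniform U s) {b : Bool}
    (c : ∀ᶠ r in U, (s r).CanStep b w l) :
    IsDegenerationStep w l {a | Degenerates U s a}
      {a | Degenerates U (fun r => (s r).step b w l) a} := by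
  cases b
  · have key := h.inverse.isDegenerationStep_topStep c
    simp only [h.degenerates_inverse_iff, ← (h.inverse.topStep c).degenerates_inverse_iff] at key
    exact key
  · exact h.isDegenerationStep_topStep c

end BranchSystem.IsUniform

section DegenerationSteps

variable {A : Type*} {w l : A} {Z Z' : Set A}

theorem IsDegenerationStep.ne_univ (h : IsDegenerationStep w l Z Z') (hZ : Z ≠ Set.univ) :
    Z' ≠ Set.univ := by
  rintro rfl
  refine hZ (Set.eq_univ_of_forall fun a => ?_)
  rcases eq_or_ne a w with rfl | ha
  · exact h.winner_mem trivial (h.mem_of_ne h.ne.symm trivial)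
  · exact h.mem_of_ne ha trivial

/-- Once the set of degenerating letters has become stationary, winners outside of it are followed
by winners outside of it only; so a letter in it could never win again. -/
theorem eq_empty_of_isDegenerationStep [Finite A] {w l : ℕ → A} {Z : ℕ → Set A}
    (hkeane : ∀ a, ∀ N : ℕ, ∃ k : ℕ, N ≤ k ∧ w k = a)
    (hwin : ∀ k, w (k + 1) ≠ w k → l (k + 1) = w k)
    (hstep : ∀ k, IsDegenerationStep (w k) (l k) (Z k) (Z (k + 1))) (h0 : Z 0 ≠ Set.univ) (k : ℕ) :
    Z k = ∅ := by
  have hne (k : ℕ) : Z k ≠ Set.univ := by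
    induction k with
    | zero => exact h0
    | succ k ih => exact (hstep k).ne_univ ih
  have hmono : Monotone Z := monotone_nat_of_le_succ fun k => (hstep k).subset
  obtain ⟨n, hn⟩ := WellFoundedGT.monotone_chain_condition (⟨Z, hmono⟩ : ℕ →o Set A)
  replace hn : ∀ m, n ≤ m → Z n = Z m := hn
  obtain ⟨b, hb⟩ := (Set.ne_univ_iff_exists_notMem _).1 (hne n)
  obtain ⟨i, hni, rfl⟩ := hkeane b n
  have winner_notMem (m : ℕ) (hm : i ≤ m) : w m ∉ Z n := by
    induction m, hm using Nat.le_induction with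
    | base => exact hb
    | succ m hm ih =>
      intro hmem
      have hloser : l (m + 1) ∈ Z n := hn (m + 1) (by omega) ▸
        (hstep (m + 1)).loser_mem (hn (m + 1) (by omega) ▸ hmem)
      exact ih (hwin m (fun heq => ih (heq ▸ hmem)) ▸ hloser)
  have hZn : Z n = ∅ := Set.eq_empty_of_forall_notMem fun a ha => by
    obtain ⟨j, hij, rfl⟩ := hkeane a i
    exact winner_notMem j hij ha
  exact Set.subset_empty_iff.1 ((hmono (le_max_left k n)).trans (hn _ (le_max_right k n) ▸ hZn.le))

end DegenerationSteps

namespace BranchSystem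

variable {ι A : Type*} [Fintype A] {U : Filter ι} {s : ι → BranchSystem A} {t : BranchSystem A}
  {w l : A}

/-- The exchanges `s r` converge to the exchange `t` along `U`. The convergence of the branches and
of their inverses is expressed by means of families of points. -/
structure ConvergesTo (U : Filter ι) (s : ι → BranchSystem A) (t : BranchSystem A) : Prop where
  isExchange : ∀ᶠ r in U, (s r).IsExchange
  isExchange_limit : t.IsExchange
  pit_eq : ∀ᶠ r in U, (s r).pit = t.pit
  pib_eq : ∀ᶠ r in U, (s r).pib = t.pib
  tendsto_lt : ∀ a, Tendsto (fun r => (s r).lt a) U (𝓝 (t.lt a))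
  tendsto_lb : ∀ a, Tendsto (fun r => (s r).lb a) U (𝓝 (t.lb a))
  tendsto_iff : ∀ {a : A} {x y : ι → ℝ} {x₀ y₀ : ℝ}, (∀ᶠ r in U, (s r).graph a (x r) (y r)) →
    t.graph a x₀ y₀ → (Tendsto x U (𝓝 x₀) ↔ Tendsto y U (𝓝 y₀))

theorem tendsto_offset {p : A → ℕ} {q : ι → A → ℕ} {m : A → ℝ} {n : ι → A → ℝ}
    (hq : ∀ᶠ r in U, q r = p) (hn : ∀ a, Tendsto (fun r => n r a) U (𝓝 (m a))) (a : A) :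
    Tendsto (fun r => offset (q r) (n r) a) U (𝓝 (offset p m a)) := by
  refine Tendsto.congr' (f₁ := fun r => offset p (n r) a) (hq.mono fun r hr => hr ▸ rfl) ?_
  exact tendsto_finsetSum _ fun x _ => hn x

namespace ConvergesTo

theorem inverse (h : ConvergesTo U s t) : ConvergesTo U (fun r => (s r).inverse) t.inverse where
  isExchange := h.isExchange.mono fun _ h => h.inverse
  isExchange_limit := h.isExchange_limit.inverse
  pit_eq := h.pib_eq
  pib_eq := h.pit_eq
  tendsto_lt := h.tendsto_lb
  tendsto_lb := h.tendsto_lt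
  tendsto_iff hxy h₀ := (h.tendsto_iff hxy h₀).symm

theorem tendsto_ut (h : ConvergesTo U s t) (a : A) :
    Tendsto (fun r => (s r).ut a) U (𝓝 (t.ut a)) := tendsto_offset h.pit_eq h.tendsto_lt a

theorem tendsto_ub (h : ConvergesTo U s t) (a : A) :
    Tendsto (fun r => (s r).ub a) U (𝓝 (t.ub a)) := tendsto_offset h.pib_eq h.tendsto_lb a

theorem topWins [U.NeBot] (h : ConvergesTo U s t) (c : ∀ᶠ r in U, (s r).TopWins w l)
    (hw : ¬ Degenerates U (fun r => (s r).topStep w l) w) : t.TopWins w l := by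
  obtain ⟨r, c₀, hpit, hpib⟩ := (c.and (h.pit_eq.and h.pib_eq)).exists
  refine ⟨hpit ▸ c₀.pit_winner, hpib ▸ c₀.pib_loser, c₀.ne, lt_of_le_of_ne ?_ fun heq => hw ?_⟩
  · exact le_of_tendsto_of_tendsto (h.tendsto_ut w) (h.tendsto_ub l)
      (c.mono fun r c => c.ut_lt_ub.le)
  · refine Tendsto.congr' ?_ (sub_eq_zero.2 heq.symm ▸ (h.tendsto_ub l).sub (h.tendsto_ut w))
    filter_upwards [c, h.isExchange] with r c hs
    rw [topStep_lt_winner]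
    linarith [c.ub_add_lb hs, c.ut_add_lt hs]

theorem tendsto_cut (h : ConvergesTo U s t) (c : ∀ᶠ r in U, (s r).TopWins w l)
    (ct : t.TopWins w l) : Tendsto (fun r => (s r).cut w l) U (𝓝 (t.cut w l)) := by
  refine (h.tendsto_iff ?_ (ct.graph_cut h.isExchange_limit)).1 (h.tendsto_ub l)
  filter_upwards [h.isExchange, c] with r hs c using c.graph_cut hs

theorem topStep (h : ConvergesTo U s t) (c : ∀ᶠ r in U, (s r).TopWins w l)
    (ct : t.TopWins w l) : ConvergesTo U (fun r => (s r).topStep w l) (t.topStep w l) where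
  isExchange := by
    filter_upwards [h.isExchange, c] with r hs c using c.isExchange_topStep hs
  isExchange_limit := ct.isExchange_topStep h.isExchange_limit
  pit_eq := h.pit_eq
  pib_eq := h.pib_eq.mono fun _ hr => congrArg (rauzyMove · w l) hr
  tendsto_lt a := by
    rcases eq_or_ne a w with rfl | ha
    · simpa only [topStep_lt_winner] using (h.tendsto_lt a).sub (h.tendsto_lb l)
    · simpa only [topStep_lt_of_ne _ ha] using h.tendsto_lt a
  tendsto_lb a := by
    have hcut := h.tendsto_cut c ct
    rcases eq_or_ne a l with rfl | hl
    · simpa only [topStep_lb_loser] using ((h.tendsto_ub w).add (h.tendsto_lb w)).sub hcut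
    rcases eq_or_ne a w with rfl | ha
    · simpa only [topStep_lb_winner _ ct.ne] using hcut.sub (h.tendsto_ub a)
    · simpa only [topStep_lb_of_ne _ ha hl] using h.tendsto_lb a
  tendsto_iff {a x y x₀ y₀} hxy h₀ := by
    rcases eq_or_ne a l with rfl | hl
    · obtain ⟨z, hxz, hzy⟩ := exists_graph_of_topStep_loser hxy
      obtain ⟨z₀, hxz₀, hzy₀⟩ := t.topStep_graph_loser.1 h₀
      exact (h.tendsto_iff hxz hxz₀).trans (h.tendsto_iff hzy hzy₀)
    · exact h.tendsto_iff (hxy.mono fun r => graph_of_topStep_of_ne ct.ne hl)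
        (graph_of_topStep_of_ne ct.ne hl h₀)

theorem canStep [U.NeBot] {b : Bool} (h : ConvergesTo U s t) (hu : IsUniform U s)
    (c : ∀ᶠ r in U, (s r).CanStep b w l) (hw : ¬ Degenerates U (fun r => (s r).step b w l) w) :
    t.CanStep b w l := by
  cases b
  · exact h.inverse.topWins c (mt (hu.inverse.topStep c).degenerates_inverse hw)
  · exact h.topWins c hw

theorem step {b : Bool} (h : ConvergesTo U s t) (c : ∀ᶠ r in U, (s r).CanStep b w l)
    (ct : t.CanStep b w l) : ConvergesTo U (fun r => (s r).step b w l) (t.step b w l) := by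
  cases b
  · exact (h.inverse.topStep c ct).inverse
  · exact h.topStep c ct

end ConvergesTo

end BranchSystem

end IntervalExchange

/-! ### Limits of members of a full family -/

namespace IntervalExchange

open Filter Topology BranchSystem

theorem tendsto_iff_eq_of_tendsto {ι X : Type*} [TopologicalSpace X] [T2Space X] {U : Filter ι}
    [U.NeBot] {x : ι → X} {p q : X} (h : Tendsto x U (𝓝 p)) : Tendsto x U (𝓝 q) ↔ p = q :=
  ⟨tendsto_nhds_unique h, fun heq => heq ▸ h⟩

namespace MarkedFamily

variable {A : Type*} [Fintype A] {pit pib : A → ℕ} {S : (A → ℝ) → BranchSystem A}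
  {G : (A → ℝ) → A → Set (ℝ × ℝ)}

theorem mem_Icc_of_graph (fam : MarkedFamily pit pib S G) {τ : A → ℝ}
    (hτ : τ ∈ GState.openSimplex A) {a : A} {x y : ℝ} (r : (S τ).graph a x y) :
    (x, y) ∈ Set.Icc (0 : ℝ) 1 ×ˢ Set.Icc (0 : ℝ) 1 := by
  have h := fam.isExchange hτ
  obtain ⟨hx, hy⟩ := h.mem r
  have htop := h.pit.offset_add_le_sum (fun b => (h.lt_pos b).le) a
  have hbot := h.pib.offset_add_le_sum (fun b => (h.lb_pos b).le) a
  rw [fam.sum_lt hτ] at htop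
  rw [← h.sum_eq, fam.sum_lt hτ] at hbot
  exact ⟨⟨(offset_nonneg (fun b => (h.lt_pos b).le) a).trans hx.1, hx.2.le.trans htop⟩,
    (offset_nonneg (fun b => (h.lb_pos b).le) a).trans hy.1, hy.2.le.trans hbot⟩

section Limits

variable {ι : Type*} {U : Ultrafilter ι} {τ : ι → A → ℝ} {τ₀ : A → ℝ}

theorem exists_tendsto_of_graph (fam : MarkedFamily pit pib S G)
    (hτ : ∀ r, τ r ∈ GState.openSimplex A) (hlim : Tendsto τ U (𝓝 τ₀)) {a : A} {x y : ι → ℝ}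
    (h : ∀ᶠ r in (U : Filter ι), (S (τ r)).graph a (x r) (y r)) :
    ∃ p ∈ G τ₀ a, Tendsto x U (𝓝 p.1) ∧ Tendsto y U (𝓝 p.2) := by
  obtain ⟨p, -, hp⟩ := (isCompact_Icc.prod isCompact_Icc).ultrafilter_le_nhds'
    (U.map fun r => (x r, y r)) (h.mono fun r hr => fam.mem_Icc_of_graph (hτ r) hr)
  have hp' : Tendsto (fun r => (x r, y r)) U (𝓝 p) := hp
  refine ⟨p, ((fam.isClosed a).mem_of_tendsto (hlim.prodMk_nhds hp') (h.mono fun r hr =>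
    ⟨openSimplex_subset_closedSimplex (hτ r), fam.mem (hτ r) hr⟩)).2,
    (continuous_fst.tendsto p).comp hp', (continuous_snd.tendsto p).comp hp'⟩

theorem isUniform (fam : MarkedFamily pit pib S G) (hτ : ∀ r, τ r ∈ GState.openSimplex A)
    (hτ₀ : τ₀ ∈ GState.closedSimplex A) (hlim : Tendsto τ U (𝓝 τ₀)) :
    IsUniform U fun r => S (τ r) where
  isExchange := Eventually.of_forall fun r => fam.isExchange (hτ r)
  tendsto_iff hxy hxy' := by
    obtain ⟨p, hp, hpx, hpy⟩ := fam.exists_tendsto_of_graph hτ hlim hxy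
    obtain ⟨q, hq, hqx, hqy⟩ := fam.exists_tendsto_of_graph hτ hlim hxy'
    rw [tendsto_iff_eq_of_tendsto (hqx.sub hpx), tendsto_iff_eq_of_tendsto (hqy.sub hpy),
      sub_eq_zero, sub_eq_zero]
    exact fam.fst_eq_iff hτ₀ q hq p hp

theorem tendsto_graph_iff (fam : MarkedFamily pit pib S G) (hτ : ∀ r, τ r ∈ GState.openSimplex A)
    (hτ₀ : τ₀ ∈ GState.openSimplex A) (hlim : Tendsto τ U (𝓝 τ₀)) {a : A} {x y : ι → ℝ} {x₀ y₀ : ℝ}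
    (hxy : ∀ᶠ r in (U : Filter ι), (S (τ r)).graph a (x r) (y r)) (h₀ : (S τ₀).graph a x₀ y₀) :
    Tendsto x U (𝓝 x₀) ↔ Tendsto y U (𝓝 y₀) := by
  obtain ⟨p, hp, hpx, hpy⟩ := fam.exists_tendsto_of_graph hτ hlim hxy
  rw [tendsto_iff_eq_of_tendsto hpx, tendsto_iff_eq_of_tendsto hpy]
  exact fam.fst_eq_iff (openSimplex_subset_closedSimplex hτ₀) p hp _ (fam.mem hτ₀ h₀)

theorem tendsto_lb (fam : MarkedFamily pit pib S G) (hτ : ∀ r, τ r ∈ GState.openSimplex A)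
    (hlim : Tendsto τ U (𝓝 τ₀)) (a : A) : Tendsto (fun r => (S (τ r)).lb a) U (𝓝 (τ₀ a)) := by
  simpa only [fam.lb_eq (hτ _)] using tendsto_pi_nhds.1 hlim a

theorem tendsto_ub (fam : MarkedFamily pit pib S G) (hτ : ∀ r, τ r ∈ GState.openSimplex A)
    (hτ₀ : τ₀ ∈ GState.openSimplex A) (hlim : Tendsto τ U (𝓝 τ₀)) (a : A) :
    Tendsto (fun r => (S (τ r)).ub a) U (𝓝 ((S τ₀).ub a)) :=
  tendsto_offset (Eventually.of_forall fun r => (fam.pib_eq (hτ r)).trans (fam.pib_eq hτ₀).symm)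
    (fun a => by rw [fam.lb_eq hτ₀]; exact fam.tendsto_lb hτ hlim a) a

theorem tendsto_ut (fam : MarkedFamily pit pib S G) (hτ : ∀ r, τ r ∈ GState.openSimplex A)
    (hτ₀ : τ₀ ∈ GState.openSimplex A) (hlim : Tendsto τ U (𝓝 τ₀)) (a : A) :
    Tendsto (fun r => (S (τ r)).ut a) U (𝓝 ((S τ₀).ut a)) :=
  (fam.tendsto_graph_iff hτ hτ₀ hlim
    (Eventually.of_forall fun r => (fam.isExchange (hτ r)).graph_ut_ub a)
    ((fam.isExchange hτ₀).graph_ut_ub a)).2 (fam.tendsto_ub hτ hτ₀ hlim a)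

theorem tendsto_lt (fam : MarkedFamily pit pib S G) (hτ : ∀ r, τ r ∈ GState.openSimplex A)
    (hτ₀ : τ₀ ∈ GState.openSimplex A) (hlim : Tendsto τ U (𝓝 τ₀)) (a : A) :
    Tendsto (fun r => (S (τ r)).lt a) U (𝓝 ((S τ₀).lt a)) := by
  have hmem (r : ι) : (S (τ r)).lt a ∈ Set.Icc (0 : ℝ) 1 :=
    ⟨((fam.isExchange (hτ r)).lt_pos a).le, fam.sum_lt (hτ r) ▸ Finset.single_le_sum
      (fun b _ => ((fam.isExchange (hτ r)).lt_pos b).le) (Finset.mem_univ a)⟩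
  obtain ⟨L, -, hL⟩ := isCompact_Icc.ultrafilter_le_nhds' (U.map fun r => (S (τ r)).lt a)
    (show ∀ᶠ r in (U : Filter ι), (S (τ r)).lt a ∈ Set.Icc 0 1 from Eventually.of_forall hmem)
  have hL' : Tendsto (fun r => (S (τ r)).lt a) U (𝓝 L) := hL
  have hlb := fam.tendsto_lb hτ hlim a
  rw [← fam.lb_eq hτ₀] at hlb
  have hend := (fam.isClosed a).mem_of_tendsto
    (hlim.prodMk_nhds (((fam.tendsto_ut hτ hτ₀ hlim a).add hL').prodMk_nhds
      ((fam.tendsto_ub hτ hτ₀ hlim a).add hlb)))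
    (Eventually.of_forall fun r => ⟨openSimplex_subset_closedSimplex (hτ r), fam.end_mem (hτ r) a⟩)
  have heq := fam.eq_of_mem (openSimplex_subset_closedSimplex hτ₀) hend.2 (fam.end_mem hτ₀ a)
  exact add_left_cancel heq ▸ hL'

theorem convergesTo (fam : MarkedFamily pit pib S G) (hτ : ∀ r, τ r ∈ GState.openSimplex A)
    (hτ₀ : τ₀ ∈ GState.openSimplex A) (hlim : Tendsto τ U (𝓝 τ₀)) :
    ConvergesTo U (fun r => S (τ r)) (S τ₀) where
  isExchange := Eventually.of_forall fun r => fam.isExchange (hτ r)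
  isExchange_limit := fam.isExchange hτ₀
  pit_eq := Eventually.of_forall fun r => (fam.pit_eq (hτ r)).trans (fam.pit_eq hτ₀).symm
  pib_eq := Eventually.of_forall fun r => (fam.pib_eq (hτ r)).trans (fam.pib_eq hτ₀).symm
  tendsto_lt := fam.tendsto_lt hτ hτ₀ hlim
  tendsto_lb a := by rw [fam.lb_eq hτ₀]; exact fam.tendsto_lb hτ hlim a
  tendsto_iff := fam.tendsto_graph_iff hτ hτ₀ hlim

variable {b : ℕ → Bool} {w l : ℕ → A}

theorem isUniform_run (fam : MarkedFamily pit pib S G) (hτ : ∀ r, τ r ∈ GState.openSimplex A)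
    (hτ₀ : τ₀ ∈ GState.closedSimplex A) (hlim : Tendsto τ U (𝓝 τ₀))
    (c : ∀ k, ∀ᶠ r in (U : Filter ι), (run b w l (S (τ r)) k).CanStep (b k) (w k) (l k)) (k : ℕ) :
    IsUniform U fun r => run b w l (S (τ r)) k := by
  induction k with
  | zero => exact fam.isUniform hτ hτ₀ hlim
  | succ k ih => exact ih.step (c k)

theorem degenerates_iff (fam : MarkedFamily pit pib S G) (hτ : ∀ r, τ r ∈ GState.openSimplex A)
    (hτ₀ : τ₀ ∈ GState.closedSimplex A) (hlim : Tendsto τ U (𝓝 τ₀)) {a : A} :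
    Degenerates U (fun r => S (τ r)) a ↔ τ₀ a = 0 := by
  rw [← (fam.isUniform hτ hτ₀ hlim).degenerates_inverse_iff]
  exact tendsto_iff_eq_of_tendsto (fam.tendsto_lb hτ hlim a)

theorem not_degenerates_run (fam : MarkedFamily pit pib S G)
    (hτ : ∀ r, τ r ∈ GState.openSimplex A) (hτ₀ : τ₀ ∈ GState.closedSimplex A)
    (hlim : Tendsto τ U (𝓝 τ₀)) (hkeane : ∀ a, ∀ N : ℕ, ∃ k : ℕ, N ≤ k ∧ w k = a)
    (hwin : ∀ k, w (k + 1) ≠ w k → l (k + 1) = w k)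
    (c : ∀ k, ∀ᶠ r in (U : Filter ι), (run b w l (S (τ r)) k).CanStep (b k) (w k) (l k)) (k : ℕ)
    (a : A) : ¬ Degenerates U (fun r => run b w l (S (τ r)) k) a := by
  have hempty := eq_empty_of_isDegenerationStep hkeane hwin
    (fun k => (fam.isUniform_run hτ hτ₀ hlim c k).isDegenerationStep_step (c k)) ?_ k
  · exact Set.eq_empty_iff_forall_notMem.1 hempty a
  · intro huniv
    have hzero (a : A) : τ₀ a = 0 :=
      (fam.degenerates_iff hτ hτ₀ hlim).1 (Set.eq_univ_iff_forall.1 huniv a)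
    exact zero_ne_one ((Finset.sum_eq_zero fun a _ => hzero a).symm.trans hτ₀.2)

theorem convergesTo_run (fam : MarkedFamily pit pib S G) (hτ : ∀ r, τ r ∈ GState.openSimplex A)
    (hτ₀ : τ₀ ∈ GState.openSimplex A) (hlim : Tendsto τ U (𝓝 τ₀))
    (c : ∀ k, ∀ᶠ r in (U : Filter ι), (run b w l (S (τ r)) k).CanStep (b k) (w k) (l k))
    (hdeg : ∀ k a, ¬ Degenerates U (fun r => run b w l (S (τ r)) k) a) (k : ℕ) :
    ConvergesTo U (fun r => run b w l (S (τ r)) k) (run b w l (S τ₀) k) ∧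
      (run b w l (S τ₀) k).CanStep (b k) (w k) (l k) := by
  have canStep_limit (k : ℕ)
      (h : ConvergesTo U (fun r => run b w l (S (τ r)) k) (run b w l (S τ₀) k)) :
      (run b w l (S τ₀) k).CanStep (b k) (w k) (l k) :=
    h.canStep (fam.isUniform_run hτ (openSimplex_subset_closedSimplex hτ₀) hlim c k) (c k)
      (hdeg (k + 1) (w k))
  suffices h : ConvergesTo U (fun r => run b w l (S (τ r)) k) (run b w l (S τ₀) k) from
    ⟨h, canStep_limit k h⟩
  induction k with
  | zero => exact fam.convergesTo hτ hτ₀ hlim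
  | succ k ih => exact ih.step (c k) (canStep_limit k ih)

end Limits

theorem exists_forall_canStep_run (fam : MarkedFamily pit pib S G) {b : ℕ → Bool} {w l : ℕ → A}
    (hkeane : ∀ a, ∀ N : ℕ, ∃ k : ℕ, N ≤ k ∧ w k = a)
    (hwin : ∀ k, w (k + 1) ≠ w k → l (k + 1) = w k)
    (hfinite : ∀ n, ∃ τ ∈ GState.openSimplex A, Follows b w l 0 (S τ) n) :
    ∃ τ ∈ GState.openSimplex A, ∀ k, (run b w l (S τ) k).CanStep (b k) (w k) (l k) := by
  choose τ hτ hfollows using hfinite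
  obtain ⟨τ₀, hτ₀, hlim⟩ := (isCompact_stdSimplex ℝ A).ultrafilter_le_nhds'
    ((hyperfilter ℕ).map τ) (show ∀ᶠ r in (hyperfilter ℕ : Filter ℕ), τ r ∈ stdSimplex ℝ A from
      Eventually.of_forall fun r => openSimplex_subset_closedSimplex (hτ r))
  have hlim' : Tendsto τ (hyperfilter ℕ) (𝓝 τ₀) := hlim
  have c (k : ℕ) : ∀ᶠ r in (hyperfilter ℕ : Filter ℕ),
      (run b w l (S (τ r)) k).CanStep (b k) (w k) (l k) :=
    ((eventually_gt_atTop k).filter_mono Nat.hyperfilter_le_atTop).mono fun r hr =>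
      Follows.canStep_run (k := 0) (hfollows r) k (Nat.zero_le k) (by omega)
  have hdeg := fam.not_degenerates_run hτ hτ₀ hlim' hkeane hwin c
  have hopen : τ₀ ∈ GState.openSimplex A :=
    ⟨fun a => (hτ₀.1 a).lt_of_ne' fun h => hdeg 0 a ((fam.degenerates_iff hτ hτ₀ hlim').2 h), hτ₀.2⟩
  exact ⟨τ₀, hopen, fun k => (fam.convergesTo_run hτ hopen hlim' c hdeg k).2⟩

end MarkedFamily

end IntervalExchange

/-! ### The full family theorem -/

namespace IntervalExchange

open BranchSystem

variable {A : Type*} [Fintype A] {b : ℕ → Bool} {w l : ℕ → A}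

theorem exists_forall_rauzyStep_of_canStep_run {g₀ : GState A} (h : (ofGState g₀).IsExchange)
    (c : ∀ k, (run b w l (ofGState g₀) k).CanStep (b k) (w k) (l k)) :
    ∃ g : ℕ → GState A, g 0 = g₀ ∧ ∀ k, (g k).RauzyStep (g (k + 1)) (w k) (l k) := by
  let g : ℕ → GState A
    | 0 => g₀
    | k + 1 => (run b w l (ofGState g₀) (k + 1)).toGState
  have hrun (k : ℕ) : (run b w l (ofGState g₀) k).IsExchange := h.run fun j _ => c j
  have hg : ∀ k, ofGState (g k) = run b w l (ofGState g₀) k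
    | 0 => rfl
    | k + 1 => ofGState_toGState (hrun (k + 1))
  refine ⟨g, rfl, fun k => rauzyStep_of_step (b := b k) ?_ ?_ ?_⟩
  · exact hg k ▸ hrun k
  · exact hg k ▸ c k
  · exact (hg (k + 1)).trans (hg k ▸ rfl)

theorem hasTransitiveLengths_of_exists_cyclicDatum {P : Datum A} (hP : IsDatum P)
    (hcyc : ∃ Q : Datum A, Relation.ReflTransGen (GState.CombStep (Fintype.card A)) P Q ∧
      GState.CyclicDatum Q.1 Q.2) : HasTransitiveLengths P := by
  obtain ⟨Q, hPQ, hQ⟩ := hcyc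
  have hPQ := reflTransGen_adj_of_combStep hPQ
  have hQ := hasTransitiveLengths_of_cyclicDatum (isDatum_of_reflTransGen_adj hPQ hP) hQ
  exact hQ.of_reflTransGen hPQ hP

theorem MarkedFamily.exists_follows [Nonempty A] {D : ℕ → Datum A} {S : (A → ℝ) → BranchSystem A}
    {G : (A → ℝ) → A → Set (ℝ × ℝ)} (fam : MarkedFamily (D 0).1 (D 0).2 S G)
    (hD : IsDatum (D 0)) (ht : HasTransitiveLengths (D 0))
    (hs : ∀ k, IsArrow (b k) (D k) (D (k + 1)) (w k) (l k)) (n : ℕ) :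
    ∃ τ ∈ GState.openSimplex A, Follows b w l 0 (S τ) n := by
  obtain ⟨lam, hlam, htrans, hfollows⟩ := exists_iet_isNatTransitive_follows hD ht hs n 0
  obtain ⟨τ, hτ, φ, X, hconj⟩ := fam.exists_isConjOn_iet hD.top hD.bot hlam htrans
  exact ⟨τ, hτ, hconj.follows (isExchange_iet hD fun a => Nat.cast_pos.2 (hlam a))
    (fam.isExchange hτ) hfollows⟩

end IntervalExchange

open IntervalExchange in
/-- The Rauzy path is given by its data `D`, types `b`, winners `w` and losers `l`. -/
theorem full_family_theorem_general {A : Type*} [Fintype A] {D : ℕ → Datum A} {b : ℕ → Bool}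
    {w l : ℕ → A} {F : (A → ℝ) → GState A} (hD : IsDatum (D 0))
    (hcyc : ∃ P : Datum A,
      Relation.ReflTransGen (GState.CombStep (Fintype.card A)) (D 0) P ∧
      GState.CyclicDatum P.1 P.2)
    (hF : GState.FullFamily (D 0).1 (D 0).2 F)
    (hs : ∀ k, IsArrow (b k) (D k) (D (k + 1)) (w k) (l k))
    (hkeane : ∀ a : A, ∀ N : ℕ, ∃ k : ℕ, N ≤ k ∧ w k = a) :
    ∃ τ ∈ GState.openSimplex A, ∃ g : ℕ → GState A, g 0 = F τ ∧
      ∀ k : ℕ, (g k).RauzyStep (g (k + 1)) (w k) (l k) := by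
  have : Nonempty A := ⟨w 0⟩
  obtain ⟨G, fam⟩ := exists_markedFamily hD.bot hF
  have ht := hasTransitiveLengths_of_exists_cyclicDatum hD hcyc
  have hwin (k : ℕ) (hne : w (k + 1) ≠ w k) : l (k + 1) = w k :=
    (hs k).loser_eq_winner (hs (k + 1)) (isDatum_path hD hs (k + 1)) hne
  obtain ⟨τ, hτ, hstep⟩ := fam.exists_forall_canStep_run hkeane hwin (fam.exists_follows hD ht hs)
  exact ⟨τ, hτ, exists_forall_rauzyStep_of_canStep_run (fam.isExchange hτ) hstep⟩

open GState in
/-- (Full Family Theorem.)  Let `π` be an admissible combinatorial datum whose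
Rauzy class contains a cyclic combinatorial datum, and `(f_τ)_{τ∈Δ^𝒜}` a full
family of GIETs over `π`.  Then for every Keane IET `T` with combinatorial
datum `π` on `[0,1)` there is `τ ∈ Δ^𝒜` such that `f_τ` has the same infinite
Rauzy renormalization path as `T`. -/
theorem full_family_theorem
    {A : Type*} [Fintype A] [DecidableEq A]
    (h2 : 2 ≤ Fintype.card A)
    (pit pib : A → ℕ)
    (hpit : Set.BijOn pit Set.univ (Set.Ico 1 (Fintype.card A + 1)))
    (hpib : Set.BijOn pib Set.univ (Set.Ico 1 (Fintype.card A + 1)))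
    (hadm : ∀ k : ℕ, 1 ≤ k → k < Fintype.card A →
      {a : A | pit a ≤ k} ≠ {a : A | pib a ≤ k})
    -- the Rauzy class of `π` contains a cyclic combinatorial datum:
    (hcyc : ∃ P : (A → ℕ) × (A → ℕ),
      Relation.ReflTransGen (CombStep (Fintype.card A)) (pit, pib) P ∧
      CyclicDatum P.1 P.2)
    -- a full family over `π`:
    (F : (A → ℝ) → GState A) (hF : FullFamily pit pib F)
    -- a Keane IET `T` with combinatorial datum `π` on `[0,1)`, given with its
    -- infinite complete Rauzy renormalization path (winners `w`, losers `l`):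
    (T : ℕ → GState A) (w l : ℕ → A)
    (hT0 : (T 0).IsGIET) (hTpit : (T 0).pit = pit) (hTpib : (T 0).pib = pib)
    (hTlen : (T 0).len = 1)
    (hiet : ∀ a : A, ∀ x ∈ (T 0).Itv a, (T 0).f x = x - (T 0).ut a + (T 0).ub a)
    (hTsteps : ∀ k : ℕ, RauzyStep (T k) (T (k + 1)) (w k) (l k))
    (hkeane : ∀ a : A, ∀ N : ℕ, ∃ k : ℕ, N ≤ k ∧ w k = a) :
    ∃ τ ∈ openSimplex A, ∃ g : ℕ → GState A, g 0 = F τ ∧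
      ∀ k : ℕ, RauzyStep (g k) (g (k + 1)) (w k) (l k) := by
  choose b hb using fun k => IntervalExchange.exists_isArrow_of_rauzyStep (hTsteps k)
  subst hTpit hTpib
  exact full_family_theorem_general (D := fun k => ((T k).pit, (T k).pib))
    ⟨IntervalExchange.isNumbering_iff_bijOn.2 hpit, IntervalExchange.isNumbering_iff_bijOn.2 hpib⟩
    hcyc hF hb hkeane
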